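/- For every M, A, n ∈ ℕ with M ≥ 1, there exists a finite graph G such that: (1) the (154 × 154)-grid is not a 3-fat minor of G, and (2) G is not (M,A)-quasi-isometric to any graph that has no K_n minor. -/

import Mathlib

open SimpleGraph

namespace CGT

/-- Distance between two vertex sets, as an extended natural number. -/
noncomputable def sDist {V : Type*} (G : SimpleGraph V) (U U' : Set V) : ℕ∞ :=
  ⨅ (u : U) (v : U'), G.edist u.1 v.1

/-- The ball of radius `r` around a vertex set `U`. -/
def gBall {V : Type*} (G : SimpleGraph V) (U : Set V) (r : ℕ) : Set V :=
  {v | ∃ u ∈ U, G.edist u v ≤ (r : ℕ∞)}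

/-- A set of vertices is connected if the induced subgraph is connected. -/
def SetConn {V : Type*} (G : SimpleGraph V) (U : Set V) : Prop :=
  (G.induce U).Connected

/-- The vertex set of a walk. -/
def walkSupp {V : Type*} {G : SimpleGraph V} {a b : V} (p : G.Walk a b) : Set V :=
  {v | v ∈ p.support}

/-- `X` separates `Y` and `Z` in `G`: every path with one end in `Y` and one in `Z`
contains a vertex of `X`. -/
def Separates {V : Type*} (G : SimpleGraph V) (X Y Z : Set V) : Prop :=
  ∀ ⦃y z : V⦄, y ∈ Y → z ∈ Z → ∀ p : G.Walk y z, p.IsPath → ∃ x ∈ X, x ∈ p.support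

/-- `f` is an `(M,A)`-quasi-isometry from `G` to `H`.  The two-sided distance bound
`M⁻¹ d_G(u,v) - A ≤ d_H(f u, f v) ≤ M d_G(u,v) + A` is stated multiplied out over `ℕ∞`. -/
structure IsQI {V V' : Type*} (M A : ℕ) (G : SimpleGraph V) (H : SimpleGraph V')
    (f : V → V') : Prop where
  upper : ∀ u v : V, H.edist (f u) (f v) ≤ (M : ℕ∞) * G.edist u v + (A : ℕ∞)
  lower : ∀ u v : V, G.edist u v ≤ (M : ℕ∞) * H.edist (f u) (f v) + (M : ℕ∞) * (A : ℕ∞)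
  dense : ∀ w : V', ∃ v : V, H.edist w (f v) ≤ (A : ℕ∞)

/-- `G` is `(M,A)`-quasi-isometric to `H`. -/
def QIsometric {V V' : Type*} (M A : ℕ) (G : SimpleGraph V) (H : SimpleGraph V') : Prop :=
  ∃ f : V → V', IsQI M A G H f

/-- `X` is a minor of `G`. -/
def HasMinor {V W : Type*} (G : SimpleGraph V) (X : SimpleGraph W) : Prop :=
  ∃ U : W → Set V,
    (∀ x, (U x).Nonempty) ∧ (∀ x, SetConn G (U x)) ∧
    (∀ ⦃x y⦄, x ≠ y → Disjoint (U x) (U y)) ∧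
    ∀ ⦃x y⦄, X.Adj x y → ∃ u ∈ U x, ∃ v ∈ U y, G.Adj u v

/-- The `(a × b)`-grid graph. -/
def gridGraph (a b : ℕ) : SimpleGraph (Fin a × Fin b) :=
  SimpleGraph.fromRel (fun u v =>
    (u.1 = v.1 ∧ u.2.1 + 1 = v.2.1) ∨ (u.2 = v.2 ∧ u.1.1 + 1 = v.1.1))

/-- A `K`-fat model of `X` in `G`: disjoint connected branch sets joined by internally
disjoint branch paths, all pairwise at distance at least `K` except for a branch path and
the branch sets of its endpoints. -/
structure FatModel {V W : Type*} (G : SimpleGraph V) (X : SimpleGraph W) (K : ℕ) where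
  branch : W → Set V
  branch_nonempty : ∀ x, (branch x).Nonempty
  branch_connected : ∀ x, SetConn G (branch x)
  branch_disjoint : ∀ ⦃x y⦄, x ≠ y → Disjoint (branch x) (branch y)
  pathEnd : ∀ ⦃x y⦄, X.Adj x y → V
  path : ∀ ⦃x y⦄ (e : X.Adj x y), G.Walk (pathEnd e) (pathEnd e.symm)
  path_isPath : ∀ ⦃x y⦄ (e : X.Adj x y), (path e).IsPath
  path_symm : ∀ ⦃x y⦄ (e : X.Adj x y), path e.symm = (path e).reverse
  pathEnd_mem : ∀ ⦃x y⦄ (e : X.Adj x y), pathEnd e ∈ branch x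
  path_meets : ∀ ⦃x y⦄ (e : X.Adj x y) (z : W) (v : V), v ∈ (path e).support → v ∈ branch z →
    (z = x ∧ v = pathEnd e) ∨ (z = y ∧ v = pathEnd e.symm)
  path_int_disjoint : ∀ ⦃x y x' y'⦄ (e : X.Adj x y) (e' : X.Adj x' y'), s(x, y) ≠ s(x', y') →
    ∀ v, v ∈ (path e).support → v ∈ (path e').support → v = pathEnd e' ∨ v = pathEnd e'.symm
  fat_branch : ∀ ⦃x y⦄, x ≠ y → (K : ℕ∞) ≤ sDist G (branch x) (branch y)
  fat_path_branch : ∀ ⦃x y⦄ (e : X.Adj x y) (z : W), z ≠ x → z ≠ y →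
    (K : ℕ∞) ≤ sDist G (walkSupp (path e)) (branch z)
  fat_paths : ∀ ⦃x y x' y'⦄ (e : X.Adj x y) (e' : X.Adj x' y'), s(x, y) ≠ s(x', y') →
    (K : ℕ∞) ≤ sDist G (walkSupp (path e)) (walkSupp (path e'))

/-- `X` is a `K`-fat minor of `G`. -/
def IsFatMinor {V W : Type*} (G : SimpleGraph V) (X : SimpleGraph W) (K : ℕ) : Prop :=
  Nonempty (FatModel G X K)

/-- `W` is a `K`-fat `n`-path-connected set in `G`. -/
def FatPathConn {V : Type*} (G : SimpleGraph V) (K n : ℕ) (W : Set V) : Prop :=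
  (∃ S : Finset V, ↑S ⊆ W ∧ 2 * n ≤ S.card) ∧
  (∀ ⦃u v : V⦄, u ∈ W → v ∈ W → u ≠ v → (K : ℕ∞) ≤ G.edist u v) ∧
  ∀ l : ℕ, l ≤ n → ∀ A B : Finset V, ↑A ⊆ W → ↑B ⊆ W → A.card = l → B.card = l →
    ∃ (a b : Fin l → V) (P : ∀ i : Fin l, G.Walk (a i) (b i)),
      (∀ i, (P i).IsPath) ∧ (∀ i, a i ∈ A ∧ b i ∈ B) ∧
      ∀ i j, i ≠ j → (K : ℕ∞) ≤ sDist G (walkSupp (P i)) (walkSupp (P j))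

end CGT

namespace Ghdm

/-- Raw vertex codes for the graphs `G_{h,d,m}`:
`path k` is the `k`-th vertex of the base path; `tree j i p` is the vertex at position `p`
of the `i`-th binary tree at level `j` (the root being position `[]`); and
`spine j i k t e s` is the `s`-th internal vertex of the spine from the `k`-th leaf of that
tree to the `e`-th element of the `t`-th local gluing set at level `j-1`. -/
inductive Raw : Type where
  | path (k : ℕ)
  | tree (j i : ℕ) (p : List Bool)
  | spine (j i k t e s : ℕ)
deriving DecidableEq

/-- `N = 2^{h+1} - 1`, the number of copies of `G_{h,d,m-1}` glued inside `G_{h,d,m}`. -/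
def NN (h : ℕ) : ℕ := 2 ^ (h + 1) - 1

/-- Canonical representative of a raw vertex code: all tree roots are identified with the
single root `tree m 1 []`, and the leftmost leaf of tree `i > 1` is identified with the
rightmost leaf of tree `i - 1` (consecutive copies are glued along these leaves). -/
def canon (h m : ℕ) : Raw → Raw
  | .tree j i p =>
    if p = [] then .tree m 1 []
    else if p = List.replicate h false ∧ 1 < i then .tree j (i - 1) (List.replicate h true)
    else .tree j i p
  | x => x

/-- The `q`-bit binary representation of `i` (most significant bit first);
`false` means "left". -/
def natToBits (q i : ℕ) : List Bool := (List.range q).map fun a => Nat.testBit i (q - 1 - a)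

/-- Position of the `k`-th leaf (1-based, from the left) in a binary tree of height `h`. -/
def leafPos (h k : ℕ) : List Bool := natToBits h (k - 1)

/-- The `e`-th element of the `g`-th gluing set `V^{jv}_g` (at level `jv`):
its element `e = 1` is an anchor of the base path, and its element `e ≥ 2` is a shared
extreme leaf of the trees at level `e`. -/
def VsetElem (h d jv g e : ℕ) : Raw :=
  if e = 1 then .path ((g - 1) * NN h ^ (jv - 1) * (d + 1))
  else if (g - 1) * NN h ^ (jv - e) = 0 then .tree e 1 (List.replicate h false)
  else .tree e ((g - 1) * NN h ^ (jv - e)) (List.replicate h true)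

/-- Valid (canonical) vertex codes of `G_{h,d,m}`. -/
def Valid (h d m : ℕ) : Raw → Prop
  | .path k => k ≤ (d + 1) * NN h ^ (m - 1)
  | .tree j i p => 2 ≤ j ∧ j ≤ m ∧ 1 ≤ i ∧ i ≤ NN h ^ (m - j) ∧ p.length ≤ h ∧
      (p = [] → j = m ∧ i = 1) ∧ (p = List.replicate h false → p ≠ [] → i = 1)
  | .spine j i k t e s => 2 ≤ j ∧ j ≤ m ∧ 1 ≤ i ∧ i ≤ NN h ^ (m - j) ∧
      1 ≤ k ∧ k ≤ 2 ^ h ∧ (t = 2 * k - 2 ∨ t = 2 * k + 1) ∧ 1 ≤ t ∧ t ≤ 2 ^ (h + 1) ∧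
      1 ≤ e ∧ e ≤ j - 1 ∧ 1 ≤ s ∧ s ≤ d

/-- Generating adjacencies between raw vertex codes: consecutive base path vertices,
parent/child in the binary trees, consecutive spine vertices, a spine and the leaf it
starts at, a spine and the gluing-set vertex it ends at (the latter collapsed to a single
edge when `d = 0`). -/
inductive rawAdj (h d : ℕ) : Raw → Raw → Prop
  | base (k : ℕ) : rawAdj h d (.path k) (.path (k + 1))
  | child (j i : ℕ) (p : List Bool) (b : Bool) : p.length < h →
      rawAdj h d (.tree j i p) (.tree j i (p ++ [b]))
  | step (j i k t e s : ℕ) : rawAdj h d (.spine j i k t e s) (.spine j i k t e (s + 1))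
  | toLeaf (j i k t e : ℕ) : rawAdj h d (.tree j i (leafPos h k)) (.spine j i k t e 1)
  | toV (j i k t e : ℕ) :
      rawAdj h d (.spine j i k t e d) (VsetElem h d (j - 1) ((i - 1) * NN h + t) e)
  | short (j i k t e : ℕ) : d = 0 → 1 ≤ k → k ≤ 2 ^ h → (t = 2 * k - 2 ∨ t = 2 * k + 1) →
      1 ≤ t → t ≤ 2 ^ (h + 1) → 1 ≤ e → e ≤ j - 1 →
      rawAdj h d (.tree j i (leafPos h k)) (VsetElem h d (j - 1) ((i - 1) * NN h + t) e)

/-- Adjacency of canonical representatives. -/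
def rel (h d m : ℕ) (x y : Raw) : Prop :=
  ∃ a b, rawAdj h d a b ∧ x = canon h m a ∧ y = canon h m b

/-- The vertex set of `G_{h,d,m}`. -/
def Verts (h d m : ℕ) : Set Raw := {x | Valid h d m x}

/-- The graph `G_{h,d,m}`. -/
def G (h d m : ℕ) : SimpleGraph (Verts h d m) :=
  (SimpleGraph.fromRel (rel h d m)).induce (Verts h d m)

/-- Lift a set of raw codes to a set of vertices of `G_{h,d,m}`. -/
def lift {h d m : ℕ} (S : Set Raw) : Set (Verts h d m) := Subtype.val ⁻¹' S

/-- The root `R(G_{h,d,m})`. -/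
def RootR (m : ℕ) : Raw := .tree m 1 []

/-- The gluing set `V^{jv}_g` of `G_{h,d,m}`, as a set of raw codes. -/
def VsetRaw (h d m jv g : ℕ) : Set Raw :=
  {x | ∃ e, 1 ≤ e ∧ e ≤ jv ∧ x = canon h m (VsetElem h d jv g e)}

/-- The set `S(G_{h,d,m})`. -/
def SsetR (h d m : ℕ) : Set Raw :=
  VsetRaw h d m (m - 1) 1 ∪ {canon h m (.tree m 1 (leafPos h 1))}

/-- The set `T(G_{h,d,m})`. -/
def TsetR (h d m : ℕ) : Set Raw :=
  VsetRaw h d m (m - 1) (2 ^ (h + 1)) ∪ {canon h m (.tree m 1 (leafPos h (2 ^ h)))}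

/-- For a vertex of the top binary tree at position `p`, the (1-based) index of the
leftmost leaf of the top tree below it. -/
def kOf (h : ℕ) (p : List Bool) : ℕ :=
  (p.foldl (fun a b => 2 * a + if b then 1 else 0) 0) * 2 ^ (h - p.length) + 1

/-- `S(Δ(x))` for the vertex `x` of the top binary tree `B(G_{h,d,m})` at position `p`. -/
def SDeltaR (h d m : ℕ) (p : List Bool) : Set Raw :=
  VsetRaw h d m (m - 1) (2 * kOf h p - 1) ∪ {canon h m (.tree m 1 (leafPos h (kOf h p)))}

/-- The leaf of `B(G_{h,d,m})` immediately to the left of the leftmost leaf below the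
top-tree vertex at position `p`; it is the unique leaf joined by spines to `S(Δ(x))`. -/
def leafLeftR (h m : ℕ) (p : List Bool) : Raw :=
  canon h m (.tree m 1 (leafPos h (kOf h p - 1)))

end Ghdm

/-!
The host graph is built from a recursive pattern. A copy of level `J + 1` is a row of `NN h` copies
of level `J`, consecutive ones sharing a zone of `J + 1` rail vertices, together with one further
rail vertex at each end and a binary tree of height `h` whose leaves are joined by long subdivided
edges, the spines, to the zones in front of and behind the part of the row below them.

*No fat grid.* By a minimal-counterexample argument in the top tree and induction on `J`, two
connected sets which are far apart cannot both cross the same copy. Hence every region below a tree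
vertex can be left in only eight ways by pairwise far apart connected sets. If any two equally large
subsets of `X` are joined by far apart connected sets, then either the inside or the outside of
each such region contains at most eight elements of `X`, and climbing up the trees bounds `X`. In a
fat model of a large grid a row of branch sets would provide a larger set of this kind.

*Large complete minors.* A quasi-isometry to `H` represents the vertices of the host graph by
connected clusters in `H`. Spines are long, so distinct rail vertices stay distinct, and clusters on
spines from leaves far apart in the tree are disjoint. By Menger's theorem and induction on `J`, a
copy of level `J` still contains `J + 1` disjoint paths from its first zone to its last one, and
suitable leaves of the next tree see all of them: a path and a leaf form a branch set of a complete
minor.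
-/

namespace FatGrid

open Ghdm (NN)

/-! ### Reachability inside a vertex set -/

/-- Some walk of `G` from `a` to `b` stays inside the vertex set `P`. -/
def ReachableIn {V : Type*} (G : SimpleGraph V) (P : Set V) (a b : V) : Prop :=
  ∃ p : G.Walk a b, ∀ v ∈ p.support, v ∈ P

namespace ReachableIn

variable {V : Type*} {G G' : SimpleGraph V} {P Q L : Set V} {a b c : V}

theorem refl (ha : a ∈ P) : ReachableIn G P a a :=
  ⟨.nil, by simpa using ha⟩

theorem left_mem (h : ReachableIn G P a b) : a ∈ P := by
  obtain ⟨p, hp⟩ := h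
  exact hp a p.start_mem_support

theorem right_mem (h : ReachableIn G P a b) : b ∈ P := by
  obtain ⟨p, hp⟩ := h
  exact hp b p.end_mem_support

theorem trans (hab : ReachableIn G P a b) (hbc : ReachableIn G P b c) : ReachableIn G P a c := by
  obtain ⟨p, hp⟩ := hab
  obtain ⟨q, hq⟩ := hbc
  exact ⟨p.append q, fun v hv => (Walk.mem_support_append_iff p q |>.1 hv).elim (hp v) (hq v)⟩

theorem symm (h : ReachableIn G P a b) : ReachableIn G P b a := by
  obtain ⟨p, hp⟩ := h
  exact ⟨p.reverse, fun v hv => hp v (by simpa using hv)⟩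

theorem of_adj (ha : a ∈ P) (hab : G.Adj a b) (hb : b ∈ P) : ReachableIn G P a b :=
  ⟨hab.toWalk, by simp [ha, hb]⟩

theorem step (h : ReachableIn G P a b) (hbc : G.Adj b c) (hc : c ∈ P) : ReachableIn G P a c :=
  h.trans (of_adj h.right_mem hbc hc)

theorem mono (h : ReachableIn G P a b) (hPQ : P ⊆ Q) : ReachableIn G Q a b := by
  obtain ⟨p, hp⟩ := h
  exact ⟨p, fun v hv => hPQ (hp v hv)⟩

theorem mono_graph (h : ReachableIn G P a b) (hG : G ≤ G') : ReachableIn G' P a b := by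
  obtain ⟨p, hp⟩ := h
  exact ⟨p.mapLe hG, fun v hv => hp v (by simpa using hv)⟩

theorem mem_of_closed (h : ReachableIn G P a b) (L : Set V) (ha : a ∈ L)
    (hL : ∀ x y, x ∈ L → x ∈ P → y ∈ P → G.Adj x y → y ∈ L) : b ∈ L := by
  obtain ⟨p, hp⟩ := h
  induction p with
  | nil => exact ha
  | cons huv p ih =>
    simp only [Walk.support_cons, List.mem_cons, forall_eq_or_imp] at hp
    exact ih (hL _ _ ha hp.1 (hp.2 _ p.start_mem_support) huv) hp.2

theorem exists_exit (h : ReachableIn G P a b) (ha : a ∈ L) (hb : b ∉ L) :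
    ∃ u v, u ∈ L ∧ v ∉ L ∧ u ∈ P ∧ v ∈ P ∧ G.Adj u v := by
  by_contra hno
  push Not at hno
  exact hb (h.mem_of_closed L ha fun x y hx hxP hyP hxy =>
    by_contra fun hy => hno x y hx hy hxP hyP hxy)

theorem within_component (h : ReachableIn G P a b) :
    ReachableIn G {x | ReachableIn G P a x} a b :=
  h.mem_of_closed {x | ReachableIn G {x | ReachableIn G P a x} a x} (refl (refl h.left_mem))
    fun x _ (hx : ReachableIn G _ a x) _ hy hxy => hx.step hxy (step hx.right_mem hxy hy)

theorem exists_trim (h : ReachableIn G P a b) :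
    ∃ C ⊆ P, ReachableIn G C a b ∧ ∀ v ∈ C, v ≠ b → ReachableIn G (P \ {b}) a v := by
  by_cases hab : a = b
  · subst hab
    exact ⟨{a}, by simpa using h.left_mem, refl rfl, fun v hv hne => absurd hv hne⟩
  let D : Set V := {v | ReachableIn G (P \ {b}) a v}
  have haD : a ∈ D := refl ⟨h.left_mem, hab⟩
  have hbD : b ∉ D := fun hb => hb.right_mem.2 rfl
  obtain ⟨u, v, hu, hv, -, hvP, huv⟩ := h.exists_exit haD hbD
  have hvb : v = b := by_contra fun hne => hv (step hu huv ⟨hvP, hne⟩)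
  subst hvb
  refine ⟨insert v D, Set.insert_subset hvP fun w hw => hw.right_mem.1, ?_, ?_⟩
  · exact (hu.within_component.mono (Set.subset_insert v D)).step huv (Set.mem_insert v D)
  · exact fun w hw hne => hw.resolve_left hne

theorem of_setConn {U : Set V} (h : CGT.SetConn G U) (ha : a ∈ U) (hb : b ∈ U) :
    ReachableIn G U a b := by
  obtain ⟨p⟩ := h.preconnected ⟨a, ha⟩ ⟨b, hb⟩
  refine ⟨p.map (Embedding.induce U).toHom, fun v hv => ?_⟩
  obtain ⟨w, -, rfl⟩ := List.mem_map.1 (Walk.support_map _ p ▸ hv)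
  exact w.2

theorem setConn {U : Set V} (hne : U.Nonempty)
    (h : ∀ u ∈ U, ∀ v ∈ U, ReachableIn G U u v) : CGT.SetConn G U where
  preconnected := by
    rintro ⟨u, hu⟩ ⟨v, hv⟩
    obtain ⟨p, hp⟩ := h u hu v hv
    exact ⟨p.induce U hp⟩
  nonempty := hne.to_subtype

theorem setConn_of_center {U : Set V} (hc : c ∈ U) (h : ∀ v ∈ U, ReachableIn G U c v) :
    CGT.SetConn G U :=
  setConn ⟨c, hc⟩ fun u hu v hv => (h u hu).symm.trans (h v hv)

end ReachableIn

/-! ### Menger's theorem -/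

section Menger

variable {V : Type*} {G G' : SimpleGraph V} {A B : Set V} {S : Finset V} {k : ℕ} {x y : V}

/-- There are `k` disjoint connections from `A` to `B`, each given by a vertex set containing a
walk from `A` to `B`. -/
def Linkage (G : SimpleGraph V) (A B : Set V) (k : ℕ) : Prop :=
  ∃ (P : Fin k → Set V) (a b : Fin k → V), Pairwise (Function.onFun Disjoint P) ∧
    ∀ i, a i ∈ A ∧ b i ∈ B ∧ ReachableIn G (P i) (a i) (b i)

/-- No set of fewer than `k` vertices separates `A` from `B`. -/
def NoSmallSeparator (G : SimpleGraph V) (A B : Set V) (k : ℕ) : Prop :=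
  ∀ Z : Finset V, Z.card < k → ∃ a ∈ A, ∃ b ∈ B, ReachableIn G (↑Z)ᶜ a b

/-- `C` assigns to each `s ∈ S` a connection from `A` to `s` that meets `S` only in `s`, and these
connections are disjoint. -/
def IsFan (G : SimpleGraph V) (A : Set V) (S : Finset V) (C : V → Set V) : Prop :=
  (S : Set V).PairwiseDisjoint C ∧ ∀ s ∈ S, ∃ a ∈ A, ReachableIn G (C s) a s ∧
    ∀ v ∈ C s, v ≠ s → ReachableIn G (↑S)ᶜ a v

theorem Linkage.mono_graph (h : Linkage G A B k) (hG : G ≤ G') : Linkage G' A B k := by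
  obtain ⟨P, a, b, hdisj, hP⟩ := h
  exact ⟨P, a, b, hdisj, fun i => ⟨(hP i).1, (hP i).2.1, (hP i).2.2.mono_graph hG⟩⟩

theorem NoSmallSeparator.symm (h : NoSmallSeparator G A B k) : NoSmallSeparator G B A k := by
  intro Z hZ
  obtain ⟨a, ha, b, hb, hab⟩ := h Z hZ
  exact ⟨b, hb, a, ha, hab.symm⟩

theorem NoSmallSeparator.le_card (h : NoSmallSeparator G A S k) : k ≤ S.card := by
  by_contra! hlt
  obtain ⟨a, -, b, hb, hab⟩ := h S hlt
  exact hab.right_mem hb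

theorem Linkage.exists_isFan (h : Linkage G A S S.card) : ∃ C, IsFan G A S C := by
  classical
  obtain ⟨P, a, b, hdisj, hP⟩ := h
  have eq_of_mem : ∀ {i j v}, v ∈ P i → v ∈ P j → i = j := fun {i j v} hi hj =>
    by_contra fun hne => Set.disjoint_left.1 (hdisj hne) hi hj
  have hb : Function.Injective b := fun i j hij =>
    eq_of_mem (hP i).2.2.right_mem (hij ▸ (hP j).2.2.right_mem)
  have himage : Finset.univ.image b = S :=
    Finset.eq_of_subset_of_card_le (fun v hv => by
      obtain ⟨i, -, rfl⟩ := Finset.mem_image.1 hv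
      exact (hP i).2.1) (by simp [Finset.card_image_of_injective _ hb])
  have hsurj : ∀ s ∈ S, ∃ i, b i = s := fun s hs => by
    rw [← himage] at hs
    simpa using hs
  have htrim := fun i => (hP i).2.2.exists_trim
  choose C hCP hC hCS using htrim
  have hmeet : ∀ i, P i \ {b i} ⊆ (↑S)ᶜ := by
    rintro i v ⟨hv, hne⟩ hvS
    obtain ⟨j, rfl⟩ := hsurj v hvS
    exact hne (congrArg b (eq_of_mem (hP j).2.2.right_mem hv))
  rcases S.eq_empty_or_nonempty with rfl | hne
  · exact ⟨fun _ => ∅, by simp [IsFan]⟩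
  have : Nonempty (Fin S.card) := ⟨⟨0, hne.card_pos⟩⟩
  choose! i hi using hsurj
  refine ⟨fun s => C (i s), fun s hs t ht hst => ?_, fun s hs => ?_⟩
  · have hne : i s ≠ i t := fun h => hst (by rw [← hi s hs, ← hi t ht, h])
    exact (hdisj hne).mono (hCP _) (hCP _)
  · have hs' := hi s hs
    exact ⟨a (i s), (hP _).1, by simpa only [hs'] using hC (i s),
      fun v hv hne => (hCS _ v hv (by rwa [hs'])).mono (hmeet _)⟩

/-- In the induction for Menger's theorem, deleting the edge `xy` creates a separator `S`; then
`A` is still well connected to `S ∪ {x}`. -/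
theorem NoSmallSeparator.insert_of_delete [DecidableEq V] (h : NoSmallSeparator G A B k)
    (hG : ∀ u v, G.Adj u v → G'.Adj u v ∨ s(u, v) = s(x, y))
    (hS : ∀ a ∈ A, ∀ b ∈ B, ¬ ReachableIn G' (↑S)ᶜ a b)
    (hy : ∀ a ∈ A, ¬ ReachableIn G' (↑S)ᶜ a y) :
    NoSmallSeparator G' A (insert x S : Finset V) k := by
  intro Z hZ
  by_contra! hcon
  obtain ⟨a, ha, b, hb, hab⟩ := h Z hZ
  have hmono : ((↑Z)ᶜ ∩ (↑(insert x S))ᶜ : Set V) ⊆ (↑S)ᶜ := fun z hz hzS =>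
    hz.2 (Finset.mem_insert_of_mem hzS)
  have hreach : ReachableIn G' ((↑Z)ᶜ ∩ (↑(insert x S))ᶜ) a b := by
    refine hab.mem_of_closed {v | ReachableIn G' ((↑Z)ᶜ ∩ (↑(insert x S))ᶜ) a v}
      (.refl ⟨hab.left_mem, fun hmem => hcon a ha a hmem (.refl hab.left_mem)⟩) ?_
    intro u v (hu : ReachableIn G' _ a u) _ hvZ huv
    rcases hG u v huv with huv' | he
    · exact hu.step huv' ⟨hvZ, fun hv =>
        hcon a ha v hv ((hu.mono Set.inter_subset_left).step huv' hvZ)⟩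
    · rcases Sym2.eq_iff.1 he with ⟨rfl, rfl⟩ | ⟨rfl, rfl⟩
      · exact absurd (Finset.mem_insert_self _ _) hu.right_mem.2
      · exact absurd (hu.mono hmono) (hy a ha)
  exact hS a ha b hb (hreach.mono hmono)

/-- Both fans avoid `S`, so a common vertex of non-matching connections would yield a connection
from `A` to `B` avoiding `S`. -/
theorem IsFan.disjoint_of_ne [DecidableEq V] {C D : V → Set V}
    (hC : IsFan G A (insert x S) C) (hD : IsFan G B (insert y S) D)
    (hS : ∀ a ∈ A, ∀ b ∈ B, ¬ ReachableIn G (↑S)ᶜ a b)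
    (hy : ∀ a ∈ A, ¬ ReachableIn G (↑S)ᶜ a y) (hx : ∀ b ∈ B, ¬ ReachableIn G (↑S)ᶜ b x)
    {s t : V} (hs : s ∈ insert x S) (ht : t ∈ insert y S) (hst : s ≠ t) :
    Disjoint (C s) (D t) := by
  obtain ⟨a, ha, -, hCs⟩ := hC.2 s hs
  obtain ⟨b, hb, -, hDt⟩ := hD.2 t ht
  have hmono : ∀ z, ((↑(insert z S) : Set V))ᶜ ⊆ (↑S)ᶜ := fun z w hw hwS =>
    hw (Finset.mem_insert_of_mem hwS)
  refine Set.disjoint_left.2 fun v hvC hvD => ?_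
  have hva : v ≠ s → ReachableIn G (↑S)ᶜ a v := fun hne => (hCs v hvC hne).mono (hmono x)
  have hvb : v ≠ t → ReachableIn G (↑S)ᶜ b v := fun hne => (hDt v hvD hne).mono (hmono y)
  by_cases hvs : v = s
  · subst hvs
    have hbv := hvb hst
    rcases Finset.mem_insert.1 hs with rfl | hvS
    · exact hx b hb hbv
    · exact hbv.right_mem hvS
  · have hav := hva hvs
    by_cases hvt : v = t
    · subst hvt
      rcases Finset.mem_insert.1 ht with rfl | hvS
      · exact hy a ha hav
      · exact hav.right_mem hvS
    · exact hS a ha b hb (hav.trans (hvb hvt).symm)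

theorem swap_mem_insert_of_mem_insert [DecidableEq V] {s : V} (hxS : x ∉ S) (hyS : y ∉ S)
    (hs : s ∈ insert x S) :
    Equiv.swap x y s ∈ insert y S ∧ (Equiv.swap x y s = s ∨ s = x) := by
  rcases Finset.mem_insert.1 hs with rfl | hsS
  · simp
  · have hfix := Equiv.swap_apply_of_ne_of_ne (ne_of_mem_of_not_mem hsS hxS)
      (ne_of_mem_of_not_mem hsS hyS)
    exact ⟨by simp [hfix, hsS], .inl hfix⟩

theorem Linkage.of_isFan [DecidableEq V] {C D : V → Set V} (hle : G' ≤ G) (hadj : G.Adj x y)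
    (hxS : x ∉ S) (hyS : y ∉ S)
    (hC : IsFan G' A (insert x S) C) (hD : IsFan G' B (insert y S) D)
    (hCD : ∀ s ∈ insert x S, ∀ t ∈ insert y S, s ≠ t → Disjoint (C s) (D t)) :
    Linkage G A B (S.card + 1) := by
  let e := (insert x S).equivFinOfCardEq (Finset.card_insert_of_notMem hxS)
  have hswap := fun s (hs : s ∈ insert x S) => swap_mem_insert_of_mem_insert hxS hyS hs
  have hne_swap : ∀ s ∈ insert x S, ∀ t ∈ insert x S, s ≠ t → s ≠ Equiv.swap x y t := by
    rintro s hs t ht hst rfl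
    rcases (hswap t ht).2 with hfix | rfl
    · exact hst hfix
    · exact (Finset.mem_insert.1 (Equiv.swap_apply_left t y ▸ hs)).elim hadj.ne' hyS
  have he : ∀ i, (e.symm i : V) ∈ insert x S := fun i => (e.symm i).2
  obtain ⟨hCdisj, hC⟩ := hC
  obtain ⟨hDdisj, hD⟩ := hD
  choose! a ha hCs _ using hC
  choose! b hb hDt _ using hD
  refine ⟨fun i => C (e.symm i) ∪ D (Equiv.swap x y (e.symm i)), fun i => a (e.symm i),
    fun i => b (Equiv.swap x y (e.symm i)), fun i j hij => ?_, fun i => ?_⟩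
  · have hne : (e.symm i : V) ≠ e.symm j := fun h => hij (e.symm.injective (Subtype.ext h))
    have hne' := (Equiv.swap x y).injective.ne hne
    have hi := (hswap _ (he i)).1
    have hj := (hswap _ (he j)).1
    simp only [Function.onFun, Set.disjoint_union_left, Set.disjoint_union_right]
    exact ⟨⟨hCdisj (he i) (he j) hne,
        (hCD _ (he j) _ hi (hne_swap _ (he j) _ (he i) hne.symm)).symm⟩,
      hCD _ (he i) _ hj (hne_swap _ (he i) _ (he j) hne), hDdisj hi hj hne'⟩
  · obtain ⟨hmem, hstep⟩ := hswap _ (he i)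
    refine ⟨ha _ (he i), hb _ hmem, ?_⟩
    have hleft := ((hCs _ (he i)).mono_graph hle).mono
      (Set.subset_union_left (t := D (Equiv.swap x y (e.symm i))))
    have hright := ((hDt _ hmem).symm.mono_graph hle).mono
      (Set.subset_union_right (s := C (e.symm i)))
    rcases hstep with hfix | hsx
    · exact hleft.trans (by simpa only [hfix] using hright)
    · exact (hleft.step (by rwa [hsx, Equiv.swap_apply_left]) hright.left_mem).trans hright

theorem Linkage.of_forall_not_adj [Finite V] (hbot : ∀ u v, ¬ G.Adj u v)
    (h : NoSmallSeparator G A B k) : Linkage G A B k := by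
  have hfin : (A ∩ B).Finite := Set.toFinite _
  have hcard : k ≤ hfin.toFinset.card := by
    by_contra! hlt
    obtain ⟨a, ha, b, hb, hab⟩ := h hfin.toFinset hlt
    have hba : b = a := hab.mem_of_closed {a} rfl fun x y _ _ _ hxy => absurd hxy (hbot x y)
    subst hba
    exact hab.left_mem (by simp [ha, hb])
  obtain ⟨T, hT, hTk⟩ := Finset.exists_subset_card_eq hcard
  let e := T.equivFinOfCardEq hTk
  have hmem : ∀ i, (e.symm i : V) ∈ A ∩ B := fun i => by simpa using hT (e.symm i).2
  refine ⟨fun i => {(e.symm i : V)}, fun i => e.symm i, fun i => e.symm i, fun i j hij => ?_,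
    fun i => ⟨(hmem i).1, (hmem i).2, .refl rfl⟩⟩
  exact Set.disjoint_singleton.2 fun h => hij (e.symm.injective (Subtype.ext h))

theorem exists_bridge_of_delete (hG : ∀ u v, G.Adj u v → G'.Adj u v ∨ s(u, v) = s(x, y))
    (hGS : ∃ a ∈ A, ∃ b ∈ B, ReachableIn G (↑S)ᶜ a b)
    (hS : ∀ a ∈ A, ∀ b ∈ B, ¬ ReachableIn G' (↑S)ᶜ a b) :
    ∃ u v, G.Adj u v ∧ s(u, v) = s(x, y) ∧ (∃ a ∈ A, ReachableIn G' (↑S)ᶜ a u) ∧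
      ∃ b ∈ B, ReachableIn G' (↑S)ᶜ b v := by
  obtain ⟨a₀, ha₀, b₀, hb₀, hab⟩ := hGS
  obtain ⟨u, v, ⟨a, ha, hau⟩, hvA, -, hvS, huv⟩ := hab.exists_exit
    (L := {v | ∃ a ∈ A, ReachableIn G' (↑S)ᶜ a v}) ⟨a₀, ha₀, .refl hab.left_mem⟩
    fun ⟨a, ha, hab₀⟩ => hS a ha b₀ hb₀ hab₀
  obtain ⟨p, q, ⟨b, hb, hbp⟩, hqB, -, hqS, hpq⟩ := hab.symm.exists_exit
    (L := {v | ∃ b ∈ B, ReachableIn G' (↑S)ᶜ b v}) ⟨b₀, hb₀, .refl hab.right_mem⟩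
    fun ⟨b, hb, hba₀⟩ => hS a₀ ha₀ b hb hba₀.symm
  have huv' := (hG u v huv).resolve_left fun h => hvA ⟨a, ha, hau.step h hvS⟩
  have hpq' := (hG p q hpq).resolve_left fun h => hqB ⟨b, hb, hbp.step h hqS⟩
  rcases Sym2.eq_iff.1 (huv'.trans hpq'.symm) with ⟨rfl, rfl⟩ | ⟨rfl, rfl⟩
  · exact absurd (hau.trans hbp.symm) (hS a ha b hb)
  · exact ⟨u, v, huv, huv', ⟨a, ha, hau⟩, b, hb, hbp⟩

theorem menger [Finite V] (h : NoSmallSeparator G A B k) : Linkage G A B k := by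
  classical
  induction G using WellFoundedLT.induction generalizing A B k with
  | ind G ih =>
  by_cases hbot : ∀ u v, ¬ G.Adj u v
  · exact .of_forall_not_adj hbot h
  push Not at hbot
  obtain ⟨x₀, y₀, hxy₀⟩ := hbot
  let G' := G.deleteEdges {s(x₀, y₀)}
  have hle : G' ≤ G := deleteEdges_le _
  have hlt : G' < G := hle.lt_of_ne fun heq => by
    have hdel : ¬ G'.Adj x₀ y₀ := by simp [G']
    exact hdel (heq ▸ hxy₀)
  have hG : ∀ u v, G.Adj u v → G'.Adj u v ∨ s(u, v) = s(x₀, y₀) := fun u v huv => by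
    simp only [G', deleteEdges_adj, Set.mem_singleton_iff, huv, true_and]
    tauto
  by_cases h' : NoSmallSeparator G' A B k
  · exact (ih G' hlt h').mono_graph hle
  unfold NoSmallSeparator at h'
  push Not at h'
  obtain ⟨S, hSk, hS⟩ := h'
  obtain ⟨x, y, hxy, hexy, ⟨a, ha, hax⟩, b, hb, hby⟩ := exists_bridge_of_delete hG (h S hSk) hS
  have hy : ∀ a ∈ A, ¬ ReachableIn G' (↑S)ᶜ a y := fun a ha hay =>
    hS a ha b hb (hay.trans hby.symm)
  have hx : ∀ b ∈ B, ¬ ReachableIn G' (↑S)ᶜ b x := fun b hb hbx =>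
    hS a ha b hb (hax.trans hbx.symm)
  have hA := h.insert_of_delete (x := x) (y := y) (fun u v huv => hexy ▸ hG u v huv) hS hy
  have hB := h.symm.insert_of_delete (x := y) (y := x)
    (fun u v huv => (Sym2.eq_swap.trans hexy) ▸ hG u v huv)
    (fun b hb a ha hba => hS a ha b hb hba.symm) hx
  have hxS : x ∉ S := hax.right_mem
  have hyS : y ∉ S := hby.right_mem
  have hk : k = S.card + 1 :=
    le_antisymm (hA.le_card.trans_eq (Finset.card_insert_of_notMem hxS)) hSk
  subst hk
  obtain ⟨C, hC⟩ := Linkage.exists_isFan (Finset.card_insert_of_notMem hxS ▸ ih G' hlt hA)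
  obtain ⟨D, hD⟩ := Linkage.exists_isFan (Finset.card_insert_of_notMem hyS ▸ ih G' hlt hB)
  exact .of_isFan hle hxy hxS hyS hC hD fun s hs t ht hst => hC.disjoint_of_ne hD hS hy hx hs ht hst

end Menger

/-! ### Two distant sets in a binary tree -/

/-- Every vertex of `P` has distance at least `3` from every vertex of `Q`. -/
def FarApart {V : Type*} (G : SimpleGraph V) (P Q : Set V) : Prop :=
  ∀ a ∈ P, ∀ b ∈ Q, a ≠ b ∧ ¬ G.Adj a b ∧ ∀ c, G.Adj a c → ¬ G.Adj b c

namespace FarApart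

variable {V : Type*} {G : SimpleGraph V} {P Q : Set V}

theorem symm (h : FarApart G P Q) : FarApart G Q P := fun a ha b hb =>
  have ⟨hne, hadj, hcommon⟩ := h b hb a ha
  ⟨hne.symm, fun hab => hadj hab.symm, fun c hac hbc => hcommon c hbc hac⟩

theorem not_mem (h : FarApart G P Q) {a : V} (ha : a ∈ P) : a ∉ Q :=
  fun ha' => (h a ha a ha').1 rfl

theorem of_three_le_edist (h : ∀ a ∈ P, ∀ b ∈ Q, 3 ≤ G.edist a b) : FarApart G P Q := by
  intro a ha b hb
  have not_short : ∀ p : G.Walk a b, 3 ≤ p.length := fun p => by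
    exact_mod_cast (h a ha b hb).trans p.edist_le
  refine ⟨?_, fun hab => ?_, fun c hac hbc => ?_⟩
  · rintro rfl
    simpa using not_short .nil
  · simpa using not_short hab.toWalk
  · simpa using not_short (.cons hac hbc.symm.toWalk)

end FarApart

/-- The infinite binary forest growing downwards from its leaves `(0, a)`: the vertex `(s, a)` has
height `s`, and its parent is `(s + 1, a / 2)`. -/
def binaryForest : SimpleGraph (ℕ × ℕ) where
  Adj u v := v = (u.1 + 1, u.2 / 2) ∨ u = (v.1 + 1, v.2 / 2)
  symm := ⟨fun _ _ => Or.symm⟩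
  loopless := ⟨fun u h => by simp [Prod.ext_iff] at h⟩

theorem binaryForest_adj_parent (s a : ℕ) : binaryForest.Adj (s, a) (s + 1, a / 2) :=
  .inl rfl

theorem ancestor_mem_of_reachableIn {X : Set (ℕ × ℕ)} {c c' s a : ℕ}
    (hreach : ReachableIn binaryForest X (0, c) (0, c'))
    (hc : c / 2 ^ s = a) (hc' : c' / 2 ^ s ≠ a) : (s, a) ∈ X ∧ (s + 1, a / 2) ∈ X := by
  obtain ⟨⟨t, b⟩, ⟨t', b'⟩, ⟨hts, hb⟩, hnot, hmem, hmem', hadj⟩ := hreach.exists_exit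
    (L := {w : ℕ × ℕ | w.1 ≤ s ∧ w.2 / 2 ^ (s - w.1) = a}) ⟨Nat.zero_le s, hc⟩
    fun h => hc' h.2
  simp only [Set.mem_ofPred_eq, not_and] at hts hb hnot
  have halve : ∀ t b, t < s → b / 2 / 2 ^ (s - (t + 1)) = b / 2 ^ (s - t) := fun t b ht => by
    rw [Nat.div_div_eq_div_mul, ← pow_succ', show s - (t + 1) + 1 = s - t by omega]
  rcases hadj with h | h <;> obtain ⟨rfl, rfl⟩ := Prod.mk.inj h
  · obtain rfl : t = s := hts.antisymm (not_lt.1 fun hlt => hnot hlt ((halve t b hlt).trans hb))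
    obtain rfl : b = a := by simpa using hb
    exact ⟨hmem, hmem'⟩
  · exact absurd ((halve t' b' hts).symm.trans hb) (hnot (Nat.le_of_succ_le hts))

/-- Some component of `X` contains a leaf at or left of `l` and a leaf at or right of `r`. -/
def Spans (X : Set (ℕ × ℕ)) (l r : ℕ) : Prop :=
  ∃ c c', c ≤ l ∧ r ≤ c' ∧ ReachableIn binaryForest X (0, c) (0, c')

/-- No `X i` contains the tree vertex `(s, a)` or joins a leaf left of the subtree below `(s, a)`
to a leaf right of it. -/
def IsGap {ι : Type*} (X : ι → Set (ℕ × ℕ)) (s a : ℕ) : Prop :=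
  (∀ i, (s, a) ∉ X i) ∧
    ∀ i c c', c / 2 ^ s < a → a < c' / 2 ^ s → ¬ ReachableIn binaryForest (X i) (0, c) (0, c')

/-- A subset `X` of the binary tree of height `h`, together with the predicate `cross` telling
which of the consecutive pieces `0, …, 2 ^ (h + 1) - 2` below the tree it crosses, leaves no
cut of the three relevant types uncrossed: at the leaf `k`, between the leaves `k` and `k + 1`,
and around both of these leaves. -/
structure CrossesCuts (h : ℕ) (X : Set (ℕ × ℕ)) (cross : ℕ → Prop) : Prop where
  at_leaf : ∀ k < 2 ^ h, cross (2 * k) ∨ Spans X k k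
  between : ∀ k, k + 1 < 2 ^ h → cross (2 * k + 1) ∨ Spans X (k + 1) k
  around : ∀ k, k + 1 < 2 ^ h →
    cross (2 * k) ∨ cross (2 * k + 1) ∨ cross (2 * k + 2) ∨ Spans X k (k + 1)

section Gap

variable {ι : Type*} {X : ι → Set (ℕ × ℕ)} {s a : ℕ}

theorem IsGap.child (hgap : IsGap X (s + 1) a) {b : ℕ} (hb : b / 2 = a)
    (hnot : ∀ i, (s, b) ∉ X i) : IsGap X s b := by
  refine ⟨hnot, fun i c c' hcb hbc' hreach => ?_⟩
  have hdiv : ∀ c, c / 2 ^ (s + 1) = c / 2 ^ s / 2 := fun c => by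
    rw [pow_succ, Nat.div_div_eq_div_mul]
  have hne : ∀ {c c'}, ReachableIn binaryForest (X i) (0, c) (0, c') → c / 2 ^ (s + 1) = a →
      c' / 2 ^ (s + 1) = a := fun hcc' hc => by_contra fun hc' =>
    hgap.1 i (ancestor_mem_of_reachableIn hcc' hc hc').1
  have hc_ne : c / 2 ^ (s + 1) ≠ a := fun hc => by
    have hc' := hne hreach hc
    rw [hdiv] at hc hc'
    omega
  have hc'_ne : c' / 2 ^ (s + 1) ≠ a := fun hc' => hc_ne (hne hreach.symm hc')
  rw [hdiv] at hc_ne hc'_ne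
  exact hgap.2 i c c' (by rw [hdiv]; omega) (by rw [hdiv]; omega) hreach

theorem IsGap.not_reachableIn_across (hgap : IsGap X (s + 1) a) {i : ι} {c c' : ℕ}
    (hc : c / 2 ^ s ≤ 2 * a) (hc' : 2 * a < c' / 2 ^ s) :
    ¬ ReachableIn binaryForest (X i) (0, c) (0, c') := by
  intro hreach
  have hdiv : ∀ c, c / 2 ^ (s + 1) = c / 2 ^ s / 2 := fun c => by
    rw [pow_succ, Nat.div_div_eq_div_mul]
  by_cases hca : c / 2 ^ s = 2 * a
  · have hmem := (ancestor_mem_of_reachableIn hreach hca (by omega)).2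
    rw [show 2 * a / 2 = a by omega] at hmem
    exact hgap.1 i hmem
  by_cases hca' : c' / 2 ^ s = 2 * a + 1
  · have hmem := (ancestor_mem_of_reachableIn hreach.symm hca' (by omega)).2
    rw [show (2 * a + 1) / 2 = a by omega] at hmem
    exact hgap.1 i hmem
  exact hgap.2 i c c' (by rw [hdiv]; omega) (by rw [hdiv]; omega) hreach

theorem IsGap.cross_of_leaf {h : ℕ} {cross : ι → ℕ → Prop} (hgap : IsGap X 0 a) (ha : a < 2 ^ h)
    (hcut : ∀ i, CrossesCuts h (X i) (cross i)) (i : ι) : cross i (2 * a) := by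
  refine ((hcut i).at_leaf a ha).resolve_right ?_
  rintro ⟨c, c', hc, hc', hreach⟩
  rcases hc.eq_or_lt with rfl | hc
  · exact hgap.1 i hreach.left_mem
  rcases hc'.eq_or_lt with rfl | hc'
  · exact hgap.1 i hreach.right_mem
  exact hgap.2 i c c' (by simpa using hc) (by simpa using hc') hreach

end Gap

theorem CrossesCuts.cross_around {h k : ℕ} {X : Set (ℕ × ℕ)} {cross : ℕ → Prop}
    (hcut : CrossesCuts h X cross) (hkh : k + 1 < 2 ^ h) (hk : (0, k) ∉ X) (hk1 : (0, k + 1) ∉ X)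
    (hacross : ∀ c c', c ≤ k → k < c' → ¬ ReachableIn binaryForest X (0, c) (0, c')) :
    cross (2 * k) ∧ cross (2 * k + 1) ∧ cross (2 * k + 2) := by
  have hne : ∀ {c c'}, ReachableIn binaryForest X (0, c) (0, c') → c ≠ k + 1 ∧ c' ≠ k :=
    fun hreach => ⟨fun h => hk1 (h ▸ hreach.left_mem), fun h => hk (h ▸ hreach.right_mem)⟩
  have hnot : ∀ l r, l ≤ k + 1 → k ≤ r → ¬ Spans X l r := by
    rintro l r hl hr ⟨c, c', hc, hc', hreach⟩
    have ⟨hc_ne, hc'_ne⟩ := hne hreach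
    exact hacross c c' (by omega) (by omega) hreach
  exact ⟨(hcut.at_leaf k (by omega)).resolve_right (hnot _ _ (by omega) le_rfl),
    (hcut.between k hkh).resolve_right (hnot _ _ le_rfl le_rfl),
    (hcut.at_leaf (k + 1) hkh).resolve_right (hnot _ _ le_rfl (by omega))⟩

section TwoSets

variable {X : Bool → Set (ℕ × ℕ)} {s a : ℕ}

theorem leaf_notMem_of_ancestor_mem {l : ℕ} {j : Bool}
    (hfar : FarApart binaryForest (X j) (X (!j)))
    (hgap : ∀ t < s, ¬ IsGap X t (l / 2 ^ t))
    (hspan : ∀ i c c', c < l → l < c' → ¬ ReachableIn binaryForest (X i) (0, c) (0, c'))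
    (hmem : (s, l / 2 ^ s) ∈ X j) : (0, l) ∉ X (!j) := by
  intro hl
  have hup : ∀ t ≤ s, (t, l / 2 ^ t) ∈ X (!j) := by
    intro t
    induction t with
    | zero => simpa using hl
    | succ t ih =>
      intro hts
      have hadj := binaryForest_adj_parent t (l / 2 ^ t)
      rw [Nat.div_div_eq_div_mul, ← pow_succ] at hadj
      have hj : (t + 1, l / 2 ^ (t + 1)) ∉ X j := fun hj =>
        (hfar _ hj _ (ih (by omega))).2.1 hadj.symm
      have hlt : t + 1 < s := hts.lt_of_ne fun h => hj (h ▸ hmem)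
      by_contra hnot
      refine hgap (t + 1) hlt ⟨fun i => ?_, fun i c c' hc hc' => ?_⟩
      · rcases Bool.eq_or_eq_not i j with rfl | rfl
        exacts [hj, hnot]
      · exact hspan i c c' (lt_of_not_ge fun h => hc.not_ge (Nat.div_le_div_right h))
          (lt_of_not_ge fun h => hc'.not_ge (Nat.div_le_div_right h))
  exact hfar.not_mem hmem (hup s le_rfl)

theorem IsGap.exists_children_mem (hfar : ∀ i, FarApart binaryForest (X i) (X (!i)))
    (hgap : IsGap X (s + 1) a) (hmin : ∀ b, b / 2 = a → ¬ IsGap X s b) :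
    ∃ j, (s, 2 * a) ∈ X j ∧ (s, 2 * a + 1) ∈ X j := by
  have hchild : ∀ b, b / 2 = a → ∃ i, (s, b) ∈ X i := fun b hb => by
    by_contra! hnot
    exact hmin b hb (hgap.child hb hnot)
  obtain ⟨i, hi⟩ := hchild (2 * a) (by omega)
  obtain ⟨j, hj⟩ := hchild (2 * a + 1) (by omega)
  have hi_adj := binaryForest_adj_parent s (2 * a)
  have hj_adj := binaryForest_adj_parent s (2 * a + 1)
  rw [show 2 * a / 2 = a by omega] at hi_adj
  rw [show (2 * a + 1) / 2 = a by omega] at hj_adj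
  rcases Bool.eq_or_eq_not j i with rfl | rfl
  · exact ⟨j, hi, hj⟩
  · exact absurd hj_adj ((hfar i _ hi _ hj).2.2 _ hi_adj)

/-- Below a minimal gap both children lie in the same set `X j`. The leaves `k`, `k + 1` on the
two sides of the midpoint are then missed by the other set, which must therefore cross all three
pieces next to them; but `X j` crosses one of these as well. -/
theorem IsGap.exists_common_cross {h : ℕ} {cross : Bool → ℕ → Prop}
    (hfar : ∀ i, FarApart binaryForest (X i) (X (!i)))
    (hcut : ∀ i, CrossesCuts h (X i) (cross i)) (hgap : IsGap X (s + 1) a) (hs : s + 1 ≤ h)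
    (ha : a < 2 ^ (h - (s + 1))) (hmin : ∀ t ≤ s, ∀ b < 2 ^ (h - t), ¬ IsGap X t b) :
    ∃ j t, cross j t ∧ cross (!j) t := by
  have hpow : 2 ^ (h - s) = 2 * 2 ^ (h - (s + 1)) := by
    rw [← pow_succ', show h - (s + 1) + 1 = h - s by omega]
  have hpow_split : ∀ t ≤ s, 2 ^ h = 2 ^ (h - t) * 2 ^ t := fun t ht => by
    rw [← pow_add, Nat.sub_add_cancel (by omega)]
  have hs0 : 0 < 2 ^ s := by positivity
  obtain ⟨j, hleft, hright⟩ := hgap.exists_children_mem hfar fun b hb =>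
    hmin s le_rfl b (by omega)
  obtain ⟨k, hk⟩ : ∃ k, k + 1 = (2 * a + 1) * 2 ^ s := Nat.exists_add_one_eq.2 (by positivity)
  have hle_iff : ∀ c, c ≤ k ↔ c / 2 ^ s ≤ 2 * a := fun c => by
    rw [← Nat.lt_succ_iff, ← Nat.lt_succ_iff (m := c / 2 ^ s), Nat.div_lt_iff_lt_mul hs0]
    exact hk ▸ Iff.rfl
  have hkh : k + 1 < 2 ^ h := by
    rw [hk, hpow_split s le_rfl]
    exact Nat.mul_lt_mul_of_pos_right (by omega) hs0
  have hacross : ∀ i c c', c ≤ k → k < c' → ¬ ReachableIn binaryForest (X i) (0, c) (0, c') :=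
    fun i c c' hc hc' => hgap.not_reachableIn_across ((hle_iff c).1 hc)
      (not_le.1 fun h => hc'.not_ge ((hle_iff c').2 h))
  have hleaf : ∀ l, l = k ∨ l = k + 1 → (s, l / 2 ^ s) ∈ X j → (0, l) ∉ X (!j) :=
    fun l hl hmem => leaf_notMem_of_ancestor_mem (hfar j)
      (fun t ht => hmin t ht.le _ (by
        rw [Nat.div_lt_iff_lt_mul (by positivity), ← hpow_split t ht.le]
        omega))
      (fun i c c' hc hc' => hacross i c c' (by omega) (by omega)) hmem
  have hk_notMem : (0, k) ∉ X (!j) := hleaf k (.inl rfl) (by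
    rwa [((hle_iff k).1 le_rfl).antisymm ((Nat.le_div_iff_mul_le hs0).2 (by nlinarith))])
  have hk1_notMem : (0, k + 1) ∉ X (!j) := hleaf (k + 1) (.inr rfl) (by
    rwa [hk, Nat.mul_div_cancel _ hs0])
  obtain ⟨hcross, hcross1, hcross2⟩ :=
    (hcut (!j)).cross_around hkh hk_notMem hk1_notMem (hacross _)
  rcases (hcut j).around k hkh with h0 | h1 | h2 | ⟨c, c', hc, hc', hreach⟩
  · exact ⟨j, _, h0, hcross⟩
  · exact ⟨j, _, h1, hcross1⟩
  · exact ⟨j, _, h2, hcross2⟩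
  · exact absurd hreach (hacross j c c' hc hc')

theorem exists_common_cross {h : ℕ} {cross : Bool → ℕ → Prop}
    (hX : ∀ i u, u ∈ X i → u.1 < h) (hfar : ∀ i, FarApart binaryForest (X i) (X (!i)))
    (hcut : ∀ i, CrossesCuts h (X i) (cross i)) : ∃ j t, cross j t ∧ cross (!j) t := by
  classical
  have hroot : ∃ s ≤ h, ∃ a < 2 ^ (h - s), IsGap X s a :=
    ⟨h, le_rfl, 0, by simp, fun i hi => (hX i _ hi).ne rfl, fun i c c' hc => absurd hc (by simp)⟩
  have hmin := fun t (ht : t < Nat.find hroot) => Nat.find_min hroot ht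
  obtain ⟨hs, a, ha, hgap⟩ := Nat.find_spec hroot
  generalize Nat.find hroot = s at hmin hs ha hgap
  obtain _ | s := s
  · exact ⟨true, 2 * a, hgap.cross_of_leaf (by simpa using ha) hcut true,
      hgap.cross_of_leaf (by simpa using ha) hcut false⟩
  · exact hgap.exists_common_cross hfar hcut hs ha fun t ht b hb hb_gap =>
      hmin t (by omega) ⟨by omega, b, hb, hb_gap⟩

end TwoSets

/-! ### The pattern graph -/

/-- Vertices of the pattern graph: `rail e p` is the `p`-th vertex of the rail of level `e`;
`node e q s a` is the `a`-th vertex of height `s` in the gadget of level `e` between `rail e q` and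
`rail e (q + 1)`, which is a single vertex if `e = 0` and a binary tree of height `h` otherwise;
`root` is the common root of all these trees. -/
inductive Anchor : Type where
  | rail (e p : ℕ)
  | node (e q s a : ℕ)
  | root

theorem NN_add_one (h : ℕ) : NN h + 1 = 2 * 2 ^ h := by
  have : 0 < 2 ^ h := by positivity
  simp only [NN, pow_succ']
  omega

theorem NN_pos (h : ℕ) : 0 < NN h := by
  have := NN_add_one h
  have : 0 < 2 ^ h := by positivity
  omega

theorem NN_pow_pos (h n : ℕ) : 0 < NN h ^ n := Nat.pow_pos (NN_pos h)

theorem eq_and_eq_of_mul_add_eq {N q q' t t' : ℕ} (ht : t < N) (ht' : t' < N)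
    (heq : q * N + t = q' * N + t') : q = q' ∧ t = t' := by
  have hmod := congrArg (· % N) heq
  simp only [Nat.mul_add_mod_self_right, Nat.mod_eq_of_lt ht, Nat.mod_eq_of_lt ht'] at hmod
  subst hmod
  exact ⟨Nat.eq_of_mul_eq_mul_right (by omega) (Nat.add_right_cancel heq), rfl⟩

/-- The pairs `(s, a)` for which `Anchor.node e q s a` is a genuine vertex. -/
def IsNodeIndex (h e s a : ℕ) : Prop :=
  (e = 0 ∧ s = 0 ∧ a = 0) ∨ (1 ≤ e ∧ s < h ∧ a < 2 ^ (h - s))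

/-- The number of leaves of a gadget of level `e`. -/
def leafCount (h e : ℕ) : ℕ := if e = 0 then 1 else 2 ^ h

/-- The `g`-th copy of the pattern of level `J`: everything of level at most `J` which lies between
the zones `g` and `g + 1`. One unit of level `J` is `NN h ^ (J - e)` units of level `e`. -/
def InCopy (h J g : ℕ) : Anchor → Prop
  | .rail e p => e ≤ J ∧ g * NN h ^ (J - e) ≤ p ∧ p ≤ (g + 1) * NN h ^ (J - e)
  | .node e q s a =>
    e ≤ J ∧ g * NN h ^ (J - e) ≤ q ∧ q + 1 ≤ (g + 1) * NN h ^ (J - e) ∧ IsNodeIndex h e s a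
  | .root => False

/-- The `g`-th zone of level `J`: the rail vertices shared by the copies `g - 1` and `g`. -/
def InZone (h J g : ℕ) (x : Anchor) : Prop := ∃ e ≤ J, x = .rail e (g * NN h ^ (J - e))

/-- The leaf `k` of a gadget of level `J + 1` is joined to the `t`-th zone of level `J` inside that
gadget; these are the zones `2 * k - 1` and `2 * k + 2`, provided that they are not extreme. -/
def LeafZone (h k t : ℕ) : Prop := k < 2 ^ h ∧ (t + 1 = 2 * k ∨ (t = 2 * k + 2 ∧ k + 2 ≤ 2 ^ h))

theorem LeafZone.pos_and_lt {h k t : ℕ} (hkt : LeafZone h k t) : 1 ≤ t ∧ t < NN h := by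
  obtain ⟨hk, ht⟩ := hkt
  have := NN_add_one h
  omega

/-- `y` is a leaf of a gadget of level above `J` which is joined to the `g`-th zone of level `J`. -/
def AttachedLeaf (h J g : ℕ) (y : Anchor) : Prop :=
  ∃ e q k t, y = .node (e + 1) q 0 k ∧ J ≤ e ∧ LeafZone h k t ∧
    g = (q * NN h + t) * NN h ^ (e - J)

/-- The leaf `x` of a gadget is joined to the rail vertex `y`. -/
inductive SpineAdj (h : ℕ) : Anchor → Anchor → Prop
  | left (e q : ℕ) : SpineAdj h (.node e q 0 0) (.rail e q)
  | right {e k : ℕ} (q : ℕ) (hk : k + 1 = leafCount h e) :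
      SpineAdj h (.node e q 0 k) (.rail e (q + 1))
  | below {e q k t e' p : ℕ} (hkt : LeafZone h k t) (he : e' ≤ e)
      (hp : p = (q * NN h + t) * NN h ^ (e - e')) : SpineAdj h (.node (e + 1) q 0 k) (.rail e' p)

/-- `y` is the parent of `x` in the binary tree of some gadget. -/
inductive ParentAdj (h : ℕ) : Anchor → Anchor → Prop
  | node {e q s a b : ℕ} (hs : s + 1 < h) (hb : b = a / 2) :
      ParentAdj h (.node (e + 1) q s a) (.node (e + 1) q (s + 1) b)
  | root {e q s a : ℕ} (hs : s + 1 = h) : ParentAdj h (.node (e + 1) q s a) .root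

/-- The union of the binary trees of all gadgets. -/
def treeGraph (h : ℕ) : SimpleGraph Anchor where
  Adj x y := ParentAdj h x y ∨ ParentAdj h y x
  symm := ⟨fun _ _ => Or.symm⟩
  loopless := ⟨by rintro _ (h | h) <;> cases h⟩

/-- The pattern graph, consisting of the binary trees of all gadgets and the edges joining their
leaves to the rails. -/
def patternGraph (h : ℕ) : SimpleGraph Anchor where
  Adj x y := SpineAdj h x y ∨ SpineAdj h y x ∨ (treeGraph h).Adj x y
  symm := ⟨by
    rintro x y (hxy | hyx | hxy)
    exacts [.inr (.inl hxy), .inl hyx, .inr (.inr hxy.symm)]⟩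
  loopless := ⟨by
    rintro x (hx | hx | hx)
    · cases hx
    · cases hx
    · exact hx.ne rfl⟩

namespace Anchor

/-- The level of a vertex of the pattern graph, with junk value `0` at the root. -/
def level : Anchor → ℕ
  | .rail e _ => e
  | .node e _ _ _ => e
  | .root => 0

/-- The vertex belongs to a gadget. -/
def IsNode (x : Anchor) : Prop := ∃ e q s a, x = .node e q s a

/-- The vertex is not a node whose indices are out of range. -/
def WellFormed (h : ℕ) : Anchor → Prop
  | .node e _ s a => IsNodeIndex h e s a
  | _ => True

end Anchor

open Anchor

section Copies

variable {h J g g' : ℕ} {x y : Anchor}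

theorem InZone.inCopy (hx : InZone h J g x) : InCopy h J g x := by
  obtain ⟨e, he, rfl⟩ := hx
  exact ⟨he, le_rfl, Nat.mul_le_mul_right _ (by omega)⟩

theorem InZone.inCopy_of_succ (hx : InZone h J (g + 1) x) : InCopy h J g x := by
  obtain ⟨e, he, rfl⟩ := hx
  exact ⟨he, Nat.mul_le_mul_right _ (by omega), le_rfl⟩

theorem InZone.eq_or_eq_succ (hx : InZone h J g' x) (hxg : InCopy h J g x) :
    g' = g ∨ g' = g + 1 := by
  obtain ⟨e, -, rfl⟩ := hx
  have := Nat.le_of_mul_le_mul_right hxg.2.1 (NN_pow_pos h _)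
  have := Nat.le_of_mul_le_mul_right hxg.2.2 (NN_pow_pos h _)
  omega

theorem InCopy.exists_inZone_of_ne (hx : InCopy h J g x) (hx' : InCopy h J g' x) (hne : g ≠ g') :
    ∃ τ, InZone h J τ x ∧ (τ = g ∨ τ = g + 1) ∧ (τ = g' ∨ τ = g' + 1) := by
  wlog hlt : g < g' generalizing g g'
  · obtain ⟨τ, hτ, hg', hg⟩ := this hx' hx hne.symm (by omega)
    exact ⟨τ, hτ, hg, hg'⟩
  cases x with
  | root => exact hx.elim
  | node e q s a =>
    have := hx.2.2.1
    have := hx'.2.1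
    have := Nat.mul_le_mul_right (NN h ^ (J - e)) (show g + 1 ≤ g' by omega)
    omega
  | rail e p =>
    obtain ⟨he, -, hp⟩ := hx
    obtain ⟨-, hp', -⟩ := hx'
    have := Nat.le_of_mul_le_mul_right (hp'.trans hp) (NN_pow_pos h _)
    obtain rfl : g' = g + 1 := by omega
    exact ⟨g + 1, ⟨e, he, by rw [hp.antisymm hp']⟩, .inr rfl, .inl rfl⟩

theorem InCopy.level_le (hx : InCopy h J g x) : x.level ≤ J := by
  cases x with
  | root => exact hx.elim
  | node e q s a => exact hx.1
  | rail e p => exact hx.1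

theorem InCopy.ne_root (hx : InCopy h J g x) : x ≠ .root := by
  rintro rfl
  exact hx

theorem InCopy.wellFormed (hx : InCopy h J g x) : x.WellFormed h := by
  cases x with
  | node e q s a => exact hx.2.2.2
  | root | rail => trivial

theorem InCopy.of_spineAdj (hx : InCopy h J g x) (hxy : SpineAdj h x y) : InCopy h J g y := by
  cases hxy with
  | left e q => exact ⟨hx.1, hx.2.1, by have := hx.2.2.1; omega⟩
  | right q hk => exact ⟨hx.1, by have := hx.2.1; omega, hx.2.2.1⟩
  | @below e q k t e' p hkt he hp =>
    obtain ⟨heJ, hq, hq', -⟩ := hx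
    have hpow : NN h ^ (J - e') = NN h ^ (J - (e + 1)) * NN h * NN h ^ (e - e') := by
      rw [← pow_succ, ← pow_add, show J - (e + 1) + 1 + (e - e') = J - e' by omega]
    refine ⟨by omega, ?_, ?_⟩ <;> rw [hp, hpow, ← mul_assoc, ← mul_assoc] <;>
      refine Nat.mul_le_mul_right _ ?_
    · exact (Nat.mul_le_mul_right _ hq).trans (Nat.le_add_right _ _)
    · refine le_trans ?_ (Nat.mul_le_mul_right _ hq')
      rw [Nat.add_mul]
      have := hkt.pos_and_lt
      omega

theorem InCopy.of_adj_node (hx : InCopy h J g x) (hnode : x.IsNode) (hxy : (patternGraph h).Adj x y)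
    (hy : y ≠ .root) (hwf : y.WellFormed h) : InCopy h J g y := by
  obtain ⟨e, q, s, a, rfl⟩ := hnode
  rcases hxy with hxy | hyx | hxy | hyx
  · exact hx.of_spineAdj hxy
  · cases hyx
  · cases hxy with
    | node hs hb => exact ⟨hx.1, hx.2.1, hx.2.2.1, hwf⟩
    | root hs => exact absurd rfl hy
  · cases hyx with
    | node hs hb => exact ⟨hx.1, hx.2.1, hx.2.2.1, hwf⟩

end Copies

section Adjacency

variable {h J : ℕ} {x y : Anchor}

theorem SpineAdj.isNode (hxy : SpineAdj h x y) : x.IsNode := by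
  cases hxy <;> exact ⟨_, _, _, _, rfl⟩

theorem ParentAdj.isNode (hxy : ParentAdj h x y) : x.IsNode := by
  cases hxy <;> exact ⟨_, _, _, _, rfl⟩

theorem isNode_or_isNode_of_adj (hxy : (patternGraph h).Adj x y) : x.IsNode ∨ y.IsNode := by
  rcases hxy with hxy | hyx | hxy | hyx
  exacts [.inl hxy.isNode, .inr hyx.isNode, .inl hxy.isNode, .inr hyx.isNode]

theorem exists_attachedLeaf_of_adj (hxy : (patternGraph h).Adj x y) (hx : x ≠ .root)
    (hxJ : x.level ≤ J) (hyJ : J < y.level) : ∃ g, AttachedLeaf h J g y ∧ InZone h J g x := by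
  rcases hxy with hxy | hyx | hxy | hyx
  · cases hxy <;> simp only [level] at hxJ hyJ <;> omega
  · cases hyx with
    | left | right => exact absurd hyJ hxJ.not_gt
    | @below e q k t e' p hkt he hp =>
      simp only [level] at hxJ hyJ
      refine ⟨_, ⟨e, q, k, t, rfl, by omega, hkt, rfl⟩, e', hxJ, ?_⟩
      rw [hp, mul_assoc, ← pow_add, show e - J + (J - e') = e - e' by omega]
  · cases hxy with
    | node => exact absurd hyJ hxJ.not_gt
    | root => exact absurd hyJ (Nat.not_lt_zero J)
  · cases hyx with
    | node => exact absurd hyJ hxJ.not_gt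
    | root => exact absurd rfl hx

/-- A zone strictly inside a copy of level `J + 1` meets no spine of level above `J + 1`. -/
theorem LeafZone.level_eq_of_interior {e q q' k t t' : ℕ} (he : J ≤ e) (hkt : LeafZone h k t')
    (ht_pos : 1 ≤ t) (ht : t < NN h) (heq : (q' * NN h + t') * NN h ^ (e - J) = q * NN h + t) :
    e = J ∧ q' = q ∧ t' = t := by
  rcases he.eq_or_lt with rfl | hlt
  · rw [Nat.sub_self, pow_zero, mul_one] at heq
    exact ⟨rfl, eq_and_eq_of_mul_add_eq hkt.pos_and_lt.2 ht heq⟩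
  · rw [show e - J = e - J - 1 + 1 by omega, pow_succ, ← mul_assoc] at heq
    have := (eq_and_eq_of_mul_add_eq (t := 0) (NN_pos h) ht heq).2
    omega

end Adjacency

/-! ### Two distant sets cannot cross the same copy -/

section Subcopies

variable {h J q t g : ℕ} {x : Anchor}

theorem NN_pow_succ_sub {e : ℕ} (he : e ≤ J) : NN h ^ (J + 1 - e) = NN h * NN h ^ (J - e) := by
  rw [← pow_succ', Nat.sub_add_comm he]

theorem exists_subinterval {N K p : ℕ} (hK : 0 < K) (hp : q * (N * K) ≤ p)
    (hp' : p + 1 ≤ (q + 1) * (N * K)) :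
    ∃ t < N, (q * N + t) * K ≤ p ∧ p + 1 ≤ (q * N + t + 1) * K := by
  rw [← mul_assoc] at hp hp'
  have hlow : q * N ≤ p / K := (Nat.le_div_iff_mul_le hK).2 hp
  have hhigh : p / K < (q + 1) * N := (Nat.div_lt_iff_lt_mul hK).2 hp'
  refine ⟨p / K - q * N, by rw [Nat.add_mul] at hhigh; omega, ?_, ?_⟩ <;>
    rw [Nat.add_sub_cancel' hlow]
  · exact Nat.div_mul_le_self _ _
  · rw [Nat.add_mul, Nat.one_mul]
    exact Nat.lt_div_mul_add hK

theorem InCopy.exists_subcopy (hx : InCopy h (J + 1) q x) (hxJ : x.level ≤ J) :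
    ∃ t < NN h, InCopy h J (q * NN h + t) x := by
  have hN := NN_pos h
  cases x with
  | root => exact hx.elim
  | node e q' s a =>
    obtain ⟨-, hq, hq', hindex⟩ := hx
    replace hxJ : e ≤ J := hxJ
    rw [NN_pow_succ_sub hxJ] at hq hq'
    obtain ⟨t, ht, hlow, hhigh⟩ := exists_subinterval (NN_pow_pos h _) hq hq'
    exact ⟨t, ht, hxJ, hlow, hhigh, hindex⟩
  | rail e p =>
    obtain ⟨-, hp, hp'⟩ := hx
    replace hxJ : e ≤ J := hxJ
    rw [NN_pow_succ_sub hxJ] at hp hp'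
    rcases hp'.eq_or_lt with rfl | hp'
    · refine ⟨NN h - 1, by omega, InZone.inCopy_of_succ ⟨e, hxJ, ?_⟩⟩
      rw [← mul_assoc, Nat.add_mul q, show q * NN h + (NN h - 1) + 1 = q * NN h + 1 * NN h by omega]
    · obtain ⟨t, ht, hlow, hhigh⟩ := exists_subinterval (NN_pow_pos h _) hp hp'
      exact ⟨t, ht, hxJ, hlow, by omega⟩

theorem InZone.eq_rail_or_inZone (hx : InZone h (J + 1) g x) :
    x = .rail (J + 1) g ∨ InZone h J (g * NN h) x := by
  obtain ⟨e, he, rfl⟩ := hx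
  rcases he.eq_or_lt with rfl | he
  · exact .inl (by simp)
  · exact .inr ⟨e, by omega, by rw [mul_assoc, NN_pow_succ_sub (by omega)]⟩

end Subcopies

/-- Inside the `g`-th copy of level `J`, the set `P` joins the zone `g` to the zone `g + 1`. -/
def Crosses (h : ℕ) (P : Set Anchor) (J g : ℕ) : Prop :=
  ∃ a b, InZone h J g a ∧ InZone h J (g + 1) b ∧
    ReachableIn (patternGraph h) {x ∈ P | InCopy h J g x} a b

/-- The vertices of `P` in the binary tree of the `q`-th gadget of level `e`. -/
def treeTrace (h : ℕ) (P : Set Anchor) (e q : ℕ) : Set (ℕ × ℕ) :=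
  {u | .node e q u.1 u.2 ∈ P ∧ u.1 < h ∧ u.2 < 2 ^ (h - u.1)}

theorem Crosses.of_reachableIn {h J g τ τ' : ℕ} {P : Set Anchor} {x z : Anchor} (hne : τ ≠ τ')
    (hz : InZone h J τ z) (hx : InZone h J τ' x)
    (hzx : ReachableIn (patternGraph h) {x ∈ P | InCopy h J g x} z x) : Crosses h P J g := by
  rcases hz.eq_or_eq_succ hzx.left_mem.2 with rfl | rfl <;>
    rcases hx.eq_or_eq_succ hzx.right_mem.2 with rfl | rfl
  · exact absurd rfl hne
  · exact ⟨z, x, hz, hx, hzx⟩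
  · exact ⟨x, z, hx, hz, hzx.symm⟩
  · exact absurd rfl hne

theorem mem_treeTrace {h J q s c : ℕ} {P : Set Anchor} (hP : .node (J + 1) q s c ∈ P)
    (hcopy : InCopy h (J + 1) q (.node (J + 1) q s c)) : (s, c) ∈ treeTrace h P (J + 1) q :=
  ⟨hP, (hcopy.2.2.2.resolve_left fun h => h.1.not_gt (Nat.succ_pos J)).2⟩

section Cut

/-- The leaf `k` is joined to the left end of its gadget or to a zone in the side `σ`. -/
def IsLeftLeaf (h : ℕ) (σ : ℕ → Prop) (k : ℕ) : Prop := k = 0 ∨ ∃ t, LeafZone h k t ∧ σ t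

/-- The leaf `k` is joined to the right end of its gadget or to a zone outside the side `σ`. -/
def IsRightLeaf (h : ℕ) (σ : ℕ → Prop) (k : ℕ) : Prop :=
  k + 1 = 2 ^ h ∨ ∃ t, LeafZone h k t ∧ ¬ σ t

/-- Inside the `q`-th copy of level `J + 1`, the set `P` does not cross the cut separating the zones
`t` of level `J` with `σ t` from the others: neither within a subcopy nor within the tree. -/
structure Respects (h J q : ℕ) (P : Set Anchor) (σ : ℕ → Prop) : Prop where
  copy : ∀ t < NN h, ¬ (σ t ↔ σ (t + 1)) → ¬ Crosses h P J (q * NN h + t)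
  tree : ∀ k k', IsLeftLeaf h σ k → IsRightLeaf h σ k' →
    ¬ ReachableIn binaryForest (treeTrace h P (J + 1) q) (0, k) (0, k')

/-- The vertices `P` can reach from the side `σ` within a single subcopy or within the tree. -/
inductive LeftOfCut (h J q : ℕ) (P : Set Anchor) (σ : ℕ → Prop) : Anchor → Prop
  | terminal : LeftOfCut h J q P σ (.rail (J + 1) q)
  | copy {t τ : ℕ} {z x : Anchor} (ht : t < NN h) (hσ : σ τ) (hz : InZone h J (q * NN h + τ) z)
      (hzx : ReachableIn (patternGraph h) {x ∈ P | InCopy h J (q * NN h + t) x} z x) :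
      LeftOfCut h J q P σ x
  | tree {k s c : ℕ} (hk : IsLeftLeaf h σ k)
      (hkc : ReachableIn binaryForest (treeTrace h P (J + 1) q) (0, k) (s, c)) :
      LeftOfCut h J q P σ (.node (J + 1) q s c)

variable {h J q : ℕ} {P : Set Anchor} {σ : ℕ → Prop} {x y z : Anchor}

theorem Respects.side_of_reachableIn (hcut : Respects h J q P σ) {t τ τ' : ℕ} (ht : t < NN h)
    (hσ : σ τ) (hz : InZone h J (q * NN h + τ) z) (hx : InZone h J (q * NN h + τ') x)
    (hzx : ReachableIn (patternGraph h) {x ∈ P | InCopy h J (q * NN h + t) x} z x) : σ τ' := by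
  by_contra hσ'
  have hne : τ ≠ τ' := by
    rintro rfl
    exact hσ' hσ
  have hτ := hz.eq_or_eq_succ hzx.left_mem.2
  have hτ' := hx.eq_or_eq_succ hzx.right_mem.2
  refine hcut.copy t ht ?_ (.of_reachableIn (by omega) hz hx hzx)
  obtain ⟨rfl, rfl⟩ | ⟨rfl, rfl⟩ : τ = t ∧ τ' = t + 1 ∨ τ = t + 1 ∧ τ' = t := by omega
  exacts [fun h => hσ' (h.1 hσ), fun h => hσ' (h.2 hσ)]

theorem LeftOfCut.of_inZone {τ : ℕ} (hx : x ∈ P) (hτ : τ < NN h) (hσ : σ τ)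
    (hz : InZone h J (q * NN h + τ) x) : LeftOfCut h J q P σ x :=
  .copy hτ hσ hz (.refl ⟨hx, hz.inCopy⟩)

theorem LeftOfCut.of_leaf {k : ℕ} (hP : .node (J + 1) q 0 k ∈ P)
    (hcopy : InCopy h (J + 1) q (.node (J + 1) q 0 k)) (hk : IsLeftLeaf h σ k) :
    LeftOfCut h J q P σ (.node (J + 1) q 0 k) :=
  .tree hk (.refl (mem_treeTrace hP hcopy))

theorem LeftOfCut.of_adj_terminal (hyP : y ∈ P) (hyC : InCopy h (J + 1) q y)
    (hxy : (patternGraph h).Adj (.rail (J + 1) q) y) : LeftOfCut h J q P σ y := by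
  rcases hxy with hxy | hyx | hxy | hyx
  · cases hxy
  · cases hyx with
    | left => exact .of_leaf hyP hyC (.inl rfl)
    | right q' hk => exact absurd hyC.2.1 (by simp)
    | below hkt he hp => exact absurd hyC.1 (by omega)
  · cases hxy
  · cases hyx

theorem LeftOfCut.of_adj_tree (hcut : Respects h J q P σ) {k s c : ℕ} (hk : IsLeftLeaf h σ k)
    (hkc : ReachableIn binaryForest (treeTrace h P (J + 1) q) (0, k) (s, c))
    (hyP : y ∈ P) (hyC : InCopy h (J + 1) q y)
    (hxy : (patternGraph h).Adj (.node (J + 1) q s c) y) : LeftOfCut h J q P σ y := by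
  rcases hxy with hxy | hyx | hxy | hyx
  · cases hxy with
    | left => exact .terminal
    | right q hc => exact absurd hkc (hcut.tree k c hk (.inl (by simpa [leafCount] using hc)))
    | @below e q c t e' p hct he hp =>
      by_cases hσ : σ t
      · exact .of_inZone hyP hct.pos_and_lt.2 hσ ⟨e', he, by rw [hp]⟩
      · exact absurd hkc (hcut.tree k c hk (.inr ⟨t, hct, hσ⟩))
  · cases hyx
  · cases hxy with
    | node hs hb => exact .tree hk (hkc.step (.inl (by rw [hb])) (mem_treeTrace hyP hyC))
    | root => exact hyC.elim
  · cases hyx with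
    | node hs hb => exact .tree hk (hkc.step (.inr (by rw [hb])) (mem_treeTrace hyP hyC))

theorem InCopy.exists_common_subcopy {t : ℕ} (ht : t < NN h) (hx : InCopy h J (q * NN h + t) x)
    (hyC : InCopy h (J + 1) q y) (hyJ : y.level ≤ J) (hxy : (patternGraph h).Adj x y) :
    ∃ t' < NN h, InCopy h J (q * NN h + t') x ∧ InCopy h J (q * NN h + t') y := by
  rcases isNode_or_isNode_of_adj hxy with hnode | hnode
  · exact ⟨t, ht, hx, hx.of_adj_node hnode hxy hyC.ne_root hyC.wellFormed⟩
  · obtain ⟨t', ht', hy'⟩ := hyC.exists_subcopy hyJ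
    exact ⟨t', ht', hy'.of_adj_node hnode hxy.symm hx.ne_root hx.wellFormed, hy'⟩

theorem LeftOfCut.of_adj_copy (hcut : Respects h J q P σ) {t τ : ℕ} (ht : t < NN h) (hσ : σ τ)
    (hz : InZone h J (q * NN h + τ) z)
    (hzx : ReachableIn (patternGraph h) {x ∈ P | InCopy h J (q * NN h + t) x} z x)
    (hyP : y ∈ P) (hyC : InCopy h (J + 1) q y) (hxy : (patternGraph h).Adj x y) :
    LeftOfCut h J q P σ y := by
  have ⟨hxP, hx⟩ : x ∈ P ∧ InCopy h J (q * NN h + t) x := hzx.right_mem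
  rcases le_or_gt y.level J with hyJ | hyJ
  · obtain ⟨t', ht', hx', hy'⟩ := hx.exists_common_subcopy ht hyC hyJ hxy
    rcases eq_or_ne t t' with rfl | htt'
    · exact .copy ht hσ hz (hzx.step hxy ⟨hyP, hy'⟩)
    · obtain ⟨ρ, hρ, hρt, -⟩ := hx.exists_inZone_of_ne hx' (by omega)
      obtain ⟨ρ, rfl⟩ : ∃ ρ', ρ = q * NN h + ρ' := ⟨ρ - q * NN h, by omega⟩
      exact .copy ht' (hcut.side_of_reachableIn ht hσ hz hρ hzx) hρ
        (.of_adj ⟨hxP, hx'⟩ hxy ⟨hyP, hy'⟩)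
  · obtain ⟨_, ⟨e, q', k, t', rfl, he, hkt, rfl⟩, hzone⟩ :=
      exists_attachedLeaf_of_adj hxy hx.ne_root hx.level_le hyJ
    obtain rfl : J = e := he.antisymm (by simpa using hyC.1)
    obtain rfl : q' = q := le_antisymm (by simpa using hyC.2.2.1) (by simpa using hyC.2.1)
    rw [Nat.sub_self, pow_zero, mul_one] at hzone
    exact .of_leaf hyP hyC (.inr ⟨t', hkt, hcut.side_of_reachableIn ht hσ hz hzone hzx⟩)

theorem Respects.not_crosses (hcut : Respects h J q P σ) (h0 : σ 0) (hN : ¬ σ (NN h)) :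
    ¬ Crosses h P (J + 1) q := by
  rintro ⟨a, b, ha, hb, hab⟩
  have hb_left : LeftOfCut h J q P σ b := by
    refine hab.mem_of_closed {x | LeftOfCut h J q P σ x} ?_ fun x y hx _ hy hxy => ?_
    · rcases ha.eq_rail_or_inZone with rfl | hzone
      · exact .terminal
      · exact .of_inZone hab.left_mem.1 (NN_pos h) h0 hzone
    · cases hx with
      | terminal => exact .of_adj_terminal hy.1 hy.2 hxy
      | copy ht hσ hz hzx => exact .of_adj_copy hcut ht hσ hz hzx hy.1 hy.2 hxy
      | tree hk hkc => exact .of_adj_tree hcut hk hkc hy.1 hy.2 hxy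
  rcases hb.eq_rail_or_inZone with rfl | hzone <;>
    rcases hb_left with _ | ⟨ht, hσ, hz, hzx⟩ | _
  · exact absurd hzx.right_mem.2.1 (by omega)
  · obtain ⟨e, he, heq⟩ := hzone
    obtain ⟨rfl, -⟩ := Anchor.rail.inj heq
    omega
  · rw [Nat.add_mul, Nat.one_mul] at hzone
    exact hN (hcut.side_of_reachableIn ht hσ hz hzone hzx)
  · obtain ⟨e, -, heq⟩ := hzone
    cases heq

end Cut

section Crossing

variable {h J q : ℕ} {P Q : Set Anchor}

theorem Crosses.exists_crosses_or_reachableIn (hcross : Crosses h P (J + 1) q) (σ : ℕ → Prop)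
    (h0 : σ 0) (hN : ¬ σ (NN h)) :
    (∃ t < NN h, ¬ (σ t ↔ σ (t + 1)) ∧ Crosses h P J (q * NN h + t)) ∨
      ∃ k k', IsLeftLeaf h σ k ∧ IsRightLeaf h σ k' ∧
        ReachableIn binaryForest (treeTrace h P (J + 1) q) (0, k) (0, k') := by
  by_contra hcon
  refine Respects.not_crosses ⟨fun t ht hside ht_cross => hcon (.inl ⟨t, ht, hside, ht_cross⟩),
    fun k k' hk hk' hreach => hcon (.inr ⟨k, k', hk, hk', hreach⟩)⟩ h0 hN hcross

theorem Crosses.crossesCuts (hcross : Crosses h P (J + 1) q) :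
    CrossesCuts h (treeTrace h P (J + 1) q) fun t => Crosses h P J (q * NN h + t) := by
  have hN := NN_add_one h
  refine ⟨fun k hk => ?_, fun k hk => ?_, fun k hk => ?_⟩
  · rcases hcross.exists_crosses_or_reachableIn (· ≤ 2 * k) (by simp) (by omega) with
      ⟨t, -, hside, ht⟩ | ⟨c, c', hc, hc', hreach⟩
    · obtain rfl : t = 2 * k := by omega
      exact .inl ht
    · refine .inr ⟨c, c', ?_, ?_, hreach⟩
      · rcases hc with hc | ⟨t, ⟨-, hct⟩, hσ⟩ <;> omega
      · rcases hc' with hc' | ⟨t, ⟨-, hct⟩, hσ⟩ <;> omega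
  · rcases hcross.exists_crosses_or_reachableIn (· ≤ 2 * k + 1) (by simp) (by omega) with
      ⟨t, -, hside, ht⟩ | ⟨c, c', hc, hc', hreach⟩
    · obtain rfl : t = 2 * k + 1 := by omega
      exact .inl ht
    · refine .inr ⟨c, c', ?_, ?_, hreach⟩
      · rcases hc with hc | ⟨t, ⟨-, hct⟩, hσ⟩ <;> omega
      · rcases hc' with hc' | ⟨t, ⟨-, hct⟩, hσ⟩ <;> omega
  · rcases hcross.exists_crosses_or_reachableIn (fun t => t ≤ 2 * k ∨ t = 2 * k + 2) (by simp)
      (by omega) with ⟨t, -, hside, ht⟩ | ⟨c, c', hc, hc', hreach⟩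
    · obtain rfl | rfl | rfl : t = 2 * k ∨ t = 2 * k + 1 ∨ t = 2 * k + 2 := by omega
      exacts [.inl ht, .inr (.inl ht), .inr (.inr (.inl ht))]
    · refine .inr (.inr (.inr ⟨c, c', ?_, ?_, hreach⟩))
      · rcases hc with hc | ⟨t, ⟨-, hct⟩, hσ⟩ <;> omega
      · rcases hc' with hc' | ⟨t, ⟨-, hct⟩, hσ⟩ <;> omega

theorem treeGraph_adj_of_binaryForest_adj {e q : ℕ} {u v : ℕ × ℕ} (hu : u.1 < h) (hv : v.1 < h)
    (huv : binaryForest.Adj u v) :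
    (treeGraph h).Adj (.node (e + 1) q u.1 u.2) (.node (e + 1) q v.1 v.2) := by
  rcases huv with rfl | rfl
  exacts [.inl (.node hv rfl), .inr (.node hu rfl)]

theorem treeGraph_adj_root {e q : ℕ} {u v : ℕ × ℕ} (hu : u.1 < h) (hv : h ≤ v.1)
    (huv : binaryForest.Adj u v) : (treeGraph h).Adj (.node (e + 1) q u.1 u.2) .root := by
  rcases huv with rfl | rfl
  exacts [.inl (.root (le_antisymm hu hv)), absurd hu (by simp only at *; omega)]

theorem FarApart.treeTrace_binaryForest (hfar : FarApart (treeGraph h) P Q) :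
    FarApart binaryForest (treeTrace h P (J + 1) q) (treeTrace h Q (J + 1) q) := by
  rintro u ⟨huP, hu, -⟩ v ⟨hvQ, hv, -⟩
  obtain ⟨hne, hadj, hcommon⟩ := hfar _ huP _ hvQ
  refine ⟨fun huv => hne (by rw [huv]),
    fun huv => hadj (treeGraph_adj_of_binaryForest_adj hu hv huv), fun w huw hvw => ?_⟩
  rcases lt_or_ge w.1 h with hw | hw
  · exact hcommon _ (treeGraph_adj_of_binaryForest_adj hu hw huw)
      (treeGraph_adj_of_binaryForest_adj hv hw hvw)
  · exact hcommon _ (treeGraph_adj_root hu hw huw) (treeGraph_adj_root hv hw hvw)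

theorem Crosses.node_mem {g : ℕ} (hcross : Crosses h P 0 g) : .node 0 g 0 0 ∈ P := by
  obtain ⟨a, b, ⟨e, he, rfl⟩, ⟨e', he', rfl⟩, hab⟩ := hcross
  obtain rfl := Nat.le_zero.1 he
  obtain rfl := Nat.le_zero.1 he'
  obtain ⟨u, y, rfl, -, -, ⟨hyP, hyC⟩, hxy⟩ :=
    hab.exists_exit (L := {.rail 0 (g * NN h ^ (0 - 0))}) rfl (by simp)
  rcases hxy with hxy | hyx | hxy | hyx
  · cases hxy
  · obtain ⟨e, q, s, a, rfl⟩ := hyx.isNode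
    obtain ⟨he, hq, hq', ⟨rfl, rfl, rfl⟩ | ⟨he', -⟩⟩ := hyC
    · obtain rfl : q = g := by simp only [Nat.sub_self, pow_zero, mul_one] at hq hq'; omega
      exact hyP
    · omega
  · cases hxy
  · cases hyx

theorem FarApart.not_crosses (hfar : FarApart (treeGraph h) P Q) :
    ∀ J g, Crosses h P J g → ¬ Crosses h Q J g
  | 0, g, hP, hQ => hfar.not_mem hP.node_mem hQ.node_mem
  | J + 1, g, hP, hQ => by
    let R : Bool → Set Anchor := fun i => bif i then P else Q
    obtain ⟨j, t, hcross, hcross'⟩ := exists_common_cross (h := h)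
      (X := fun i => treeTrace h (R i) (J + 1) g)
      (cross := fun i t => Crosses h (R i) J (g * NN h + t)) (fun i u hu => hu.2.1)
      (fun | true => hfar.treeTrace_binaryForest | false => hfar.symm.treeTrace_binaryForest)
      (fun | true => hP.crossesCuts | false => hQ.crossesCuts)
    cases j
    exacts [hfar.not_crosses J _ hcross' hcross, hfar.not_crosses J _ hcross hcross']

end Crossing

/-! ### Regions and their gates -/

section Attached

variable {h J g : ℕ} {x y y' : Anchor}

theorem LeafZone.unique {k k' t : ℕ} (hk : LeafZone h k t) (hk' : LeafZone h k' t) : k = k' := by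
  obtain ⟨-, hk⟩ := hk
  obtain ⟨-, hk'⟩ := hk'
  omega

theorem AttachedLeaf.unique (hy : AttachedLeaf h J g y) (hy' : AttachedLeaf h J g y') :
    y = y' := by
  obtain ⟨e, q, k, t, rfl, he, hkt, rfl⟩ := hy
  obtain ⟨e', q', k', t', rfl, he', hkt', heq⟩ := hy'
  wlog hle : e ≤ e' generalizing e e' q q' k k' t t'
  · exact (this e' q' k' t' he' hkt' e q k t he hkt heq.symm (by omega)).symm
  rw [show e' - J = e' - e + (e - J) by omega, pow_add, ← mul_assoc] at heq
  obtain ⟨rfl, rfl, rfl⟩ := hkt'.level_eq_of_interior hle hkt.pos_and_lt.1 hkt.pos_and_lt.2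
    (Nat.eq_of_mul_eq_mul_right (NN_pow_pos h _) heq).symm
  rw [hkt.unique hkt']

theorem exists_inCopy_of_isNode (hy : y.IsNode) (hyJ : y.level ≤ J) (hwf : y.WellFormed h) :
    ∃ g, InCopy h J g y := by
  obtain ⟨e, q, s, a, rfl⟩ := hy
  refine ⟨q / NN h ^ (J - e), hyJ, Nat.div_mul_le_self _ _, ?_, hwf⟩
  rw [Nat.add_mul, Nat.one_mul]
  exact Nat.lt_div_mul_add (NN_pow_pos h _)

theorem InCopy.exists_common_copy (hx : InCopy h J g x) (hyJ : y.level ≤ J) (hy : y ≠ .root)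
    (hwf : y.WellFormed h) (hxy : (patternGraph h).Adj x y) :
    ∃ g', InCopy h J g' x ∧ InCopy h J g' y := by
  rcases isNode_or_isNode_of_adj hxy with hnode | hnode
  · exact ⟨g, hx, hx.of_adj_node hnode hxy hy hwf⟩
  · obtain ⟨g', hy'⟩ := exists_inCopy_of_isNode hnode hyJ hwf
    exact ⟨g', hy'.of_adj_node hnode hxy.symm hx.ne_root hx.wellFormed, hy'⟩

end Attached

/-- The first copy of level `J` in the region below the `a`-th node of height `s` in the `q`-th tree
of level `J + 1`. -/
def regionStart (h q s a : ℕ) : ℕ := q * NN h + 2 * (a * 2 ^ s)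

/-- The first copy of level `J` after the region below the `a`-th node of height `s` in the `q`-th
tree of level `J + 1`. -/
def regionEnd (h q s a : ℕ) : ℕ := q * NN h + 2 * ((a + 1) * 2 ^ s) - 1

/-- The region below the `a`-th node of height `s` in the `q`-th tree of level `J + 1`: the subtree
of its descendants, together with the copies of level `J` between the extreme leaves of that
subtree. -/
inductive InRegion (h J q s a : ℕ) : Anchor → Prop
  | tree {t b : ℕ} (ht : t ≤ s) (hb : b / 2 ^ (s - t) = a) (hindex : IsNodeIndex h (J + 1) t b) :
      InRegion h J q s a (.node (J + 1) q t b)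
  | copy {g : ℕ} {x : Anchor} (hg : regionStart h q s a ≤ g) (hg' : g < regionEnd h q s a)
      (hx : InCopy h J g x) : InRegion h J q s a x

/-- The region together with the two copies next to it, except for their far ends. -/
inductive InExtendedRegion (h J q s a : ℕ) : Anchor → Prop
  | region {x : Anchor} (hx : InRegion h J q s a x) : InExtendedRegion h J q s a x
  | left {g : ℕ} {x : Anchor} (hg : g + 1 = regionStart h q s a) (hx : InCopy h J g x)
      (hfar : ¬ InZone h J g x) : InExtendedRegion h J q s a x
  | right {x : Anchor} (hx : InCopy h J (regionEnd h q s a) x)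
      (hfar : ¬ InZone h J (regionEnd h q s a + 1) x) : InExtendedRegion h J q s a x

/-- The ways to leave an extended region: through the root of all trees, through the top of the
subtree, through one of its extreme leaves, through the leaf of higher level attached to one of the
boundary zones, or across one of the two neighbouring copies. -/
inductive Gate : Type
  | root | top | firstLeaf | lastLeaf | startLeaf | endLeaf | startCopy | endCopy
  deriving DecidableEq

instance : Fintype Gate where
  elems := {.root, .top, .firstLeaf, .lastLeaf, .startLeaf, .endLeaf, .startCopy, .endCopy}
  complete γ := by cases γ <;> simp

theorem card_gate : Fintype.card Gate = 8 := rfl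

/-- The set `P` passes through the given gate of a region. -/
def Gate.UsedBy (h J q s a : ℕ) (P : Set Anchor) : Gate → Prop
  | root => .root ∈ P
  | top => .node (J + 1) q s a ∈ P
  | firstLeaf => .node (J + 1) q 0 (a * 2 ^ s) ∈ P
  | lastLeaf => .node (J + 1) q 0 ((a + 1) * 2 ^ s - 1) ∈ P
  | startLeaf => ∃ y ∈ P, AttachedLeaf h J (regionStart h q s a) y
  | endLeaf => ∃ y ∈ P, AttachedLeaf h J (regionEnd h q s a) y
  | startCopy => Crosses h P J (regionStart h q s a - 1)
  | endCopy => Crosses h P J (regionEnd h q s a)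

section Exit

variable {h J q s a : ℕ} {P Q : Set Anchor} {x y z : Anchor}

theorem regionStart_lt_regionEnd (h q s a : ℕ) : regionStart h q s a < regionEnd h q s a := by
  have : 0 < 2 ^ s := by positivity
  rw [regionStart, regionEnd, Nat.add_mul]
  omega

theorem FarApart.not_usedBy (hfar : FarApart (treeGraph h) P Q) {γ : Gate}
    (hP : γ.UsedBy h J q s a P) : ¬ γ.UsedBy h J q s a Q := by
  have attached {g : ℕ} : (∃ y ∈ P, AttachedLeaf h J g y) → ¬ ∃ y ∈ Q, AttachedLeaf h J g y := by
    rintro ⟨y, hyP, hy⟩ ⟨y', hyQ, hy'⟩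
    exact hfar.not_mem hyP (hy.unique hy' ▸ hyQ)
  cases γ with
  | root | top | firstLeaf | lastLeaf => exact hfar.not_mem hP
  | startLeaf | endLeaf => exact attached hP
  | startCopy | endCopy => exact hfar.not_crosses _ _ hP

/-- `c` is one of the two copies next to the region and `ζ` the zone separating it from the
region. -/
def IsNeighbour (h q s a c ζ : ℕ) : Prop :=
  (c + 1 = regionStart h q s a ∧ ζ = regionStart h q s a) ∨
    (c = regionEnd h q s a ∧ ζ = regionEnd h q s a)

/-- The vertices of the region, and those which `P` can reach from its boundary zones within a
single neighbouring copy. -/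
inductive Confined (h J q s a : ℕ) (P : Set Anchor) : Anchor → Prop
  | region {x : Anchor} (hx : InRegion h J q s a x) : Confined h J q s a P x
  | side {c ζ : ℕ} {z x : Anchor} (hside : IsNeighbour h q s a c ζ) (hz : InZone h J ζ z)
      (hzx : ReachableIn (patternGraph h) {x ∈ P | InCopy h J c x} z x) : Confined h J q s a P x

theorem div_two_pow_eq_iff {k : ℕ} : k / 2 ^ s = a ↔ a * 2 ^ s ≤ k ∧ k < (a + 1) * 2 ^ s := by
  have : 0 < 2 ^ s := by positivity
  rw [Nat.div_eq_iff this, Nat.add_mul]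
  omega

theorem InRegion.of_spineAdj_leaf (ha : (a + 1) * 2 ^ s ≤ 2 ^ h)
    (hsealed : ∀ γ : Gate, ¬ γ.UsedBy h J q s a P) {b : ℕ} (hb : b / 2 ^ s = a)
    (hxP : .node (J + 1) q 0 b ∈ P) (hxy : SpineAdj h (.node (J + 1) q 0 b) y) :
    InRegion h J q s a y := by
  obtain ⟨hb_ge, hb_lt⟩ := div_two_pow_eq_iff.1 hb
  have hb_first : b ≠ a * 2 ^ s := by
    rintro rfl
    exact hsealed .firstLeaf hxP
  have hb_last : b ≠ (a + 1) * 2 ^ s - 1 := by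
    rintro rfl
    exact hsealed .lastLeaf hxP
  cases hxy with
  | left => omega
  | right q hk =>
    simp only [leafCount, Nat.add_eq_zero_iff, one_ne_zero, and_false, if_false] at hk
    omega
  | @below e q k t e' p hkt he hp =>
    have ht := hkt.2
    refine .copy (g := q * NN h + t) ?_ ?_ (InZone.inCopy ⟨e', he, by rw [hp]⟩)
    · rw [regionStart]
      omega
    · rw [regionEnd]
      omega

theorem InRegion.of_adj_tree (ha : (a + 1) * 2 ^ s ≤ 2 ^ h)
    (hsealed : ∀ γ : Gate, ¬ γ.UsedBy h J q s a P) {t b : ℕ} (ht : t ≤ s)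
    (hb : b / 2 ^ (s - t) = a) (hxP : .node (J + 1) q t b ∈ P) (hyP : y ∈ P)
    (hwf : y.WellFormed h) (hxy : (patternGraph h).Adj (.node (J + 1) q t b) y) :
    InRegion h J q s a y := by
  rcases hxy with hxy | hyx | hxy | hyx
  · obtain rfl : t = 0 := by cases hxy <;> rfl
    exact .of_spineAdj_leaf ha hsealed hb hxP hxy
  · cases hyx
  · cases hxy with
    | root => exact absurd hyP (hsealed .root)
    | @node _ _ _ _ c hs hc =>
      have hts : t ≠ s := by
        rintro rfl
        rw [Nat.sub_self, pow_zero, Nat.div_one] at hb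
        exact hsealed .top (hb ▸ hxP)
      refine .tree (by omega) ?_ hwf
      rw [hc, Nat.div_div_eq_div_mul, ← pow_succ', ← hb,
        show s - (t + 1) + 1 = s - t by omega]
  · cases hyx with
    | @node _ _ u c _ hs hc =>
      refine .tree (by omega) ?_ hwf
      rw [← hb, hc, Nat.div_div_eq_div_mul, ← pow_succ', show s - (u + 1) + 1 = s - u by omega]

theorem AttachedLeaf.inRegion {ζ : ℕ} (ha : (a + 1) * 2 ^ s ≤ 2 ^ h) (hy : AttachedLeaf h J ζ y)
    (hwf : y.WellFormed h) (hζ : regionStart h q s a < ζ) (hζ' : ζ < regionEnd h q s a) :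
    InRegion h J q s a y := by
  obtain ⟨e, q', k, t', rfl, he, hkt, hζ_eq⟩ := hy
  have hN := NN_add_one h
  rw [regionStart] at hζ
  rw [regionEnd] at hζ'
  obtain ⟨t, rfl⟩ : ∃ t, ζ = q * NN h + t := ⟨ζ - q * NN h, by omega⟩
  obtain ⟨rfl, rfl, rfl⟩ :=
    hkt.level_eq_of_interior (t := t) he (by omega) (by omega) hζ_eq.symm
  have hk := hkt.2
  exact .tree (Nat.zero_le s) (by rw [Nat.sub_zero, div_two_pow_eq_iff]; omega) hwf

theorem Confined.of_adj_copy (ha : (a + 1) * 2 ^ s ≤ 2 ^ h)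
    (hsealed : ∀ γ : Gate, ¬ γ.UsedBy h J q s a P) {g : ℕ} (hg : regionStart h q s a ≤ g)
    (hg' : g < regionEnd h q s a) (hx : InCopy h J g x) (hxP : x ∈ P) (hyP : y ∈ P)
    (hwf : y.WellFormed h) (hxy : (patternGraph h).Adj x y) : Confined h J q s a P y := by
  have hy_root : y ≠ .root := by
    rintro rfl
    exact hsealed .root hyP
  rcases le_or_gt y.level J with hyJ | hyJ
  · obtain ⟨c, hxc, hyc⟩ := hx.exists_common_copy hyJ hy_root hwf hxy
    by_cases hc : regionStart h q s a ≤ c ∧ c < regionEnd h q s a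
    · exact .region (.copy hc.1 hc.2 hyc)
    · obtain ⟨ζ, hζ, hζg, hζc⟩ := hx.exists_inZone_of_ne hxc (by omega)
      refine .side (c := c) (ζ := ζ) ?_ hζ (.of_adj ⟨hxP, hxc⟩ hxy ⟨hyP, hyc⟩)
      rw [IsNeighbour]
      omega
  · obtain ⟨ζ, hyζ, hxζ⟩ := exists_attachedLeaf_of_adj hxy hx.ne_root hx.level_le hyJ
    have hζg := hxζ.eq_or_eq_succ hx
    have hζ_start : ζ ≠ regionStart h q s a := by
      rintro rfl
      exact hsealed .startLeaf ⟨y, hyP, hyζ⟩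
    have hζ_end : ζ ≠ regionEnd h q s a := by
      rintro rfl
      exact hsealed .endLeaf ⟨y, hyP, hyζ⟩
    exact .region (hyζ.inRegion ha hwf (by omega) (by omega))

theorem IsNeighbour.eq_of_reachableIn {c ζ τ : ℕ} (hside : IsNeighbour h q s a c ζ)
    (hsealed : ∀ γ : Gate, ¬ γ.UsedBy h J q s a P) (hz : InZone h J ζ z)
    (hzx : ReachableIn (patternGraph h) {x ∈ P | InCopy h J c x} z x) (hx : InZone h J τ x) :
    τ = ζ := by
  by_contra hne
  have hcross : Crosses h P J c := .of_reachableIn (Ne.symm hne) hz hx hzx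
  rcases hside with ⟨hc, -⟩ | ⟨rfl, -⟩
  · obtain rfl : c = regionStart h q s a - 1 := by omega
    exact hsealed .startCopy hcross
  · exact hsealed .endCopy hcross

theorem Confined.of_adj_side (hsealed : ∀ γ : Gate, ¬ γ.UsedBy h J q s a P) {c ζ : ℕ}
    (hside : IsNeighbour h q s a c ζ) (hz : InZone h J ζ z)
    (hzx : ReachableIn (patternGraph h) {x ∈ P | InCopy h J c x} z x)
    (hyP : y ∈ P) (hwf : y.WellFormed h) (hxy : (patternGraph h).Adj x y) :
    Confined h J q s a P y := by
  have hy_root : y ≠ .root := by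
    rintro rfl
    exact hsealed .root hyP
  have hx : InCopy h J c x := hzx.right_mem.2
  rcases le_or_gt y.level J with hyJ | hyJ
  · obtain ⟨g, hxg, hyg⟩ := hx.exists_common_copy hyJ hy_root hwf hxy
    rcases eq_or_ne c g with rfl | hcg
    · exact .side hside hz (hzx.step hxy ⟨hyP, hyg⟩)
    · obtain ⟨τ, hτ, hτc, hτg⟩ := hx.exists_inZone_of_ne hxg hcg
      obtain rfl := hside.eq_of_reachableIn hsealed hz hzx hτ
      have := regionStart_lt_regionEnd h q s a
      rcases hside with hside | hside <;> exact .region (.copy (by omega) (by omega) hyg)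
  · obtain ⟨τ, hyτ, hxτ⟩ := exists_attachedLeaf_of_adj hxy hx.ne_root hx.level_le hyJ
    obtain rfl := hside.eq_of_reachableIn hsealed hz hzx hxτ
    rcases hside with ⟨-, rfl⟩ | ⟨-, rfl⟩
    · exact absurd ⟨y, hyP, hyτ⟩ (hsealed .startLeaf)
    · exact absurd ⟨y, hyP, hyτ⟩ (hsealed .endLeaf)

theorem Confined.inExtendedRegion (hsealed : ∀ γ : Gate, ¬ γ.UsedBy h J q s a P)
    (hx : Confined h J q s a P x) : InExtendedRegion h J q s a x := by
  cases hx with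
  | region hx => exact .region hx
  | @side c ζ z _ hside hz hzx =>
    have hfar {τ : ℕ} (hτ : InZone h J τ x) : τ = ζ := hside.eq_of_reachableIn hsealed hz hzx hτ
    rcases hside with ⟨hc, rfl⟩ | ⟨rfl, rfl⟩
    · exact .left hc hzx.right_mem.2 fun hzone => by have := hfar hzone; omega
    · exact .right hzx.right_mem.2 fun hzone => by have := hfar hzone; omega

theorem exists_gate_usedBy (ha : (a + 1) * 2 ^ s ≤ 2 ^ h)
    (hwf : ∀ x ∈ P, x.WellFormed h) (hx : InRegion h J q s a x)
    (hy : ¬ InExtendedRegion h J q s a y) (hxy : ReachableIn (patternGraph h) P x y) :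
    ∃ γ : Gate, γ.UsedBy h J q s a P := by
  by_contra hcon
  have hsealed : ∀ γ : Gate, ¬ γ.UsedBy h J q s a P := not_exists.1 hcon
  refine hy (Confined.inExtendedRegion hsealed ?_)
  refine hxy.mem_of_closed {x | Confined h J q s a P x} (.region hx) fun u v hu huP hvP huv => ?_
  cases hu with
  | side hside hz hzx =>
    exact .of_adj_side hsealed hside hz hzx hvP (hwf v hvP) huv
  | region hu =>
    cases hu with
    | tree ht hb hindex => exact .region (.of_adj_tree ha hsealed ht hb huP hvP (hwf v hvP) huv)
    | copy hg hg' hu => exact .of_adj_copy ha hsealed hg hg' hu huP hvP (hwf v hvP) huv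

end Exit

section Cover

variable {h J q s a g : ℕ} {x : Anchor}

theorem InCopy.inRegion_top (hx : InCopy h (J + 1) g x) (hxJ : x.level ≤ J) :
    InRegion h J g h 0 x := by
  have hN := NN_add_one h
  obtain ⟨t, ht, hxt⟩ := hx.exists_subcopy hxJ
  refine .copy ?_ ?_ hxt
  · rw [regionStart]
    omega
  · rw [regionEnd]
    omega

theorem InCopy.cover_zero (hx : InCopy h 0 g x) :
    x ∈ ({.rail 0 g, .rail 0 (g + 1), .node 0 g 0 0} : Set Anchor) := by
  cases x with
  | root => exact hx.elim
  | rail e p =>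
    obtain ⟨he, hp, hp'⟩ := hx
    obtain rfl := Nat.le_zero.1 he
    simp only [Nat.sub_self, pow_zero, mul_one] at hp hp'
    rcases show p = g ∨ p = g + 1 by omega with rfl | rfl <;> simp
  | node e q s a =>
    obtain ⟨he, hq, hq', ⟨-, rfl, rfl⟩ | hindex⟩ := hx
    · obtain rfl := Nat.le_zero.1 he
      simp only [Nat.sub_self, pow_zero, mul_one] at hq hq'
      obtain rfl : q = g := by omega
      simp
    · omega

theorem InCopy.cover_succ (hx : InCopy h (J + 1) g x) :
    x ∈ ({.rail (J + 1) g, .rail (J + 1) (g + 1)} : Set Anchor) ∨ InRegion h J g h 0 x := by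
  rcases (Nat.le_succ_iff.1 hx.level_le) with hxJ | hxJ
  · exact .inr (hx.inRegion_top hxJ)
  cases x with
  | root => exact hx.elim
  | rail e p =>
    obtain rfl : e = J + 1 := hxJ
    obtain ⟨-, hp, hp'⟩ := hx
    simp only [Nat.sub_self, pow_zero, mul_one] at hp hp'
    rcases show p = g ∨ p = g + 1 by omega with rfl | rfl <;> simp
  | node e q s a =>
    obtain rfl : e = J + 1 := hxJ
    obtain ⟨-, hq, hq', hindex⟩ := hx
    simp only [Nat.sub_self, pow_zero, mul_one] at hq hq'
    obtain rfl : q = g := by omega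
    obtain ⟨-, hs, ha⟩ := hindex.resolve_left (by simp)
    exact .inr (.tree hs.le (Nat.div_eq_of_lt ha) hindex)

theorem InRegion.cover_succ (hx : InRegion h J q (s + 1) a x) :
    x = .node (J + 1) q (s + 1) a ∨ InRegion h J q s (2 * a) x ∨
      InRegion h J q s (2 * a + 1) x ∨ InCopy h J (regionEnd h q s (2 * a)) x := by
  cases hx with
  | @tree t b ht hb hindex =>
    rcases ht.eq_or_lt with rfl | ht
    · exact .inl (by rw [← hb, Nat.sub_self, pow_zero, Nat.div_one])
    · have hb' : b / 2 ^ (s - t) / 2 = a := by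
        rw [Nat.div_div_eq_div_mul, ← pow_succ, ← hb, show s - t + 1 = s + 1 - t by omega]
      rcases show b / 2 ^ (s - t) = 2 * a ∨ b / 2 ^ (s - t) = 2 * a + 1 by omega with hb' | hb'
      · exact .inr (.inl (.tree (by omega) hb' hindex))
      · exact .inr (.inr (.inl (.tree (by omega) hb' hindex)))
  | @copy g _ hg hg' hx =>
    have hstart : regionStart h q (s + 1) a = regionStart h q s (2 * a) := by
      simp only [regionStart, pow_succ']
      ring_nf
    have hend : regionEnd h q (s + 1) a = regionEnd h q s (2 * a + 1) := by
      simp only [regionEnd, pow_succ']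
      ring_nf
    have hmid : regionEnd h q s (2 * a) + 1 = regionStart h q s (2 * a + 1) := by
      have : 0 < (2 * a + 1) * 2 ^ s := by positivity
      rw [regionEnd, regionStart]
      omega
    rcases lt_trichotomy g (regionEnd h q s (2 * a)) with hlt | rfl | hgt
    · exact .inr (.inl (.copy (by omega) hlt hx))
    · exact .inr (.inr (.inr hx))
    · exact .inr (.inr (.inl (.copy (by omega) (by omega) hx)))

theorem InRegion.cover_zero (hx : InRegion h J q 0 a x) :
    x = .node (J + 1) q 0 a ∨ InCopy h J (regionStart h q 0 a) x := by
  cases hx with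
  | @tree t b ht hb hindex =>
    obtain rfl := Nat.le_zero.1 ht
    exact .inl (by rw [← hb, Nat.sub_self, pow_zero, Nat.div_one])
  | @copy g _ hg hg' hx =>
    obtain rfl : regionStart h q 0 a = g := by
      rw [regionStart, regionEnd] at *
      omega
    exact .inr hx

theorem InExtendedRegion.cover (hx : InExtendedRegion h J q s a x) :
    InRegion h J q s a x ∨ InCopy h J (regionStart h q s a - 1) x ∨
      InCopy h J (regionEnd h q s a) x := by
  cases hx with
  | region hx => exact .inl hx
  | left hg hx =>
    rw [← hg, Nat.add_sub_cancel]
    exact .inr (.inl hx)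
  | right hx => exact .inr (.inr hx)

end Cover

/-! ### Linked sets are small -/

/-- Any two subsets of `X` of equal finite size are joined by as many pairwise far apart connected
sets. -/
def FarLinked (h : ℕ) (X : Set Anchor) : Prop :=
  ∀ (l : ℕ), ∀ A ⊆ X, ∀ B ⊆ X, A.encard = l → B.encard = l →
    ∃ P : Fin l → Set Anchor, (∀ i, ∀ x ∈ P i, x.WellFormed h) ∧
      Pairwise (Function.onFun (FarApart (treeGraph h)) P) ∧
      ∀ i, ∃ a ∈ A, ∃ b ∈ B, ReachableIn (patternGraph h) (P i) a b

section Counting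

variable {α : Type*} {X S T : Set α} {m n : ℕ∞}

theorem encard_inter_union_le (hS : (X ∩ S).encard ≤ m) (hT : (X ∩ T).encard ≤ n) :
    (X ∩ (S ∪ T)).encard ≤ m + n := by
  rw [Set.inter_union_distrib_left]
  exact (Set.encard_union_le _ _).trans (add_le_add hS hT)

theorem encard_inter_singleton_le (X : Set α) (x : α) : (X ∩ {x}).encard ≤ 1 :=
  (Set.encard_mono Set.inter_subset_right).trans (Set.encard_singleton x).le

theorem encard_inter_pair_le (X : Set α) (x y : α) : (X ∩ {x, y}).encard ≤ 2 :=
  encard_inter_union_le (encard_inter_singleton_le X x) (encard_inter_singleton_le X y)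

theorem encard_inter_le_of_forall (hT : (X ∩ T).encard ≤ n) (hST : ∀ x ∈ S, x ∈ T) :
    (X ∩ S).encard ≤ n :=
  (Set.encard_mono (Set.inter_subset_inter_right X hST)).trans hT

end Counting

section Linked

variable {h J q s a g : ℕ} {X : Set Anchor}

/-- Nine far apart sets cannot all pass through the eight gates of a region. -/
theorem FarLinked.encard_region_le (hX : FarLinked h X) (ha : (a + 1) * 2 ^ s ≤ 2 ^ h)
    (hout : 8 < (X \ {x | InExtendedRegion h J q s a x}).encard) :
    (X ∩ {x | InRegion h J q s a x}).encard ≤ 8 := by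
  by_contra! hin
  obtain ⟨A, hA, hA_card⟩ := Set.exists_subset_encard_eq (Order.add_one_le_of_lt hin)
  obtain ⟨B, hB, hB_card⟩ := Set.exists_subset_encard_eq (Order.add_one_le_of_lt hout)
  obtain ⟨P, hwf, hfar, hP⟩ := hX 9 A (hA.trans Set.inter_subset_left) B
    (hB.trans Set.sdiff_subset) hA_card hB_card
  have hgate : ∀ i, ∃ γ : Gate, γ.UsedBy h J q s a (P i) := fun i => by
    obtain ⟨x, hx, y, hy, hxy⟩ := hP i
    exact exists_gate_usedBy ha (hwf i) (hA hx).2 (hB hy).2 hxy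
  choose γ hγ using hgate
  obtain ⟨i, j, hij, heq⟩ := Fintype.exists_ne_map_eq_of_card_lt γ (by simp [card_gate])
  exact (hfar hij).not_usedBy (hγ i) (heq ▸ hγ j)

theorem FarLinked.encard_region_le_of_extended (hX : FarLinked h X) (hX_card : 58 < X.encard)
    (ha : (a + 1) * 2 ^ s ≤ 2 ^ h)
    (hext : (X ∩ {x | InExtendedRegion h J q s a x}).encard ≤ 50) :
    (X ∩ {x | InRegion h J q s a x}).encard ≤ 8 := by
  refine hX.encard_region_le ha ?_
  by_contra! hout
  refine hX_card.not_ge ?_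
  calc X.encard = (X \ {x | InExtendedRegion h J q s a x}).encard +
        (X ∩ {x | InExtendedRegion h J q s a x}).encard :=
        (Set.encard_sdiff_add_encard_inter _ _).symm
    _ ≤ 8 + 50 := add_le_add hout hext
    _ = 58 := by norm_num

theorem encard_copy_zero_le (X : Set Anchor) (g : ℕ) :
    (X ∩ {x | InCopy h 0 g x}).encard ≤ 11 :=
  calc _ ≤ 1 + 2 := encard_inter_le_of_forall
        (encard_inter_union_le (encard_inter_singleton_le X _) (encard_inter_pair_le X _ _))
        fun _ hx => InCopy.cover_zero hx
    _ ≤ 11 := by norm_num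

theorem encard_copy_succ_le (htop : (X ∩ {x | InRegion h J g h 0 x}).encard ≤ 8) :
    (X ∩ {x | InCopy h (J + 1) g x}).encard ≤ 11 :=
  calc _ ≤ 2 + 8 := encard_inter_le_of_forall
        (encard_inter_union_le (encard_inter_pair_le X _ _) htop)
        fun _ hx => InCopy.cover_succ hx
    _ ≤ 11 := by norm_num

theorem encard_extendedRegion_le {n : ℕ∞} (hcopy : ∀ g, (X ∩ {x | InCopy h J g x}).encard ≤ 11)
    (hregion : (X ∩ {x | InRegion h J q s a x}).encard ≤ n) :
    (X ∩ {x | InExtendedRegion h J q s a x}).encard ≤ n + (11 + 11) :=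
  encard_inter_le_of_forall
    (encard_inter_union_le hregion (encard_inter_union_le (hcopy _) (hcopy _)))
    fun _ hx => InExtendedRegion.cover hx

theorem FarLinked.encard_region_le_of_copies (hX : FarLinked h X) (hX_card : 58 < X.encard)
    (hcopy : ∀ g, (X ∩ {x | InCopy h J g x}).encard ≤ 11) (s : ℕ) :
    ∀ a, (a + 1) * 2 ^ s ≤ 2 ^ h → (X ∩ {x | InRegion h J q s a x}).encard ≤ 8 := by
  induction s with
  | zero =>
    refine fun a ha => hX.encard_region_le_of_extended hX_card ha ?_
    have hregion : (X ∩ {x | InRegion h J q 0 a x}).encard ≤ 1 + 11 := encard_inter_le_of_forall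
      (encard_inter_union_le (encard_inter_singleton_le X _) (hcopy _))
      fun _ hx => InRegion.cover_zero hx
    exact (encard_extendedRegion_le hcopy hregion).trans (by norm_num)
  | succ s ih =>
    refine fun a ha => hX.encard_region_le_of_extended hX_card ha ?_
    have hsplit : (a + 1) * 2 ^ (s + 1) = (2 * a + 1 + 1) * 2 ^ s := by ring
    have hregion : (X ∩ {x | InRegion h J q (s + 1) a x}).encard ≤ 1 + (8 + (8 + 11)) :=
      encard_inter_le_of_forall
        (encard_inter_union_le (encard_inter_singleton_le X _) <|
          encard_inter_union_le
            (ih (2 * a) (le_trans (Nat.mul_le_mul_right _ (by omega)) (hsplit ▸ ha))) <|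
          encard_inter_union_le (ih (2 * a + 1) (hsplit ▸ ha)) (hcopy _))
        fun _ hx => InRegion.cover_succ hx
    exact (encard_extendedRegion_le hcopy hregion).trans (by norm_num)

theorem FarLinked.encard_copy_le (hX : FarLinked h X) (hX_card : 58 < X.encard) (J : ℕ) :
    ∀ g, (X ∩ {x | InCopy h J g x}).encard ≤ 11 := by
  induction J with
  | zero => exact encard_copy_zero_le X
  | succ J ih =>
    exact fun g => encard_copy_succ_le
      (hX.encard_region_le_of_copies hX_card ih h 0 (by simp))

theorem FarLinked.encard_le (hX : FarLinked h X)
    (hcopy : ∀ x ∈ X, x = .root ∨ InCopy h J g x) : X.encard ≤ 58 := by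
  by_contra! hX_card
  refine hX_card.not_ge ?_
  calc X.encard = (X ∩ ({.root} ∪ {x | InCopy h J g x})).encard :=
        congrArg Set.encard (Set.inter_eq_left.2 hcopy).symm
    _ ≤ 1 + 11 := encard_inter_union_le (encard_inter_singleton_le X _)
        (hX.encard_copy_le hX_card J g)
    _ ≤ 58 := by norm_num

end Linked

/-! ### Subdivided graphs -/

section Subdivide

variable {V : Type*}

/-- The graph obtained from `T` by adding, for every pair `(x, y)` with `S x y`, a path from `x` to
`y` with `d` inner vertices, called the spine of that pair. The vertex `.inr (p, i)` is the `i`-th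
inner vertex of the spine of `p`, counted from zero. No edge is added if `d = 0`. -/
def subdivide (T : SimpleGraph V) (S : V → V → Prop) (d : ℕ) :
    SimpleGraph (V ⊕ {p : V × V // S p.1 p.2} × Fin d) where
  Adj
    | .inl x, .inl y => T.Adj x y
    | .inl x, .inr (p, i) => (x = p.1.1 ∧ i.1 = 0) ∨ (x = p.1.2 ∧ i.1 + 1 = d)
    | .inr (p, i), .inl x => (x = p.1.1 ∧ i.1 = 0) ∨ (x = p.1.2 ∧ i.1 + 1 = d)
    | .inr (p, i), .inr (q, j) => p = q ∧ (i.1 + 1 = j.1 ∨ j.1 + 1 = i.1)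
  symm := ⟨by
    rintro (x | ⟨p, i⟩) (y | ⟨q, j⟩) hxy
    exacts [T.adj_symm hxy, hxy, hxy, ⟨hxy.1.symm, hxy.2.symm⟩]⟩
  loopless := ⟨by
    rintro (x | ⟨p, i⟩) hx
    · exact T.loopless.irrefl x hx
    · obtain ⟨-, hi⟩ := hx
      omega⟩

variable {T G : SimpleGraph V} {S : V → V → Prop} {d : ℕ}
  {P Q : Set (V ⊕ {p : V × V // S p.1 p.2} × Fin d)} {p : {p : V × V // S p.1 p.2}}

theorem ReachableIn.of_subdivide (hT : T ≤ G) (hS : ∀ x y, S x y → G.Adj x y) {x y : V}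
    (hxy : ReachableIn (subdivide T S d) P (.inl x) (.inl y)) :
    ReachableIn G (Sum.inl ⁻¹' P) x y := by
  let L : Set (V ⊕ {p : V × V // S p.1 p.2} × Fin d) := {w | Sum.elim
    (fun z => ReachableIn G (Sum.inl ⁻¹' P) x z)
    (fun pi => ReachableIn G (Sum.inl ⁻¹' P) x pi.1.1.1 ∨ ReachableIn G (Sum.inl ⁻¹' P) x pi.1.1.2)
    w}
  refine hxy.mem_of_closed L (ReachableIn.refl hxy.left_mem) ?_
  rintro (u | ⟨p, i⟩) (v | ⟨q, j⟩) hu - hv huv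
  · exact ReachableIn.step hu (hT huv) hv
  · rcases huv with ⟨rfl, -⟩ | ⟨rfl, -⟩
    exacts [.inl hu, .inr hu]
  · rcases huv with ⟨rfl, -⟩ | ⟨rfl, -⟩
    · exact hu.elim id fun hu => hu.step (hS _ _ p.2).symm hv
    · exact hu.elim (fun hu => hu.step (hS _ _ p.2) hv) id
  · obtain ⟨rfl, -⟩ := huv
    exact hu

theorem FarApart.of_subdivide (h : FarApart (subdivide T S d) P Q) :
    FarApart T (Sum.inl ⁻¹' P) (Sum.inl ⁻¹' Q) := fun _ hx _ hy =>
  have ⟨hne, hadj, hcommon⟩ := h _ hx _ hy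
  ⟨fun hxy => hne (hxy ▸ rfl), hadj, fun z => hcommon (.inl z)⟩

theorem ReachableIn.between_of_subdivide {i j k : Fin d} {v : V ⊕ {p : V × V // S p.1 p.2} × Fin d}
    (h : ReachableIn (subdivide T S d) P (.inr (p, j)) v) (hij : i < j) (hjk : j < k)
    (hi : .inr (p, i) ∉ P) (hk : .inr (p, k) ∉ P) : ∃ j', i < j' ∧ j' < k ∧ v = .inr (p, j') := by
  refine h.mem_of_closed {v | ∃ j', i < j' ∧ j' < k ∧ v = .inr (p, j')} ⟨j, hij, hjk, rfl⟩ ?_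
  rintro _ v ⟨j', hij', hjk', rfl⟩ - hv huv
  have := k.2
  rcases v with x | ⟨q, l⟩
  · rcases huv with ⟨-, hend⟩ | ⟨-, hend⟩ <;> rw [Fin.lt_def] at * <;> omega
  · obtain ⟨rfl, hstep⟩ := huv
    have hli : l ≠ i := by rintro rfl; exact hi hv
    have hlk : l ≠ k := by rintro rfl; exact hk hv
    refine ⟨l, ?_, ?_, rfl⟩ <;> rw [ne_eq, Fin.ext_iff] at * <;> rw [Fin.lt_def] at * <;> omega

theorem ReachableIn.mem_of_between {i j k : Fin d}
    (h : ReachableIn (subdivide T S d) P (.inr (p, i)) (.inr (p, k)))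
    (hP : ∀ v ∈ P, ∃ j, v = .inr (p, j)) (hij : i < j) (hjk : j < k) : .inr (p, j) ∈ P := by
  by_contra hj
  obtain ⟨l, hlj, hkl⟩ := h.mem_of_closed {v | ∃ l < j, v = .inr (p, l)} ⟨i, hij, rfl⟩ <| by
    rintro _ v ⟨l, hlj, rfl⟩ - hv huv
    obtain ⟨l', rfl⟩ := hP v hv
    have hl' : l' ≠ j := by rintro rfl; exact hj hv
    have hstep := huv.2
    refine ⟨l', ?_, rfl⟩
    rw [ne_eq, Fin.ext_iff] at hl'
    rw [Fin.lt_def] at *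
    omega
  obtain rfl : k = l := by simpa using hkl
  exact hlj.not_gt hjk

theorem ReachableIn.exists_eq_inr {i : Fin d} {v : V ⊕ {p : V × V // S p.1 p.2} × Fin d}
    (h : ReachableIn (subdivide T S d) P (.inr (p, i)) v) (hP : ∀ x, .inl x ∉ P) :
    ∃ j, v = .inr (p, j) := by
  refine h.mem_of_closed {v | ∃ j, v = .inr (p, j)} ⟨i, rfl⟩ ?_
  rintro _ (x | ⟨q, j⟩) ⟨i, rfl⟩ - hv huv
  · exact absurd hv (hP x)
  · obtain ⟨rfl, -⟩ := huv
    exact ⟨j, rfl⟩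

end Subdivide

/-! ### Fat models -/

section FatModel

variable {V W : Type*} {G : SimpleGraph V} {X : SimpleGraph W} {K : ℕ}

theorem le_edist_of_le_sDist {U U' : Set V} {u v : V} (h : (K : ℕ∞) ≤ CGT.sDist G U U')
    (hu : u ∈ U) (hv : v ∈ U') : (K : ℕ∞) ≤ G.edist u v :=
  h.trans ((iInf_le _ (⟨u, hu⟩ : U)).trans (iInf_le _ (⟨v, hv⟩ : U')))

theorem disjoint_of_pos_le_sDist {U U' : Set V} (hK : 0 < K) (h : (K : ℕ∞) ≤ CGT.sDist G U U') :
    Disjoint U U' :=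
  Set.disjoint_left.2 fun u hu hu' => by
    have := le_edist_of_le_sDist h hu hu'
    rw [edist_self] at this
    simp [hK.ne'] at this

variable (fm : CGT.FatModel G X K)

theorem disjoint_walkSupp_path (hK : 0 < K) {x y y' : W} (hy : X.Adj x y) (hy' : X.Adj x y')
    (hne : y ≠ y') : Disjoint (CGT.walkSupp (fm.path hy)) (CGT.walkSupp (fm.path hy')) := by
  refine disjoint_of_pos_le_sDist hK (fm.fat_paths hy hy' fun heq => ?_)
  rcases Sym2.eq_iff.1 heq with ⟨-, h⟩ | ⟨h, -⟩
  exacts [hne h, hy'.ne h]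

/-- The part of the fat model that realizes the subgraph of `X` induced by `Q`. -/
def realize (Q : Set W) : Set V :=
  {v | (∃ x ∈ Q, v ∈ fm.branch x) ∨
    ∃ (x y : W) (e : X.Adj x y), x ∈ Q ∧ y ∈ Q ∧ v ∈ CGT.walkSupp (fm.path e)}

variable {Q Q' : Set W}

theorem ReachableIn.realize {x y : W} (hxy : ReachableIn X Q x y) {v w : V}
    (hv : v ∈ fm.branch x) (hw : w ∈ fm.branch y) : ReachableIn G (realize fm Q) v w := by
  have hbranch : ∀ z ∈ Q, ∀ v ∈ fm.branch z, ∀ w ∈ fm.branch z,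
      ReachableIn G (FatGrid.realize fm Q) v w := fun z hz v hv w hw =>
    (of_setConn (fm.branch_connected z) hv hw).mono fun u hu => .inl ⟨z, hz, hu⟩
  refine hxy.mem_of_closed {z | ∀ w ∈ fm.branch z, ReachableIn G (FatGrid.realize fm Q) v w}
    (hbranch x hxy.left_mem v hv) ?_ w hw
  intro z z' hz hzQ hz'Q hzz' w hw
  have hpath : ReachableIn G (FatGrid.realize fm Q) (fm.pathEnd hzz') (fm.pathEnd hzz'.symm) :=
    ⟨fm.path hzz', fun u hu => .inr ⟨z, z', hzz', hzQ, hz'Q, hu⟩⟩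
  exact (hz _ (fm.pathEnd_mem hzz')).trans <| hpath.trans <|
    hbranch z' hz'Q _ (fm.pathEnd_mem hzz'.symm) w hw

theorem le_edist_of_mem_realize (hQ : Disjoint Q Q') {u v : V} (hu : u ∈ realize fm Q)
    (hv : v ∈ realize fm Q') : (K : ℕ∞) ≤ G.edist u v := by
  have hne : ∀ x ∈ Q, ∀ y ∈ Q', x ≠ y := fun x hx y hy => hQ.ne_of_mem hx hy
  rcases hu with ⟨x, hx, hu⟩ | ⟨x, y, e, hx, hy, hu⟩ <;>
    rcases hv with ⟨x', hx', hv⟩ | ⟨x', y', e', hx', hy', hv⟩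
  · exact le_edist_of_le_sDist (fm.fat_branch (hne _ hx _ hx')) hu hv
  · rw [edist_comm]
    exact le_edist_of_le_sDist (fm.fat_path_branch e' x (hne _ hx _ hx') (hne _ hx _ hy')) hv hu
  · exact le_edist_of_le_sDist
      (fm.fat_path_branch e x' (hne _ hx _ hx').symm (hne _ hy _ hx').symm) hu hv
  · refine le_edist_of_le_sDist (fm.fat_paths e e' fun heq => ?_) hu hv
    rcases Sym2.eq_iff.1 heq with ⟨h, -⟩ | ⟨h, -⟩
    exacts [hne _ hx _ hx' h, hne _ hx _ hy' h]

end FatModel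

section FatModelSubdivide

variable {V W : Type*} {T : SimpleGraph V} {S : V → V → Prop} {X : SimpleGraph W} {d K : ℕ}
  (fm : CGT.FatModel (subdivide T S d) X K)

/-- The branch path leaving a branch set from the middle is trapped if the branch set and two other
branch paths block the spine. -/
theorem not_branch_subset_spine (hK : 0 < K) {x : W} {y : Fin 3 → W} (hy : ∀ n, X.Adj x (y n))
    (hinj : Function.Injective y) (p : {p : V × V // S p.1 p.2}) :
    ¬ ∀ v ∈ fm.branch x, ∃ i, v = .inr (p, i) := by
  intro hbranch
  choose i hi using fun n => hbranch _ (fm.pathEnd_mem (hy n))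
  have hnotMem : ∀ n n', n ≠ n' → .inr (p, i n) ∉ CGT.walkSupp (fm.path (hy n')) := by
    intro n n' hne
    rw [← hi n]
    exact Set.disjoint_left.1 (disjoint_walkSupp_path fm hK (hy n) (hy n') (hinj.ne hne))
      (fm.path (hy n)).start_mem_support
  have hi_inj : Function.Injective i := by
    intro n n' heq
    by_contra hne
    refine hnotMem n n' hne ?_
    rw [heq, ← hi n']
    exact (fm.path (hy n')).start_mem_support
  let σ := Tuple.sort i
  have hσ : StrictMono (i ∘ σ) :=
    (Tuple.monotone_sort i).strictMono_of_injective (hi_inj.comp σ.injective)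
  have h01 : i (σ 0) < i (σ 1) := hσ (by decide)
  have h12 : i (σ 1) < i (σ 2) := hσ (by decide)
  have hpath : ReachableIn (subdivide T S d) (CGT.walkSupp (fm.path (hy (σ 1))))
      (.inr (p, i (σ 1))) (fm.pathEnd (hy (σ 1)).symm) := by
    rw [← hi (σ 1)]
    exact ⟨fm.path (hy (σ 1)), fun v hv => hv⟩
  obtain ⟨j, hj, hj', hend⟩ := hpath.between_of_subdivide h01 h12
    (hnotMem _ _ (σ.injective.ne (by decide))) (hnotMem _ _ (σ.injective.ne (by decide)))
  have hmem := ReachableIn.of_setConn (fm.branch_connected x)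
    (fm.pathEnd_mem (hy (σ 0))) (fm.pathEnd_mem (hy (σ 2)))
  rw [hi, hi] at hmem
  exact Set.disjoint_left.1 (fm.branch_disjoint (hy (σ 1)).ne)
    (hmem.mem_of_between hbranch hj hj') (hend ▸ fm.pathEnd_mem (hy (σ 1)).symm)

theorem exists_inl_mem_branch (hK : 0 < K) {x : W} {y : Fin 3 → W} (hy : ∀ n, X.Adj x (y n))
    (hinj : Function.Injective y) : ∃ a, .inl a ∈ fm.branch x := by
  by_contra! hno
  obtain ⟨x' | ⟨p, i⟩, hu⟩ := fm.branch_nonempty x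
  · exact hno x' hu
  · exact not_branch_subset_spine fm hK hy hinj p fun v hv =>
      (ReachableIn.of_setConn (fm.branch_connected x) hu hv).exists_eq_inr hno

end FatModelSubdivide

/-! ### Grids -/

section Grid

variable {a b k : ℕ}

theorem gridGraph_adj_right {r : Fin a} {c c' : Fin b} (hc : c.1 + 1 = c'.1) :
    (CGT.gridGraph a b).Adj (r, c) (r, c') :=
  ⟨fun heq => by have := congrArg Fin.val (Prod.ext_iff.1 heq).2; simp only at this; omega,
    .inl (.inl ⟨rfl, hc⟩)⟩

theorem gridGraph_adj_down {r r' : Fin a} {c : Fin b} (hr : r.1 + 1 = r'.1) :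
    (CGT.gridGraph a b).Adj (r, c) (r', c) :=
  ⟨fun heq => by have := congrArg Fin.val (Prod.ext_iff.1 heq).1; simp only at this; omega,
    .inl (.inr ⟨rfl, hr⟩)⟩

theorem ReachableIn.of_fin_path {V : Type*} {G : SimpleGraph V} {P : Set V} {f : Fin b → V}
    (hadj : ∀ i j : Fin b, i.1 + 1 = j.1 → G.Adj (f i) (f j)) (hP : ∀ i, f i ∈ P) (i j : Fin b) :
    ReachableIn G P (f i) (f j) := by
  have hzero : ∀ n (hn : n < b), ReachableIn G P (f ⟨0, by omega⟩) (f ⟨n, hn⟩) := by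
    intro n hn
    induction n with
    | zero => exact .refl (hP _)
    | succ n ih => exact (ih (by omega)).step (hadj _ _ rfl) (hP _)
  exact (hzero i i.2).symm.trans (hzero j j.2)

theorem exists_mem_forall_ne_of_card_lt {α β : Type*} {A : Set α} {Z : Finset β} {l : ℕ}
    (hA : l ≤ A.encard) (hZ : Z.card < l) (f : β → α) : ∃ c ∈ A, ∀ z ∈ Z, f z ≠ c := by
  classical
  by_contra! hcover
  have hsub : A ⊆ ↑(Z.image f) := fun c hc => by simpa using hcover c hc
  have hle := hA.trans (Set.encard_mono hsub)
  rw [Set.encard_coe_eq_coe_finsetCard, Nat.cast_le] at hle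
  exact (hle.trans Finset.card_image_le).not_gt hZ

theorem linkage_gridGraph (r : Fin a) {A B : Set (Fin b)} {l : ℕ} (hl : l ≤ a)
    (hA : l ≤ A.encard) (hB : l ≤ B.encard) :
    Linkage (CGT.gridGraph a b) {v | v.1 = r ∧ v.2 ∈ A} {v | v.1 = r ∧ v.2 ∈ B} l := by
  refine menger fun Z hZ => ?_
  obtain ⟨c, hc, hcZ⟩ := exists_mem_forall_ne_of_card_lt hA hZ Prod.snd
  obtain ⟨c', hc', hc'Z⟩ := exists_mem_forall_ne_of_card_lt hB hZ Prod.snd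
  obtain ⟨r', -, hr'Z⟩ := exists_mem_forall_ne_of_card_lt (A := Set.univ)
    (by simpa [Set.encard_univ] using hl) hZ (Prod.fst (α := Fin a) (β := Fin b))
  have hcol : ∀ c, (∀ z ∈ Z, z.2 ≠ c) → ∀ r r',
      ReachableIn (CGT.gridGraph a b) (↑Z)ᶜ (r, c) (r', c) := fun c hcZ =>
    .of_fin_path (f := fun r => (r, c)) (fun _ _ => gridGraph_adj_down)
      fun r hz => hcZ (r, c) hz rfl
  have hrow : ReachableIn (CGT.gridGraph a b) (↑Z)ᶜ (r', c) (r', c') :=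
    .of_fin_path (P := (↑Z)ᶜ) (f := fun c => (r', c)) (fun _ _ => gridGraph_adj_right)
      (fun c hz => hr'Z (r', c) hz rfl) c c'
  exact ⟨(r, c), ⟨rfl, hc⟩, (r, c'), ⟨rfl, hc'⟩,
    ((hcol c hcZ r r').trans hrow).trans (hcol c' hc'Z r' r)⟩

theorem exists_three_gridGraph_neighbors {r : Fin a} (hr : 0 < r.1) (hr' : r.1 + 1 < a)
    (hb : 2 ≤ b) (c : Fin b) : ∃ y : Fin 3 → Fin a × Fin b,
      (∀ n, (CGT.gridGraph a b).Adj (r, c) (y n)) ∧ Function.Injective y := by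
  obtain ⟨c', hcc', hadj⟩ : ∃ c', c' ≠ c ∧ (CGT.gridGraph a b).Adj (r, c) (r, c') := by
    by_cases hc : c.1 + 1 < b
    · exact ⟨⟨c.1 + 1, hc⟩, by simp [Fin.ext_iff], gridGraph_adj_right rfl⟩
    · refine ⟨⟨c.1 - 1, by omega⟩, ?_, (gridGraph_adj_right ?_).symm⟩
      · rw [ne_eq, Fin.ext_iff]
        simp only
        omega
      · simp only
        omega
  refine ⟨![(⟨r.1 - 1, by omega⟩, c), (⟨r.1 + 1, hr'⟩, c), (r, c')], fun n => ?_, fun n n' => ?_⟩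
  · fin_cases n
    · exact (gridGraph_adj_down (show r.1 - 1 + 1 = r.1 by omega)).symm
    · exact gridGraph_adj_down rfl
    · exact hadj
  · fin_cases n <;> fin_cases n' <;>
      simp [Prod.ext_iff, Fin.ext_iff, Fin.ext_iff.not.1 hcc', Ne.symm (Fin.ext_iff.not.1 hcc')]
    omega

end Grid

/-! ### The subdivided pattern graph contains no fat grid -/

section Host

/-- The vertices of the `g`-th copy of level `J`, together with the root. -/
def copyVertices (h J g : ℕ) : Set Anchor := {x | x = .root ∨ InCopy h J g x}

/-- Being the source and the target of a spine, for vertices of a copy. -/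
abbrev copySpineAdj (h J g : ℕ) (x y : copyVertices h J g) : Prop := SpineAdj h x y

/-- The vertices of the host graph: those of the copy, and the `d` inner vertices of each spine. -/
abbrev HostVertex (h J g d : ℕ) : Type :=
  copyVertices h J g ⊕
    {p : copyVertices h J g × copyVertices h J g // copySpineAdj h J g p.1 p.2} × Fin d

/-- The `g`-th copy of the pattern of level `J`, in which the edges that are not in a tree have been
replaced by paths with `d` inner vertices. -/
abbrev hostGraph (h J g d : ℕ) : SimpleGraph (HostVertex h J g d) :=
  subdivide ((treeGraph h).induce (copyVertices h J g)) (copySpineAdj h J g) d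

variable {h J g d : ℕ}

theorem wellFormed_of_mem_copyVertices {x : Anchor} (hx : x ∈ copyVertices h J g) :
    x.WellFormed h := by
  rcases hx with rfl | hx
  exacts [trivial, hx.wellFormed]

theorem mem_copyVertices_of_adj {x y : Anchor} (hx : InCopy h J g x) (hxy : (treeGraph h).Adj x y) :
    y ∈ copyVertices h J g := by
  rcases hxy with hxy | hyx
  · cases hxy with
    | root => exact .inl rfl
    | @node e q s a b hs hb =>
      obtain ⟨he, hq, hq', ⟨he0, -⟩ | ⟨-, -, ha⟩⟩ := hx
      · omega
      · refine .inr ⟨he, hq, hq', .inr ⟨by omega, hs, ?_⟩⟩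
        rw [show h - s = h - (s + 1) + 1 by omega, pow_succ] at ha
        omega
  · cases hyx with
    | root => exact hx.elim
    | @node e q s a b hs hb =>
      obtain ⟨he, hq, hq', ⟨he0, -⟩ | ⟨-, -, hb'⟩⟩ := hx
      · omega
      · refine .inr ⟨he, hq, hq', .inr ⟨by omega, by omega, ?_⟩⟩
        rw [show h - s = h - (s + 1) + 1 by omega, pow_succ]
        omega

theorem FarApart.image_copyVertices {P Q : Set (copyVertices h J g)}
    (hPQ : FarApart ((treeGraph h).induce (copyVertices h J g)) P Q) :
    FarApart (treeGraph h) (Subtype.val '' P) (Subtype.val '' Q) := by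
  rintro _ ⟨x, hx, rfl⟩ _ ⟨y, hy, rfl⟩
  obtain ⟨hne, hadj, hcommon⟩ := hPQ x hx y hy
  have hne' : x.1 ≠ y.1 := fun hxy => hne (Subtype.ext hxy)
  refine ⟨hne', hadj, fun z hxz hyz => ?_⟩
  have hz : z ∈ copyVertices h J g := by
    rcases x.2 with hxr | hxc
    · rcases y.2 with hyr | hyc
      · exact absurd (hxr.trans hyr.symm) hne'
      · exact mem_copyVertices_of_adj hyc hyz
    · exact mem_copyVertices_of_adj hxc hxz
  exact hcommon ⟨z, hz⟩ hxz hyz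

theorem ReachableIn.image_val {V : Type*} {G : SimpleGraph V} {s : Set V} {P : Set s} {x y : s}
    (hxy : ReachableIn (G.induce s) P x y) : ReachableIn G (Subtype.val '' P) x y :=
  hxy.mem_of_closed {z | ReachableIn G (Subtype.val '' P) x z}
    (ReachableIn.refl ⟨x, hxy.left_mem, rfl⟩) fun _ z hu _ hz huz =>
      ReachableIn.step hu huz ⟨z, hz, rfl⟩

theorem farLinked_range_of_fatModel {k : ℕ} (r : Fin k)
    (fm : CGT.FatModel (hostGraph h J g d) (CGT.gridGraph k k) 3) {x : Fin k → copyVertices h J g}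
    (hx : ∀ c, .inl (x c) ∈ fm.branch (r, c)) (hinj : Function.Injective x) :
    FarLinked h (Set.range fun c => (x c).1) := by
  intro l A hA B hB hAl hBl
  have hinj' : Function.Injective fun c => (x c).1 := Subtype.val_injective.comp hinj
  have hpre : ∀ S ⊆ Set.range fun c => (x c).1, S.encard = l →
      ((fun c => (x c).1) ⁻¹' S).encard = l := fun S hS hSl => by
    rw [← hSl, ← hinj'.encard_image, Set.image_preimage_eq_of_subset hS]
  have hlk : l ≤ k := by
    have := Set.encard_le_encard (Set.subset_univ ((fun c => (x c).1) ⁻¹' A))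
    simpa [hpre A hA hAl] using this
  obtain ⟨P, u, v, hdisj, hP⟩ := linkage_gridGraph r hlk (hpre A hA hAl).ge (hpre B hB hBl).ge
  refine ⟨fun i => Subtype.val '' (Sum.inl ⁻¹' realize fm (P i)), ?_, fun i j hij => ?_,
    fun i => ?_⟩
  · rintro i _ ⟨y, -, rfl⟩
    exact wellFormed_of_mem_copyVertices y.2
  · exact (FarApart.of_three_le_edist fun a ha b hb =>
      le_edist_of_mem_realize fm (hdisj hij) ha hb).of_subdivide.image_copyVertices
  · obtain ⟨⟨hur, huA⟩, ⟨hvr, hvB⟩, huv⟩ := hP i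
    have hu : .inl (x (u i).2) ∈ fm.branch (u i) := by simpa [← hur] using hx (u i).2
    have hv : .inl (x (v i).2) ∈ fm.branch (v i) := by simpa [← hvr] using hx (v i).2
    refine ⟨_, huA, _, hvB, ((huv.realize fm hu hv).of_subdivide
      (G := (patternGraph h).induce (copyVertices h J g)) ?_ ?_).image_val⟩
    · exact fun _ _ hab => .inr (.inr hab)
    · exact fun _ _ hab => .inl hab

theorem not_isFatMinor_gridGraph_hostGraph {k : ℕ} (hk : 59 ≤ k) :
    ¬ CGT.IsFatMinor (hostGraph h J g d) (CGT.gridGraph k k) 3 := by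
  rintro ⟨fm⟩
  have hanchor : ∀ c, ∃ x, .inl x ∈ fm.branch (⟨1, by omega⟩, c) := fun c => by
    obtain ⟨y, hy, hinj⟩ := exists_three_gridGraph_neighbors (a := k) (r := ⟨1, by omega⟩)
      one_pos (by simp only; omega) (by omega) c
    exact exists_inl_mem_branch fm (by norm_num) hy hinj
  choose x hx using hanchor
  have hinj : Function.Injective x := by
    intro c c' heq
    by_contra hne
    exact Set.disjoint_left.1 (fm.branch_disjoint (by simpa using hne)) (hx c) (heq ▸ hx c')
  have hle := (farLinked_range_of_fatModel _ fm hx hinj).encard_le (J := J) (g := g)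
    (Set.forall_mem_range.2 fun c => (x c).2)
  have hcard := (Subtype.val_injective.comp hinj).encard_range.trans hle
  rw [ENat.card_eq_coe_fintype_card, Fintype.card_fin] at hcard
  have : k ≤ 58 := by exact_mod_cast hcard
  omega

end Host

/-! ### Layouts of the pattern in an arbitrary graph -/

theorem InCopy.of_subcopy {h J q t : ℕ} {x : Anchor} (hx : InCopy h J (q * NN h + t) x)
    (ht : t < NN h) : InCopy h (J + 1) q x := by
  have hlower (n : ℕ) : q * NN h ^ (n + 1) ≤ (q * NN h + t) * NN h ^ n := by
    rw [pow_succ', ← mul_assoc]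
    exact Nat.mul_le_mul_right _ (Nat.le_add_right _ _)
  have hupper (n : ℕ) : (q * NN h + t + 1) * NN h ^ n ≤ (q + 1) * NN h ^ (n + 1) := by
    rw [pow_succ', ← mul_assoc, Nat.add_mul q]
    exact Nat.mul_le_mul_right _ (by omega)
  cases x with
  | root => exact hx.elim
  | rail e p =>
    obtain ⟨he, hp, hp'⟩ := hx
    refine ⟨by omega, ?_, ?_⟩ <;> rw [show J + 1 - e = J - e + 1 by omega]
    exacts [(hlower _).trans hp, hp'.trans (hupper _)]
  | node e p s a =>
    obtain ⟨he, hp, hp', hidx⟩ := hx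
    refine ⟨by omega, ?_, ?_, hidx⟩ <;> rw [show J + 1 - e = J - e + 1 by omega]
    exacts [(hlower _).trans hp, hp'.trans (hupper _)]

/-- `v` is a rail vertex of the `g`-th copy of level `J`. -/
def IsCopyRail (h J g : ℕ) (v : Anchor) : Prop := (∃ e p, v = .rail e p) ∧ InCopy h J g v

/-- In the `g`-th copy of level `J`, the leaf `l` is joined to the rail vertex `v`. -/
def IsCopySpine (h J g : ℕ) (l v : Anchor) : Prop := SpineAdj h l v ∧ InCopy h J g l

/-- `l` and `l'` are leaves of the same gadget with a common ancestor of height `κ`. -/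
def SameBlock (κ : ℕ) (l l' : Anchor) : Prop :=
  ∃ e q k k', l = .node e q 0 k ∧ l' = .node e q 0 k' ∧ k / 2 ^ κ = k' / 2 ^ κ

/-- The element of level `e` of the `g`-th zone of level `J`. -/
def zoneAnchor (h J g e : ℕ) : Anchor := .rail e (g * NN h ^ (J - e))

/-- An assignment of vertices to the rail vertices and the leaves of the pattern, and of vertex sets
to the edges joining them. -/
structure Layout (V : Type*) where
  rail : Anchor → V
  hub : Anchor → V
  spine : Anchor → Anchor → Set V

/-- The layout represents the `g`-th copy of level `J` in `G`: distinct rail vertices are assigned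
distinct vertices, and spines are connected sets that contain only one rail vertex and meet outside
the rails only if their leaves have a common ancestor of height `κ`. -/
structure Layout.IsShadow {V : Type*} (D : Layout V) (G : SimpleGraph V) (h J g κ : ℕ) : Prop where
  rail_inj : ∀ ⦃v v'⦄, IsCopyRail h J g v → IsCopyRail h J g v' → D.rail v = D.rail v' → v = v'
  hub_ne_rail : ∀ ⦃l v v'⦄, IsCopySpine h J g l v → IsCopyRail h J g v' → D.hub l ≠ D.rail v'
  reach : ∀ ⦃l v⦄, IsCopySpine h J g l v → ∀ x ∈ D.spine l v,
    ReachableIn G (D.spine l v) (D.hub l) x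
  rail_mem : ∀ ⦃l v⦄, IsCopySpine h J g l v → D.rail v ∈ D.spine l v
  eq_of_rail_mem : ∀ ⦃l v v'⦄, IsCopySpine h J g l v → IsCopyRail h J g v' →
    D.rail v' ∈ D.spine l v → v' = v
  sameBlock : ∀ ⦃l v l' v' x⦄, IsCopySpine h J g l v → IsCopySpine h J g l' v' →
    x ∈ D.spine l v → x ∈ D.spine l' v' → x ≠ D.rail v → SameBlock κ l l'

/-- The vertices used by the layout for the `g`-th copy of level `J`. -/
def Layout.region {V : Type*} (D : Layout V) (h J g : ℕ) : Set V :=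
  {x | (∃ v, IsCopyRail h J g v ∧ x = D.rail v) ∨ ∃ l v, IsCopySpine h J g l v ∧ x ∈ D.spine l v}

section Layout

variable {V : Type*} {D : Layout V} {G : SimpleGraph V} {h J g κ q t : ℕ} {l v : Anchor} {x : V}

theorem isCopyRail_zoneAnchor {e : ℕ} (he : e ≤ J) : IsCopyRail h J g (zoneAnchor h J g e) :=
  ⟨⟨_, _, rfl⟩, InZone.inCopy ⟨e, he, rfl⟩⟩

theorem isCopyRail_zoneAnchor_succ {e : ℕ} (he : e ≤ J) :
    IsCopyRail h J g (zoneAnchor h J (g + 1) e) :=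
  ⟨⟨_, _, rfl⟩, InZone.inCopy_of_succ ⟨e, he, rfl⟩⟩

theorem zoneAnchor_succ {e : ℕ} (he : e ≤ J) :
    zoneAnchor h (J + 1) g e = zoneAnchor h J (g * NN h) e := by
  rw [zoneAnchor, zoneAnchor, show J + 1 - e = J - e + 1 by omega, pow_succ', mul_assoc]

theorem IsCopySpine.isCopyRail (hlv : IsCopySpine h J g l v) : IsCopyRail h J g v := by
  refine ⟨?_, hlv.2.of_spineAdj hlv.1⟩
  cases hlv.1 <;> exact ⟨_, _, rfl⟩

theorem IsCopyRail.of_subcopy (hv : IsCopyRail h J (q * NN h + t) v) (ht : t < NN h) :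
    IsCopyRail h (J + 1) q v :=
  ⟨hv.1, hv.2.of_subcopy ht⟩

theorem IsCopySpine.of_subcopy (hlv : IsCopySpine h J (q * NN h + t) l v) (ht : t < NN h) :
    IsCopySpine h (J + 1) q l v :=
  ⟨hlv.1, hlv.2.of_subcopy ht⟩

theorem inCopy_leaf {k : ℕ} (hh : 0 < h) (hk : k < 2 ^ h) :
    InCopy h (J + 1) q (.node (J + 1) q 0 k) :=
  ⟨le_rfl, by simp, by simp, .inr ⟨by omega, hh, hk⟩⟩

namespace Layout

theorem IsShadow.of_subcopy (hD : D.IsShadow G h (J + 1) q κ) (ht : t < NN h) :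
    D.IsShadow G h J (q * NN h + t) κ where
  rail_inj _ _ hv hv' := hD.rail_inj (hv.of_subcopy ht) (hv'.of_subcopy ht)
  hub_ne_rail _ _ _ hl hv := hD.hub_ne_rail (hl.of_subcopy ht) (hv.of_subcopy ht)
  reach _ _ hl := hD.reach (hl.of_subcopy ht)
  rail_mem _ _ hl := hD.rail_mem (hl.of_subcopy ht)
  eq_of_rail_mem _ _ _ hl hv := hD.eq_of_rail_mem (hl.of_subcopy ht) (hv.of_subcopy ht)
  sameBlock _ _ _ _ _ hl hl' := hD.sameBlock (hl.of_subcopy ht) (hl'.of_subcopy ht)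

theorem region_subset_of_subcopy (ht : t < NN h) :
    D.region h J (q * NN h + t) ⊆ D.region h (J + 1) q := by
  rintro x (⟨v, hv, hx⟩ | ⟨l, v, hlv, hx⟩)
  exacts [.inl ⟨v, hv.of_subcopy ht, hx⟩, .inr ⟨l, v, hlv.of_subcopy ht, hx⟩]

theorem exists_rail_or_spine_of_mem_region (hx : x ∈ D.region h J g) :
    (∃ v, IsCopyRail h J g v ∧ x = D.rail v) ∨
      ∃ l v, IsCopySpine h J g l v ∧ x ∈ D.spine l v ∧ x ≠ D.rail v := by
  rcases hx with hx | ⟨l, v, hlv, hx⟩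
  · exact .inl hx
  · by_cases hxv : x = D.rail v
    exacts [.inl ⟨v, hlv.isCopyRail, hxv⟩, .inr ⟨l, v, hlv, hx, hxv⟩]

variable (hD : D.IsShadow G h (J + 1) q κ)
include hD

theorem IsShadow.isCopyRail_of_rail_mem_region (ht : t < NN h) (hv : IsCopyRail h (J + 1) q v)
    (hx : D.rail v ∈ D.region h J (q * NN h + t)) : IsCopyRail h J (q * NN h + t) v := by
  rcases hx with ⟨w, hw, hvw⟩ | ⟨l, w, hlw, hx⟩
  · rwa [hD.rail_inj hv (hw.of_subcopy ht) hvw]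
  · rw [hD.eq_of_rail_mem (hlw.of_subcopy ht) hv hx]
    exact hlw.isCopyRail

theorem IsShadow.exists_rail_of_mem_region {t' : ℕ} (ht : t < NN h) (ht' : t' < NN h) (hne : t ≠ t')
    (hx : x ∈ D.region h J (q * NN h + t)) (hx' : x ∈ D.region h J (q * NN h + t')) :
    ∃ v, IsCopyRail h J (q * NN h + t) v ∧ IsCopyRail h J (q * NN h + t') v ∧ x = D.rail v := by
  rcases exists_rail_or_spine_of_mem_region hx with ⟨v, hv, rfl⟩ | ⟨l, v, hlv, hxl, hxv⟩
  · exact ⟨v, hv, hD.isCopyRail_of_rail_mem_region ht' (hv.of_subcopy ht) hx', rfl⟩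
  rcases hx' with ⟨v', hv', rfl⟩ | ⟨l', v', hlv', hxl'⟩
  · exact ⟨v', hD.isCopyRail_of_rail_mem_region ht (hv'.of_subcopy ht') hx, hv', rfl⟩
  obtain ⟨e, p, k, k', rfl, rfl, -⟩ :=
    hD.sameBlock (hlv.of_subcopy ht) (hlv'.of_subcopy ht') hxl hxl' hxv
  have hlt' : InCopy h J (q * NN h + t') (.node e p 0 k) :=
    ⟨hlv'.2.1, hlv'.2.2.1, hlv'.2.2.2.1, hlv.2.2.2.2⟩
  obtain ⟨τ, ⟨_, _, hrail⟩, -⟩ := hlv.2.exists_inZone_of_ne hlt' (by omega)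
  cases hrail

theorem IsShadow.eq_rail_of_mem_spine_of_mem_region {k : ℕ} (ht : t < NN h)
    (hlv : IsCopySpine h (J + 1) q (.node (J + 1) q 0 k) v)
    (hx : x ∈ D.spine (.node (J + 1) q 0 k) v) (hx' : x ∈ D.region h J (q * NN h + t)) :
    x = D.rail v ∧ v.level ≤ J := by
  rcases exists_rail_or_spine_of_mem_region hx' with ⟨w, hw, rfl⟩ | ⟨l', v', hlv', hxl', hxv'⟩
  · obtain rfl := hD.eq_of_rail_mem hlv (hw.of_subcopy ht) hx
    exact ⟨rfl, hw.2.level_le⟩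
  · obtain ⟨e, p, k', k'', rfl, heq, -⟩ :=
      hD.sameBlock (hlv'.of_subcopy ht) hlv hxl' hx hxv'
    cases heq
    exact absurd hlv'.2.1 (by omega)

end Layout

end Layout

/-! ### Rail systems -/

/-- Disjoint connected sets inside the `g`-th copy of level `J` which join the `g`-th zone to the
next one; the set `path e` joins the elements of levels `e` and `exitLevel e`. -/
structure Layout.IsRailSystem {V : Type*} (D : Layout V) (G : SimpleGraph V) (h J g : ℕ)
    (path : Fin (J + 1) → Set V) (exitLevel : Fin (J + 1) → Fin (J + 1)) : Prop where
  subset_region : ∀ e, path e ⊆ D.region h J g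
  reach : ∀ e, ∀ x ∈ path e, ReachableIn G (path e) (D.rail (zoneAnchor h J g e)) x
  exitLevel_mem : ∀ e, D.rail (zoneAnchor h J (g + 1) (exitLevel e)) ∈ path e
  disjoint : Pairwise (Function.onFun Disjoint path)

/-- A rail system in each of the subcopies of level `J` of the `q`-th copy of level `J + 1`. -/
structure Layout.RailChain {V : Type*} (D : Layout V) (G : SimpleGraph V) (h J q : ℕ) where
  path : ℕ → Fin (J + 1) → Set V
  exitLevel : ℕ → Fin (J + 1) → Fin (J + 1)
  isRailSystem : ∀ t < NN h, D.IsRailSystem G h J (q * NN h + t) (path t) (exitLevel t)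

namespace Layout.RailChain

variable {V : Type*} {D : Layout V} {G : SimpleGraph V} {h J q κ : ℕ} (C : D.RailChain G h J q)

/-- The level at which the rail that starts at level `e` enters the `t`-th subcopy. -/
def track : ℕ → Fin (J + 1) → Fin (J + 1)
  | 0, e => e
  | t + 1, e => C.exitLevel t (track t e)

/-- The part in the `t`-th subcopy of the rail that starts at level `e`. -/
def segment (t : ℕ) (e : Fin (J + 1)) : Set V := C.path t (C.track t e)

/-- The rail vertex at which the rail that starts at level `e` enters the `t`-th subcopy. -/
def station (t : ℕ) (e : Fin (J + 1)) : Anchor := zoneAnchor h J (q * NN h + t) (C.track t e)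

/-- The concatenation of the paths of all subcopies, starting at level `e`. -/
def rail (e : Fin (J + 1)) : Set V := {x | ∃ t < NN h, x ∈ C.segment t e}

variable {t t' : ℕ} {e e' : Fin (J + 1)} {x : V}

theorem segment_subset_rail (ht : t < NN h) : C.segment t e ⊆ C.rail e := fun _ hx => ⟨t, ht, hx⟩

theorem rail_subset_region : C.rail e ⊆ D.region h (J + 1) q := by
  rintro x ⟨t, ht, hx⟩
  exact region_subset_of_subcopy ht ((C.isRailSystem t ht).subset_region _ hx)

theorem reach_segment (ht : t < NN h) (hx : x ∈ C.segment t e) :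
    ReachableIn G (C.segment t e) (D.rail (C.station t e)) x :=
  (C.isRailSystem t ht).reach _ x hx

theorem station_succ_mem_segment (ht : t < NN h) : D.rail (C.station (t + 1) e) ∈ C.segment t e :=
  (C.isRailSystem t ht).exitLevel_mem _

theorem station_mem_segment (ht : t < NN h) : D.rail (C.station t e) ∈ C.segment t e :=
  (C.reach_segment ht (C.station_succ_mem_segment ht)).left_mem

theorem station_mem_rail (ht : t ≤ NN h) : D.rail (C.station t e) ∈ C.rail e := by
  have := NN_pos h
  cases t with
  | zero => exact ⟨0, this, C.station_mem_segment this⟩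
  | succ t => exact ⟨t, ht, C.station_succ_mem_segment ht⟩

theorem station_zero : C.station 0 e = zoneAnchor h (J + 1) q e :=
  (zoneAnchor_succ (Nat.le_of_lt_succ e.2)).symm

theorem station_last : C.station (NN h) e = zoneAnchor h (J + 1) (q + 1) (C.track (NN h) e) := by
  rw [station, zoneAnchor_succ (Nat.le_of_lt_succ (C.track _ e).2), Nat.add_mul, Nat.one_mul]

theorem isCopyRail_station (ht : t ≤ NN h) : IsCopyRail h (J + 1) q (C.station t e) := by
  have := NN_pos h
  have hlevel := Nat.le_of_lt_succ (C.track t e).2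
  cases t with
  | zero => exact (isCopyRail_zoneAnchor hlevel).of_subcopy this
  | succ t => exact (isCopyRail_zoneAnchor_succ hlevel).of_subcopy ht

theorem isCopySpine_station {k : ℕ} (hh : 0 < h) (hkt : LeafZone h k t) :
    IsCopySpine h (J + 1) q (.node (J + 1) q 0 k) (C.station t e) :=
  ⟨.below hkt (Nat.le_of_lt_succ (C.track t e).2) rfl, inCopy_leaf hh hkt.1⟩

theorem track_injective (ht : t ≤ NN h) : Function.Injective (C.track t) := by
  induction t with
  | zero => exact fun _ _ => id
  | succ t ih =>
    intro e e' heq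
    refine ih (by omega) (by_contra fun hne => ?_)
    have hstation : C.station (t + 1) e = C.station (t + 1) e' := by rw [station, station, heq]
    exact Set.disjoint_left.1 ((C.isRailSystem t ht).disjoint hne) (C.station_succ_mem_segment ht)
      (hstation ▸ C.station_succ_mem_segment ht)

theorem disjoint_segment (ht : t < NN h) (hne : e ≠ e') :
    Disjoint (C.segment t e) (C.segment t e') :=
  (C.isRailSystem t ht).disjoint fun heq => hne (C.track_injective ht.le heq)

theorem reach_station {W : Set V} {s s' : ℕ} (hs : D.rail (C.station s e) ∈ W) (hss' : s ≤ s')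
    (hs' : s' ≤ NN h) (hW : ∀ t, s ≤ t → t < s' → C.segment t e ⊆ W) :
    ReachableIn G W (D.rail (C.station s e)) (D.rail (C.station s' e)) := by
  induction s', hss' using Nat.le_induction with
  | base => exact .refl hs
  | succ t hst ih =>
    exact (ih (by omega) fun t' hst' htt' => hW t' hst' (by omega)).trans
      ((C.reach_segment hs' (C.station_succ_mem_segment hs')).mono (hW t hst (by omega)))

theorem reach_rail (hx : x ∈ C.rail e) : ReachableIn G (C.rail e) (D.rail (C.station 0 e)) x := by
  obtain ⟨t, ht, hx⟩ := hx
  exact (C.reach_station (C.station_mem_rail (Nat.zero_le _)) (Nat.zero_le t) ht.le fun t' _ htt' =>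
    C.segment_subset_rail (by omega)).trans
      ((C.reach_segment ht hx).mono (C.segment_subset_rail ht))

section Shadow

variable (hD : D.IsShadow G h (J + 1) q κ)
include hD

theorem eq_station_of_mem_segments (hlt : t < t') (ht' : t' < NN h) (hx : x ∈ C.segment t e)
    (hx' : x ∈ C.segment t' e') : e = e' ∧ t' = t + 1 ∧ x = D.rail (C.station (t + 1) e) := by
  have ht : t < NN h := by omega
  obtain ⟨v, hv, hv', rfl⟩ := hD.exists_rail_of_mem_region ht ht' hlt.ne
    ((C.isRailSystem t ht).subset_region _ hx) ((C.isRailSystem t' ht').subset_region _ hx')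
  obtain ⟨τ, ⟨ε, hε, rfl⟩, hτ, hτ'⟩ := hv.2.exists_inZone_of_ne hv'.2 (by omega)
  obtain rfl : t' = t + 1 := by omega
  obtain rfl : τ = q * NN h + (t + 1) := by omega
  have hsys := C.isRailSystem (t + 1) ht'
  have htrack : C.track (t + 1) e' = ⟨ε, by omega⟩ := by_contra fun hne =>
    Set.disjoint_left.1 (hsys.disjoint hne) hx'
      (hsys.reach ⟨ε, by omega⟩ _ (hsys.exitLevel_mem _)).left_mem
  have hstation : C.station (t + 1) e' = .rail ε ((q * NN h + (t + 1)) * NN h ^ (J - ε)) := by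
    rw [station, htrack, zoneAnchor]
  rw [← hstation] at hx ⊢
  obtain rfl : e = e' := by_contra fun hne =>
    Set.disjoint_left.1 (C.disjoint_segment ht hne) hx (C.station_succ_mem_segment ht)
  exact ⟨rfl, rfl, rfl⟩

theorem pairwise_disjoint_rail : Pairwise (Function.onFun Disjoint C.rail) := by
  intro e e' hne
  refine Set.disjoint_left.2 ?_
  rintro x ⟨t, ht, hx⟩ ⟨t', ht', hx'⟩
  rcases lt_trichotomy t t' with hlt | rfl | hlt
  · exact hne (C.eq_station_of_mem_segments hD hlt ht' hx hx').1
  · exact Set.disjoint_left.1 (C.disjoint_segment ht hne) hx hx'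
  · exact hne (C.eq_station_of_mem_segments hD hlt ht hx' hx).1.symm

theorem rail_station_ne (ht' : t' ≤ NN h) (hlt : t < t') :
    D.rail (C.station t e) ≠ D.rail (C.station t' e) := by
  intro heq
  have heq := hD.rail_inj (C.isCopyRail_station (by omega)) (C.isCopyRail_station ht') heq
  simp only [station, zoneAnchor, Anchor.rail.injEq] at heq
  obtain ⟨hlevel, hpos⟩ := heq
  rw [hlevel] at hpos
  have := Nat.eq_of_mul_eq_mul_right (NN_pow_pos h _) hpos
  omega

theorem eq_rail_of_mem_spine_of_mem_rail {k : ℕ} {v : Anchor}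
    (hlv : IsCopySpine h (J + 1) q (.node (J + 1) q 0 k) v)
    (hx : x ∈ D.spine (.node (J + 1) q 0 k) v) (hx' : x ∈ C.rail e) :
    x = D.rail v ∧ v.level ≤ J := by
  obtain ⟨t, ht, hx'⟩ := hx'
  exact hD.eq_rail_of_mem_spine_of_mem_region ht hlv hx ((C.isRailSystem t ht).subset_region _ hx')

end Shadow

end Layout.RailChain

/-! ### Rail systems at the next level -/

theorem subset_iUnion_and_subsingleton_of_card_le {ι V : Type*} [Fintype ι] {R : ι → Set V}
    {Z : Finset V} (hR : Pairwise (Function.onFun Disjoint R)) (hcard : Z.card ≤ Fintype.card ι)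
    (hmeet : ∀ i, ∃ z ∈ Z, z ∈ R i) :
    (Z : Set V) ⊆ ⋃ i, R i ∧ ∀ i, (↑Z ∩ R i).Subsingleton := by
  classical
  choose f hfZ hfR using hmeet
  have hinj : Function.Injective f := fun i j hij => by_contra fun hne =>
    Set.disjoint_left.1 (hR hne) (hfR i) (hij ▸ hfR j)
  have himage : Finset.univ.image f = Z := by
    refine Finset.eq_of_subset_of_card_le (Finset.image_subset_iff.2 fun i _ => hfZ i) ?_
    rwa [Finset.card_image_of_injective _ hinj, Finset.card_univ]
  have hsurj : ∀ z ∈ Z, ∃ i, f i = z := by simp [← himage]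
  have huniq : ∀ i, ∀ z ∈ (Z : Set V) ∩ R i, z = f i := by
    rintro i z ⟨hz, hzi⟩
    obtain ⟨j, rfl⟩ := hsurj z hz
    exact congrArg f (by_contra fun hne => Set.disjoint_left.1 (hR hne) (hfR j) hzi)
  refine ⟨fun z hz => ?_, fun i z hz z' hz' => (huniq i z hz).trans (huniq i z' hz').symm⟩
  obtain ⟨i, rfl⟩ := hsurj z hz
  exact Set.mem_iUnion.2 ⟨i, hfR i⟩

theorem exists_disjoint_paths_within {V : Type*} [Finite V] {G : SimpleGraph V} {R : Set V} {k : ℕ}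
    {a b : Fin k → V} (ha : ∀ i, a i ∈ R)
    (hsep : ∀ Z : Finset V, Z.card < k → ∃ i j, ReachableIn G (R \ Z) (a i) (b j)) :
    ∃ (P : Fin k → Set V) (τ : Fin k → Fin k), (∀ i, P i ⊆ R) ∧
      (∀ i, ∀ x ∈ P i, ReachableIn G (P i) (a i) x) ∧ (∀ i, b (τ i) ∈ P i) ∧
      Pairwise (Function.onFun Disjoint P) := by
  let G' := ((⊤ : G.Subgraph).induce R).spanningCoe
  have hle : G' ≤ G := Subgraph.spanningCoe_le _
  have hsep' : NoSmallSeparator G' (Set.range a) (Set.range b) k := by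
    intro Z hZ
    obtain ⟨i, j, hij⟩ := hsep Z hZ
    refine ⟨_, ⟨i, rfl⟩, _, ⟨j, rfl⟩, hij.mem_of_closed {x | ReachableIn G' (↑Z)ᶜ (a i) x}
      (.refl hij.left_mem.2) fun x y hx hxR hyR hxy => ReachableIn.step hx ?_ hyR.2⟩
    exact ⟨hxR.1, hyR.1, hxy⟩
  obtain ⟨P, u, v, hdisj, hP⟩ := menger hsep'
  choose α hα using fun i => (hP i).1
  choose β hβ using fun i => (hP i).2.1
  have hreach : ∀ i, ReachableIn G' (P i) (a (α i)) (b (β i)) := fun i => by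
    rw [hα, hβ]
    exact (hP i).2.2
  have hinj : Function.Injective α := fun i j hij => by_contra fun hne =>
    Set.disjoint_left.1 (hdisj hne) (hreach i).left_mem (hij ▸ (hreach j).left_mem)
  obtain ⟨σ, hσ⟩ := (Finite.injective_iff_surjective.1 hinj).hasRightInverse
  refine ⟨fun i => {x | ReachableIn G' (P (σ i)) (a i) x}, β ∘ σ, fun i x hx => ?_,
    fun i x hx => (ReachableIn.within_component hx).mono_graph hle, fun i => ?_, fun i j hne => ?_⟩
  · exact ReachableIn.mem_of_closed hx R (ha i) fun _ _ _ _ _ hxy => hxy.2.1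
  · simpa [hσ i] using hreach (σ i)
  · refine Set.disjoint_left.2 fun x hx hx' => ?_
    exact Set.disjoint_left.1 (hdisj (hσ.injective.ne hne)) (ReachableIn.right_mem hx)
      (ReachableIn.right_mem hx')

namespace Layout.RailChain

variable {V : Type*} {D : Layout V} {G : SimpleGraph V} {h J q κ k : ℕ} {Z : Set V} {z : V}
  (C : D.RailChain G h J q)

theorem segment_subset_sdiff {t : ℕ} {e : Fin (J + 1)} (ht : t < NN h)
    (hZ : Disjoint (C.segment t e) Z) : C.segment t e ⊆ D.region h (J + 1) q \ Z :=
  Set.subset_sdiff.2 ⟨(C.segment_subset_rail ht).trans C.rail_subset_region, hZ⟩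

theorem station_mem_sdiff {t : ℕ} {e : Fin (J + 1)} (hZz : Z ∩ C.rail e ⊆ {z}) (ht : t ≤ NN h)
    (hne : z ≠ D.rail (C.station t e)) : D.rail (C.station t e) ∈ D.region h (J + 1) q \ Z :=
  ⟨C.rail_subset_region (C.station_mem_rail ht), fun hmem =>
    hne (hZz ⟨hmem, C.station_mem_rail ht⟩).symm⟩

section Shadow

variable (hD : D.IsShadow G h (J + 1) q κ)
include hD

section Hubs

variable (hh : 0 < h) (hZ : Z ⊆ ⋃ e, C.rail e)
include hh hZ

theorem hub_reach_rail {v : Anchor} (hk : k < 2 ^ h) (hv : SpineAdj h (.node (J + 1) q 0 k) v)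
    (hvZ : v.level ≤ J → D.rail v ∉ Z) :
    ReachableIn G (D.region h (J + 1) q \ Z) (D.hub (.node (J + 1) q 0 k)) (D.rail v) := by
  have hlv : IsCopySpine h (J + 1) q (.node (J + 1) q 0 k) v := ⟨hv, inCopy_leaf hh hk⟩
  refine (hD.reach hlv _ (hD.rail_mem hlv)).mono fun x hx => ⟨.inr ⟨_, _, hlv, hx⟩, fun hxZ => ?_⟩
  obtain ⟨e, hxe⟩ := Set.mem_iUnion.1 (hZ hxZ)
  obtain ⟨rfl, hlevel⟩ := C.eq_rail_of_mem_spine_of_mem_rail hD hlv hx hxe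
  exact hvZ hlevel hxZ

theorem hub_reach_station {t : ℕ} {e : Fin (J + 1)} (hkt : LeafZone h k t)
    (ht : D.rail (C.station t e) ∉ Z) :
    ReachableIn G (D.region h (J + 1) q \ Z) (D.hub (.node (J + 1) q 0 k))
      (D.rail (C.station t e)) :=
  C.hub_reach_rail hD hh hZ hkt.1 (C.isCopySpine_station hh hkt).1 fun _ => ht

theorem hub_reach_hub_succ {e : Fin (J + 1)} (hk : k + 2 ≤ 2 ^ h)
    (hfree : Disjoint (C.segment (2 * k + 1) e) Z) :
    ReachableIn G (D.region h (J + 1) q \ Z) (D.hub (.node (J + 1) q 0 k))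
      (D.hub (.node (J + 1) q 0 (k + 1))) := by
  have ht : 2 * k + 1 < NN h := by have := NN_add_one h; omega
  have hmem := C.station_mem_segment (e := e) ht
  have hmem' := C.station_succ_mem_segment (e := e) ht
  have hleft := C.hub_reach_station hD hh hZ (k := k) ⟨by omega, .inr ⟨rfl, hk⟩⟩
    (Set.disjoint_left.1 hfree hmem')
  have hright := C.hub_reach_station hD hh hZ (k := k + 1) ⟨by omega, .inl (by omega)⟩
    (Set.disjoint_left.1 hfree hmem)
  exact (hleft.trans ((C.reach_segment ht hmem').mono (C.segment_subset_sdiff ht hfree)).symm).trans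
    hright.symm

theorem hub_reach_hub {k' : ℕ} (hkk' : k ≤ k') (hk' : k' < 2 ^ h)
    (hk : D.hub (.node (J + 1) q 0 k) ∈ D.region h (J + 1) q \ Z)
    (hfree : ∀ i, k ≤ i → i < k' → ∃ e, Disjoint (C.segment (2 * i + 1) e) Z) :
    ReachableIn G (D.region h (J + 1) q \ Z) (D.hub (.node (J + 1) q 0 k))
      (D.hub (.node (J + 1) q 0 k')) := by
  induction k', hkk' using Nat.le_induction with
  | base => exact .refl hk
  | succ i hi ih =>
    obtain ⟨e, he⟩ := hfree i hi (by omega)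
    exact (ih (by omega) fun i' hki' hi' => hfree i' hki' (by omega)).trans
      (C.hub_reach_hub_succ hD hh hZ (by omega) he)

theorem hub_zero_reach_zone :
    ReachableIn G (D.region h (J + 1) q \ Z) (D.hub (.node (J + 1) q 0 0))
      (D.rail (zoneAnchor h (J + 1) q (J + 1))) := by
  have hreach := C.hub_reach_rail hD hh hZ (Nat.two_pow_pos h) (.left (J + 1) q)
    fun hlevel => absurd hlevel (by simp [Anchor.level])
  simpa [zoneAnchor] using hreach

theorem hub_last_reach_zone :
    ReachableIn G (D.region h (J + 1) q \ Z) (D.hub (.node (J + 1) q 0 (2 ^ h - 1)))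
      (D.rail (zoneAnchor h (J + 1) (q + 1) (J + 1))) := by
  have hpos := Nat.two_pow_pos h
  have hreach := C.hub_reach_rail hD hh hZ (k := 2 ^ h - 1) (by omega)
    (.right q (by rw [leafCount, if_neg (Nat.succ_ne_zero J)]; omega))
    fun hlevel => absurd hlevel (by simp [Anchor.level])
  simpa [zoneAnchor] using hreach

end Hubs

section Blocked

variable {s : ℕ} {e : Fin (J + 1)} (hs : s < NN h) (hz : z ∈ C.segment s e)
  (hZz : Z ∩ C.rail e ⊆ {z})
include hs hz hZz

theorem disjoint_segment_of_ne {t : ℕ} (ht : t < NN h) (hts : t ≠ s)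
    (hleft : t + 1 = s → z ≠ D.rail (C.station s e))
    (hright : t = s + 1 → z ≠ D.rail (C.station (s + 1) e)) : Disjoint (C.segment t e) Z := by
  refine Set.disjoint_left.2 fun x hx hxZ => ?_
  obtain rfl : x = z := hZz ⟨hxZ, C.segment_subset_rail ht hx⟩
  rcases lt_or_gt_of_ne hts with hlt | hlt
  · obtain ⟨-, rfl, hstation⟩ := C.eq_station_of_mem_segments hD hlt hs hx hz
    exact hleft rfl hstation
  · obtain ⟨-, rfl, hstation⟩ := C.eq_station_of_mem_segments hD hlt ht hz hx
    exact hright rfl hstation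

theorem station_zero_reach_of_ne (hne : z ≠ D.rail (C.station s e)) :
    ReachableIn G (D.region h (J + 1) q \ Z) (D.rail (C.station 0 e)) (D.rail (C.station s e)) := by
  have hfree : ∀ t, 0 ≤ t → t < s → C.segment t e ⊆ D.region h (J + 1) q \ Z := fun t _ hts =>
    C.segment_subset_sdiff (by omega) <| C.disjoint_segment_of_ne hD hs hz hZz (by omega)
      (by omega) (fun _ => hne) (by omega)
  refine C.reach_station ?_ (Nat.zero_le _) hs.le hfree
  rcases s.eq_zero_or_pos with rfl | hpos
  · exact C.station_mem_sdiff hZz hs.le hne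
  · exact hfree 0 le_rfl hpos (C.station_mem_segment (by omega))

theorem station_succ_reach_of_ne (hne : z ≠ D.rail (C.station (s + 1) e)) :
    ReachableIn G (D.region h (J + 1) q \ Z) (D.rail (C.station (s + 1) e))
      (D.rail (C.station (NN h) e)) :=
  C.reach_station (C.station_mem_sdiff hZz hs hne) hs le_rfl fun t hst ht =>
    C.segment_subset_sdiff ht <| C.disjoint_segment_of_ne hD hs hz hZz ht (by omega) (by omega)
      fun _ => hne

end Blocked

section NoSeparator

variable (hh : 0 < h)
include C hh

theorem exists_reach_of_blocked (hZ : Z ⊆ ⋃ e, C.rail e) (hk : k + 2 ≤ 2 ^ h)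
    (hz : z ∈ C.segment (2 * k + 1) 0) (hZz : Z ∩ C.rail 0 ⊆ {z}) :
    ∃ ε ε' : Fin (J + 2), ReachableIn G (D.region h (J + 1) q \ Z)
      (D.rail (zoneAnchor h (J + 1) q ε)) (D.rail (zoneAnchor h (J + 1) (q + 1) ε')) := by
  have hN := NN_add_one h
  have hs : 2 * k + 1 < NN h := by omega
  have hfree : ∀ i, i + 2 ≤ 2 ^ h → i ≠ k → ∃ e, Disjoint (C.segment (2 * i + 1) e) Z :=
    fun i hi hik => ⟨0, C.disjoint_segment_of_ne hD hs hz hZz (by omega) (by omega) (by omega)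
      (by omega)⟩
  have hleft := C.hub_zero_reach_zone hD hh hZ
  have hright := C.hub_last_reach_zone hD hh hZ
  by_cases hstation : z = D.rail (C.station (2 * k + 2) 0)
  · have hne : z ≠ D.rail (C.station (2 * k + 1) 0) := fun heq =>
      C.rail_station_ne hD (by omega) (Nat.lt_succ_self (2 * k + 1)) (heq.symm.trans hstation)
    have hhub := C.hub_reach_station hD hh hZ (k := k + 1) ⟨by omega, .inl (by omega)⟩
      (C.station_mem_sdiff hZz hs.le hne).2
    refine ⟨0, Fin.last _, ?_⟩
    have hstart := C.station_zero_reach_of_ne hD hs hz hZz hne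
    rw [C.station_zero] at hstart
    exact ((hstart.trans hhub.symm).trans (C.hub_reach_hub hD hh hZ (by omega) (by omega)
      hhub.left_mem fun i hki hi => hfree i (by omega) (by omega))).trans hright
  · have hhub := C.hub_reach_station hD hh hZ (k := k) ⟨by omega, .inr ⟨rfl, hk⟩⟩
      (C.station_mem_sdiff hZz hs hstation).2
    refine ⟨Fin.last _, (C.track (NN h) 0).castSucc, ?_⟩
    have hend := C.station_succ_reach_of_ne hD hs hz hZz hstation
    rw [C.station_last] at hend
    exact ((hleft.symm.trans (C.hub_reach_hub hD hh hZ (by omega) (by omega)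
      hleft.left_mem fun i _ hi => hfree i (by omega) (by omega))).trans hhub).trans hend

theorem exists_reach_of_card_lt {Z : Finset V} (hcard : Z.card < J + 2) :
    ∃ ε ε' : Fin (J + 2), ReachableIn G (D.region h (J + 1) q \ Z)
      (D.rail (zoneAnchor h (J + 1) q ε)) (D.rail (zoneAnchor h (J + 1) (q + 1) ε')) := by
  by_cases hrail : ∃ e, ∀ z ∈ Z, z ∉ C.rail e
  · obtain ⟨e, he⟩ := hrail
    refine ⟨e.castSucc, (C.track (NN h) e).castSucc, ?_⟩
    have hreach := C.reach_rail (C.station_mem_rail (e := e) le_rfl)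
    rw [C.station_zero, C.station_last] at hreach
    exact hreach.mono fun x hx => ⟨C.rail_subset_region hx, fun hxZ => he x hxZ hx⟩
  push Not at hrail
  obtain ⟨hZ, hsub⟩ := subset_iUnion_and_subsingleton_of_card_le (C.pairwise_disjoint_rail hD)
    (by rw [Fintype.card_fin]; omega) hrail
  by_cases hfree : ∀ i, i + 2 ≤ 2 ^ h → ∃ e, Disjoint (C.segment (2 * i + 1) e) (Z : Set V)
  · have hleft := C.hub_zero_reach_zone hD hh hZ
    exact ⟨Fin.last _, Fin.last _, (hleft.symm.trans (C.hub_reach_hub hD hh hZ (Nat.zero_le _)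
      (by have := Nat.two_pow_pos h; omega) hleft.left_mem fun i _ hi => hfree i (by omega))).trans
      (C.hub_last_reach_zone hD hh hZ)⟩
  · push Not at hfree
    obtain ⟨k, hk, hblocked⟩ := hfree
    obtain ⟨z, hz, hzZ⟩ := Set.not_disjoint_iff.1 (hblocked 0)
    have hs : 2 * k + 1 < NN h := by have := NN_add_one h; omega
    exact C.exists_reach_of_blocked hD hh hZ hk hz fun x hx =>
      hsub 0 hx ⟨hzZ, C.segment_subset_rail hs hz⟩

end NoSeparator

end Shadow

end Layout.RailChain


namespace Layout

variable {V : Type*} {D : Layout V} {G : SimpleGraph V} {h J q κ : ℕ}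

theorem RailChain.exists_isRailSystem [Finite V] (C : D.RailChain G h J q) (hh : 0 < h)
    (hD : D.IsShadow G h (J + 1) q κ) :
    ∃ path exitLevel, D.IsRailSystem G h (J + 1) q path exitLevel := by
  obtain ⟨path, exitLevel, hsub, hreach, hexitLevel, hdisj⟩ := exists_disjoint_paths_within
    (a := fun e : Fin (J + 2) => D.rail (zoneAnchor h (J + 1) q e))
    (b := fun e : Fin (J + 2) => D.rail (zoneAnchor h (J + 1) (q + 1) e))
    (fun e => .inl ⟨_, isCopyRail_zoneAnchor (Nat.le_of_lt_succ e.2), rfl⟩)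
    fun Z hZ => C.exists_reach_of_card_lt hD hh hZ
  exact ⟨path, exitLevel, hsub, hreach, hexitLevel, hdisj⟩

theorem IsShadow.exists_isRailSystem_zero (hD : D.IsShadow G h 0 q κ) :
    ∃ path exitLevel, D.IsRailSystem G h 0 q path exitLevel := by
  have hcopy : InCopy h 0 q (.node 0 q 0 0) := ⟨le_rfl, by simp, by simp, .inl ⟨rfl, rfl, rfl⟩⟩
  have hleft : IsCopySpine h 0 q (.node 0 q 0 0) (.rail 0 q) := ⟨.left 0 q, hcopy⟩
  have hright : IsCopySpine h 0 q (.node 0 q 0 0) (.rail 0 (q + 1)) :=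
    ⟨.right q (by simp [leafCount]), hcopy⟩
  have hzone (g : ℕ) (e : Fin 1) : zoneAnchor h 0 g e = .rail 0 g := by simp [zoneAnchor]
  refine ⟨fun _ => D.spine (.node 0 q 0 0) (.rail 0 q) ∪ D.spine (.node 0 q 0 0) (.rail 0 (q + 1)),
    id, fun _ => ?_, fun e => ?_, fun e => ?_,
    fun e e' hne => absurd (Fin.subsingleton_one.elim e e') hne⟩
  · exact Set.union_subset (fun x hx => .inr ⟨_, _, hleft, hx⟩) fun x hx => .inr ⟨_, _, hright, hx⟩
  · have hstart := ((hD.reach hleft _ (hD.rail_mem hleft)).symm).mono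
      (Set.subset_union_left (t := D.spine (.node 0 q 0 0) (.rail 0 (q + 1))))
    rw [hzone]
    rintro x (hx | hx)
    · exact hstart.trans ((hD.reach hleft x hx).mono Set.subset_union_left)
    · exact hstart.trans ((hD.reach hright x hx).mono Set.subset_union_right)
  · rw [hzone]
    exact .inr (hD.rail_mem hright)

theorem nonempty_railChain
    (hsys : ∀ t < NN h, ∃ path exitLevel, D.IsRailSystem G h J (q * NN h + t) path exitLevel) :
    Nonempty (D.RailChain G h J q) := by
  choose! path exitLevel hpath using hsys
  exact ⟨⟨path, exitLevel, hpath⟩⟩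

theorem IsShadow.exists_isRailSystem [Finite V] (hh : 0 < h) (hD : D.IsShadow G h J q κ) :
    ∃ path exitLevel, D.IsRailSystem G h J q path exitLevel := by
  induction J generalizing q with
  | zero => exact hD.exists_isRailSystem_zero
  | succ J ih =>
    obtain ⟨C⟩ := nonempty_railChain fun t ht => ih (hD.of_subcopy ht)
    exact C.exists_isRailSystem hh hD

end Layout

/-! ### A complete minor from a layout -/

theorem ReachableIn.exists_adj_of_ne {V : Type*} {G : SimpleGraph V} {P : Set V} {a b : V}
    (h : ReachableIn G P a b) (hne : a ≠ b) :
    ∃ x, ReachableIn G (P \ {b}) a x ∧ G.Adj x b := by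
  obtain ⟨x, y, hx, hy, -, hyP, hxy⟩ := h.exists_exit (L := {x | ReachableIn G (P \ {b}) a x})
    (.refl ⟨h.left_mem, hne⟩) fun hb => hb.right_mem.2 rfl
  by_cases hyb : y = b
  · exact ⟨x, hx, hyb ▸ hxy⟩
  · exact absurd (ReachableIn.step hx hxy ⟨hyP, hyb⟩) hy

namespace Layout.RailChain

variable {V : Type*} {D : Layout V} {G : SimpleGraph V} {h J q κ k k' t t' : ℕ}
  (C : D.RailChain G h J q)

/-- The part of the gadget of level `J + 1` which the leaf `k` reaches along the spines towards the
`t`-th zone, without the vertices of that zone. -/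
def hubRegion (k t : ℕ) : Set V :=
  {x | ∃ e, ReachableIn G (D.spine (.node (J + 1) q 0 k) (C.station t e) \ {D.rail (C.station t e)})
    (D.hub (.node (J + 1) q 0 k)) x}

theorem reach_hubRegion {x : V} (hx : x ∈ C.hubRegion k t) :
    ReachableIn G (C.hubRegion k t) (D.hub (.node (J + 1) q 0 k)) x := by
  obtain ⟨e, hx⟩ := hx
  exact hx.within_component.mono fun y hy => ⟨e, hy⟩

variable (hD : D.IsShadow G h (J + 1) q κ) (hh : 0 < h) (hkt : LeafZone h k t)
include hD hh hkt

theorem exists_adj_station (e : Fin (J + 1)) :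
    ∃ x ∈ C.hubRegion k t, G.Adj x (D.rail (C.station t e)) := by
  have hspine := C.isCopySpine_station (e := e) hh hkt
  obtain ⟨x, hx, hadj⟩ := (hD.reach hspine _ (hD.rail_mem hspine)).exists_adj_of_ne
    (hD.hub_ne_rail hspine hspine.isCopyRail)
  exact ⟨x, ⟨e, hx⟩, hadj⟩

theorem hub_mem_hubRegion : D.hub (.node (J + 1) q 0 k) ∈ C.hubRegion k t := by
  obtain ⟨x, hx, -⟩ := C.exists_adj_station hD hh hkt 0
  exact (C.reach_hubRegion hx).left_mem

theorem disjoint_hubRegion_rail (e : Fin (J + 1)) : Disjoint (C.hubRegion k t) (C.rail e) := by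
  refine Set.disjoint_left.2 ?_
  rintro x ⟨e', hx⟩ hxe
  exact hx.right_mem.2
    (C.eq_rail_of_mem_spine_of_mem_rail hD (C.isCopySpine_station hh hkt) hx.right_mem.1 hxe).1

theorem disjoint_hubRegion (hkt' : LeafZone h k' t') (hne : k / 2 ^ κ ≠ k' / 2 ^ κ) :
    Disjoint (C.hubRegion k t) (C.hubRegion k' t') := by
  refine Set.disjoint_left.2 ?_
  rintro x ⟨e, hx⟩ ⟨e', hx'⟩
  obtain ⟨_, _, _, _, heq, heq', hblock⟩ := hD.sameBlock (C.isCopySpine_station hh hkt)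
    (C.isCopySpine_station hh hkt') hx.right_mem.1 hx'.right_mem.1 hx.right_mem.2
  cases heq
  cases heq'
  exact hne hblock

theorem setConn_rail_union_hubRegion (e : Fin (J + 1)) :
    CGT.SetConn G (C.rail e ∪ C.hubRegion k t) := by
  refine ReachableIn.setConn_of_center (.inr (C.hub_mem_hubRegion hD hh hkt)) ?_
  rintro x (hx | hx)
  · obtain ⟨y, hy, hadj⟩ := C.exists_adj_station hD hh hkt e
    have hstation := C.station_mem_rail (e := e) hkt.pos_and_lt.2.le
    exact (((C.reach_hubRegion hy).mono Set.subset_union_right).step hadj (.inl hstation)).trans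
      (((C.reach_rail hstation).symm.trans (C.reach_rail hx)).mono Set.subset_union_left)
  · exact (C.reach_hubRegion hx).mono Set.subset_union_right

end Layout.RailChain

theorem mul_two_pow_add_two_le {n κ h i : ℕ} (hκ : 1 ≤ κ) (hh : κ + n ≤ h) (hi : i < n) :
    i * 2 ^ κ + 2 ≤ 2 ^ h :=
  calc i * 2 ^ κ + 2 ≤ i * 2 ^ κ + 2 ^ κ := by
        gcongr
        exact Nat.pow_le_pow_right two_pos hκ
    _ = 2 ^ κ * (i + 1) := by ring
    _ ≤ 2 ^ κ * 2 ^ n := by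
        gcongr
        exact hi.trans_le Nat.lt_two_pow_self.le
    _ = 2 ^ (κ + n) := (pow_add 2 κ n).symm
    _ ≤ 2 ^ h := Nat.pow_le_pow_right two_pos hh

/-- The branch sets are the rails of level `< n` in a copy of level `n + 1`, each extended by a
leaf of the top gadget which sees all the rails. -/
theorem Layout.IsShadow.hasMinor_top {V : Type*} [Finite V] {D : Layout V} {G : SimpleGraph V}
    {n h g κ : ℕ} (hD : D.IsShadow G h (n + 1) g κ) (hκ : 1 ≤ κ) (hh : κ + n ≤ h) :
    CGT.HasMinor G (⊤ : SimpleGraph (Fin n)) := by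
  have hpos : 0 < h := by omega
  obtain ⟨C⟩ := nonempty_railChain fun t ht => (hD.of_subcopy ht).exists_isRailSystem hpos
  have hzone (i : Fin n) : LeafZone h (i * 2 ^ κ) (2 * (i * 2 ^ κ) + 2) := by
    have := mul_two_pow_add_two_le hκ hh i.2
    exact ⟨by omega, .inr ⟨rfl, this⟩⟩
  refine ⟨fun i => C.rail i.castSucc ∪ C.hubRegion (i * 2 ^ κ) (2 * (i * 2 ^ κ) + 2),
    fun i => ⟨_, .inr (C.hub_mem_hubRegion hD hpos (hzone i))⟩,
    fun i => C.setConn_rail_union_hubRegion hD hpos (hzone i) _, fun i j hne => ?_,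
    fun i j _ => ?_⟩
  · have hblock : i.1 * 2 ^ κ / 2 ^ κ ≠ j.1 * 2 ^ κ / 2 ^ κ := by
      rw [Nat.mul_div_cancel _ (by positivity), Nat.mul_div_cancel _ (by positivity)]
      exact Fin.val_ne_of_ne hne
    rw [Set.disjoint_union_left, Set.disjoint_union_right, Set.disjoint_union_right]
    exact ⟨⟨C.pairwise_disjoint_rail hD ((Fin.castSucc_injective n).ne hne),
      (C.disjoint_hubRegion_rail hD hpos (hzone j) _).symm⟩,
      C.disjoint_hubRegion_rail hD hpos (hzone i) _,
      C.disjoint_hubRegion hD hpos (hzone i) (hzone j) hblock⟩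
  · obtain ⟨x, hx, hadj⟩ := C.exists_adj_station hD hpos (hzone i) j.castSucc
    exact ⟨x, .inr hx, _, .inl (C.station_mem_rail (hzone i).pos_and_lt.2.le), hadj⟩

/-! ### Minors by contraction -/

section Minors

variable {V W X : Type*} {G : SimpleGraph V} {H : SimpleGraph W} {K : SimpleGraph X}

theorem hasMinor_trans (hGH : CGT.HasMinor G H) (hHK : CGT.HasMinor H K) : CGT.HasMinor G K := by
  obtain ⟨U, hUne, hUconn, hUdisj, hUadj⟩ := hGH
  obtain ⟨Y, hYne, hYconn, hYdisj, hYadj⟩ := hHK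
  have hreach (x : X) {b c : W} (hbc : ReachableIn H (Y x) b c) {u : V} (hu : u ∈ U b) :
      ∀ v ∈ U c, ReachableIn G (⋃ b ∈ Y x, U b) u v := by
    refine hbc.mem_of_closed {c | ∀ v ∈ U c, ReachableIn G (⋃ b ∈ Y x, U b) u v}
      (fun v hv => (ReachableIn.of_setConn (hUconn b) hu hv).mono
        (Set.subset_biUnion_of_mem hbc.left_mem)) fun c d hc _ hd hcd v hv => ?_
    obtain ⟨s, hs, t, ht, hst⟩ := hUadj hcd
    exact (ReachableIn.step (hc s hs) hst (Set.mem_biUnion hd ht)).trans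
      ((ReachableIn.of_setConn (hUconn d) ht hv).mono (Set.subset_biUnion_of_mem hd))
  have hne (x : X) : (⋃ b ∈ Y x, U b).Nonempty :=
    have ⟨b, hb⟩ := hYne x
    have ⟨u, hu⟩ := hUne b
    ⟨u, Set.mem_biUnion hb hu⟩
  refine ⟨fun x => ⋃ b ∈ Y x, U b, hne, fun x => ReachableIn.setConn (hne x) ?_, ?_, ?_⟩
  · intro u hu v hv
    obtain ⟨b, hb, hu⟩ := Set.mem_iUnion₂.1 hu
    obtain ⟨c, hc, hv⟩ := Set.mem_iUnion₂.1 hv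
    exact hreach x (.of_setConn (hYconn x) hb hc) hu v hv
  · intro x y hxy
    simp only [Set.disjoint_iUnion_left, Set.disjoint_iUnion_right]
    exact fun b hb c hc => hUdisj ((hYdisj hxy).ne_of_mem hc hb)
  · intro x y hxy
    obtain ⟨b, hb, c, hc, hbc⟩ := hYadj hxy
    obtain ⟨u, hu, v, hv, huv⟩ := hUadj hbc
    exact ⟨u, Set.mem_biUnion hb hu, v, Set.mem_biUnion hc hv, huv⟩

theorem hasMinor_induce (G : SimpleGraph V) (F : Set V) : CGT.HasMinor G (G.induce F) := by
  refine ⟨fun x => {x.1}, fun x => Set.singleton_nonempty _, fun x => ?_, fun x y hxy => ?_, ?_⟩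
  · refine ReachableIn.setConn_of_center rfl fun v hv => ?_
    obtain rfl := hv
    exact ReachableIn.refl rfl
  · exact Set.disjoint_singleton.2 fun h => hxy (Subtype.ext h)
  · exact fun x y hxy => ⟨x, rfl, y, rfl, hxy⟩

theorem hasMinor_map {f : V → W} (hf : ∀ w, CGT.SetConn G (f ⁻¹' {w})) :
    CGT.HasMinor G (G.map f) := by
  refine ⟨fun w => f ⁻¹' {w}, fun w => ?_, hf, fun w w' hw => ?_, ?_⟩
  · exact Set.nonempty_coe_sort.1 (hf w).nonempty
  · exact (Set.disjoint_singleton.2 hw).preimage f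
  · rintro w w' ⟨-, u, v, huv, rfl, rfl⟩
    exact ⟨u, rfl, v, rfl, huv⟩

theorem ReachableIn.map {P : Set V} {a b : V} (h : ReachableIn G P a b) (f : V → W) :
    ReachableIn (G.map f) (f '' P) (f a) (f b) := by
  refine h.mem_of_closed {b | ReachableIn (G.map f) (f '' P) (f a) (f b)}
    (refl (Set.mem_image_of_mem f h.left_mem)) fun x y hx _ hy hxy => ?_
  by_cases hne : f x = f y
  · exact Eq.subst (motive := ReachableIn (G.map f) (f '' P) (f a)) hne hx
  · exact ReachableIn.step hx ⟨hne, x, y, hxy, rfl, rfl⟩ (Set.mem_image_of_mem f hy)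

theorem ReachableIn.induce {P F : Set V} {a b : F} (h : ReachableIn G P a b) (hPF : P ⊆ F) :
    ReachableIn (G.induce F) (Subtype.val ⁻¹' P) a b := by
  obtain ⟨_, hb⟩ := h.mem_of_closed
    {c | ∃ hc : c ∈ F, ReachableIn (G.induce F) (Subtype.val ⁻¹' P) a ⟨c, hc⟩}
    ⟨a.2, refl h.left_mem⟩ fun x y ⟨_, hx⟩ _ hy hxy => ⟨hPF hy, hx.step hxy hy⟩
  exact hb

end Minors

section ThickShadow

variable {V : Type*} {D : Layout V} {R : Anchor → Set V} {G : SimpleGraph V} {h J g κ : ℕ}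

/-- A shadow in which the rail vertices are replaced by disjoint connected sets `R v`. -/
structure Layout.IsThickShadow (D : Layout V) (R : Anchor → Set V) (G : SimpleGraph V)
    (h J g κ : ℕ) : Prop where
  rail_reach : ∀ ⦃v⦄, IsCopyRail h J g v → ∀ x ∈ R v, ReachableIn G (R v) (D.rail v) x
  rail_mem : ∀ ⦃v⦄, IsCopyRail h J g v → D.rail v ∈ R v
  eq_of_mem_rails : ∀ ⦃v v' x⦄, IsCopyRail h J g v → IsCopyRail h J g v' → x ∈ R v → x ∈ R v' →
    v = v'
  hub_notMem_rail : ∀ ⦃l v v'⦄, IsCopySpine h J g l v → IsCopyRail h J g v' → D.hub l ∉ R v'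
  reach : ∀ ⦃l v⦄, IsCopySpine h J g l v → ∀ x ∈ D.spine l v,
    ReachableIn G (D.spine l v) (D.hub l) x
  spine_meets_rail : ∀ ⦃l v⦄, IsCopySpine h J g l v → ∃ x ∈ D.spine l v, x ∈ R v
  eq_of_mem_rail : ∀ ⦃l v v' x⦄, IsCopySpine h J g l v → IsCopyRail h J g v' →
    x ∈ D.spine l v → x ∈ R v' → v' = v
  sameBlock : ∀ ⦃l v l' v' x⦄, IsCopySpine h J g l v → IsCopySpine h J g l' v' →
    x ∈ D.spine l v → x ∈ D.spine l' v' → SameBlock κ l l'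

/-- The image of a layout under a map. -/
def Layout.map {W : Type*} (D : Layout V) (f : V → W) : Layout W where
  rail v := f (D.rail v)
  hub l := f (D.hub l)
  spine l v := f '' D.spine l v

namespace Layout.IsThickShadow

/-- The equivalence relation that identifies the vertices of each thick rail vertex. -/
def railSetoid (hD : D.IsThickShadow R G h J g κ) : Setoid V where
  r x y := x = y ∨ ∃ v, IsCopyRail h J g v ∧ x ∈ R v ∧ y ∈ R v
  iseqv := {
    refl := fun _ => .inl rfl
    symm := by
      rintro x y (rfl | ⟨v, hv, hx, hy⟩)
      exacts [.inl rfl, .inr ⟨v, hv, hy, hx⟩]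
    trans := by
      rintro x y z (rfl | ⟨v, hv, hx, hy⟩) (rfl | ⟨w, hw, hy', hz⟩)
      · exact .inl rfl
      · exact .inr ⟨w, hw, hy', hz⟩
      · exact .inr ⟨v, hv, hx, hy⟩
      · obtain rfl := hD.eq_of_mem_rails hv hw hy hy'
        exact .inr ⟨v, hv, hx, hz⟩ }

variable {v : Anchor} {x : V}

theorem mk_eq_mk_rail_iff (hD : D.IsThickShadow R G h J g κ) (hv : IsCopyRail h J g v) :
    Quotient.mk hD.railSetoid x = Quotient.mk hD.railSetoid (D.rail v) ↔ x ∈ R v := by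
  rw [Quotient.eq]
  refine ⟨?_, fun hx => .inr ⟨v, hv, hx, hD.rail_mem hv⟩⟩
  rintro (rfl | ⟨w, hw, hx, hrail⟩)
  · exact hD.rail_mem hv
  · rwa [hD.eq_of_mem_rails hv hw (hD.rail_mem hv) hrail]

theorem setConn_fiber (hD : D.IsThickShadow R G h J g κ) (c : Quotient hD.railSetoid) :
    CGT.SetConn G (Quotient.mk hD.railSetoid ⁻¹' {c}) := by
  induction c using Quotient.ind with | _ x
  refine ReachableIn.setConn_of_center rfl fun y hy => ?_
  rcases Quotient.exact hy.symm with rfl | ⟨v, hv, hxv, hyv⟩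
  · exact ReachableIn.refl rfl
  · refine ((hD.rail_reach hv x hxv).symm.trans (hD.rail_reach hv y hyv)).mono fun z hz => ?_
    exact Quotient.sound (s := hD.railSetoid) (.inr ⟨v, hv, hz, hxv⟩)

theorem isShadow_map_mk (hD : D.IsThickShadow R G h J g κ) :
    (D.map (Quotient.mk hD.railSetoid)).IsShadow (G.map (Quotient.mk hD.railSetoid)) h J g κ where
  rail_inj v v' hv hv' heq :=
    hD.eq_of_mem_rails hv hv' (hD.rail_mem hv) ((hD.mk_eq_mk_rail_iff hv').1 heq)
  hub_ne_rail l v v' hlv hv' heq := hD.hub_notMem_rail hlv hv' ((hD.mk_eq_mk_rail_iff hv').1 heq)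
  reach := by
    rintro l v hlv _ ⟨x, hx, rfl⟩
    exact (hD.reach hlv x hx).map _
  rail_mem l v hlv :=
    have ⟨x, hx, hxv⟩ := hD.spine_meets_rail hlv
    ⟨x, hx, (hD.mk_eq_mk_rail_iff hlv.isCopyRail).2 hxv⟩
  eq_of_rail_mem := by
    rintro l v v' hlv hv' ⟨x, hx, heq⟩
    exact hD.eq_of_mem_rail hlv hv' hx ((hD.mk_eq_mk_rail_iff hv').1 heq)
  sameBlock := by
    rintro l v l' v' _ hlv hlv' ⟨x, hx, rfl⟩ ⟨y, hy, hyx⟩ hne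
    rcases Quotient.exact hyx with rfl | ⟨w, hw, -, hxw⟩
    · exact hD.sameBlock hlv hlv' hx hy
    · obtain rfl := hD.eq_of_mem_rail hlv hw hx hxw
      exact (hne ((hD.mk_eq_mk_rail_iff hw).2 hxw)).elim

theorem hasMinor_top [Finite V] {n : ℕ} (hD : D.IsThickShadow R G h (n + 1) g κ) (hκ : 1 ≤ κ)
    (hh : κ + n ≤ h) : CGT.HasMinor G (⊤ : SimpleGraph (Fin n)) :=
  hasMinor_trans (hasMinor_map hD.setConn_fiber) (hD.isShadow_map_mk.hasMinor_top hκ hh)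

end Layout.IsThickShadow

end ThickShadow

/-! ### Clusterings induced by quasi-isometries -/

section Clustering

variable {V W : Type*} {G : SimpleGraph V} {H : SimpleGraph W} {f : V → W} {C : V → Set W} {r : ℕ}

/-- Along an edge the value of `φ` changes by at most one. -/
def IsOneLipschitz (G : SimpleGraph V) (φ : V → ℕ) : Prop := ∀ ⦃u v⦄, G.Adj u v → φ v ≤ φ u + 1

theorem IsOneLipschitz.le_add_of_edist_le {φ : V → ℕ} (hφ : IsOneLipschitz G φ) {u v : V}
    (h : G.edist u v ≤ r) : φ v ≤ φ u + r := by
  obtain ⟨p, hp⟩ := exists_walk_of_edist_ne_top (ne_top_of_le_ne_top (ENat.natCast_ne_top r) h)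
  have hlength {a b : V} (w : G.Walk a b) : φ b ≤ φ a + w.length := by
    induction w with
    | nil => simp
    | cons hab w ih =>
      have := hφ hab
      rw [Walk.length_cons]
      omega
  have : p.length ≤ r := by exact_mod_cast hp ▸ h
  have := hlength p
  omega

/-- The connected sets `C u`, containing `f u`, meet whenever the vertices `u` are adjacent, and
only if the vertices `u` are at distance at most `r`. -/
structure IsClustering (G : SimpleGraph V) (H : SimpleGraph W) (f : V → W) (C : V → Set W) (r : ℕ) :
    Prop where
  mem : ∀ u, f u ∈ C u
  reach : ∀ ⦃u x⦄, x ∈ C u → ReachableIn H (C u) (f u) x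
  inter_nonempty : ∀ ⦃u v⦄, G.Adj u v → (C u ∩ C v).Nonempty
  edist_le : ∀ ⦃u v x⦄, x ∈ C u → x ∈ C v → G.edist u v ≤ r

theorem ReachableIn.walkSupp {a b x : W} (p : H.Walk a b) (hx : x ∈ CGT.walkSupp p) :
    ReachableIn H (CGT.walkSupp p) a x := by
  classical
  exact ⟨p.takeUntil x hx, fun _ hy => p.support_takeUntil_subset_support hx hy⟩

theorem edist_le_length_of_mem_walkSupp {a b x : W} {p : H.Walk a b} (hx : x ∈ CGT.walkSupp p) :
    H.edist a x ≤ p.length := by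
  classical
  exact (p.takeUntil x hx).edist_le.trans
    (Nat.cast_le.2 (p.length_takeUntil_le_length hx))

theorem exists_walk_of_isQI {M A : ℕ} (hf : CGT.IsQI M A G H f) {u v : V} (huv : G.Adj u v) :
    ∃ p : H.Walk (f u) (f v), p.length ≤ M + A := by
  have hle := hf.upper u v
  rw [edist_eq_one_iff_adj.2 huv, mul_one] at hle
  obtain ⟨p, hp⟩ := exists_walk_of_edist_ne_top
    (ne_top_of_le_ne_top (ENat.natCast_ne_top (M + A)) (by exact_mod_cast hle))
  exact ⟨p, by exact_mod_cast hp ▸ hle⟩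

theorem exists_isClustering [Finite V] {M A : ℕ} (hf : CGT.IsQI M A G H f) :
    ∃ C, (∀ u, (C u).Finite) ∧ IsClustering G H f C (2 * M * (M + A) + M * A) := by
  choose p hp using fun u v (huv : G.Adj u v) => exists_walk_of_isQI hf huv
  let C (u : V) : Set W := {f u} ∪ ⋃ (v) (huv : G.Adj u v), CGT.walkSupp (p u v huv)
  have hpC {u v : V} (huv : G.Adj u v) : CGT.walkSupp (p u v huv) ⊆ C u :=
    fun _ hx => .inr (Set.mem_iUnion₂.2 ⟨v, huv, hx⟩)
  have hradius {u : V} {x : W} (hx : x ∈ C u) : H.edist (f u) x ≤ (M + A : ℕ) := by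
    rcases hx with rfl | hx
    · simp
    · obtain ⟨v, huv, hx⟩ := Set.mem_iUnion₂.1 hx
      exact (edist_le_length_of_mem_walkSupp hx).trans (Nat.cast_le.2 (hp u v huv))
  refine ⟨C, fun u => ?_, fun u => .inl rfl, ?_, fun u v huv => ?_, fun u v x hu hv => ?_⟩
  · exact (Set.finite_singleton _).union (Set.finite_iUnion fun v => Set.finite_iUnion fun huv =>
      List.finite_toSet _)
  · rintro u x (rfl | hx)
    · exact ReachableIn.refl (.inl rfl)
    · obtain ⟨v, huv, hx⟩ := Set.mem_iUnion₂.1 hx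
      exact (ReachableIn.walkSupp _ hx).mono (hpC huv)
  · exact ⟨f v, hpC huv (p u v huv).end_mem_support, .inl rfl⟩
  · have hdist : H.edist (f u) (f v) ≤ (M + A : ℕ) + (M + A : ℕ) :=
      SimpleGraph.edist_triangle.trans (add_le_add (hradius hu) (edist_comm.trans_le (hradius hv)))
    calc G.edist u v ≤ M * H.edist (f u) (f v) + M * A := hf.lower u v
      _ ≤ M * ((M + A : ℕ) + (M + A : ℕ)) + M * A := by gcongr
      _ = (2 * M * (M + A) + M * A : ℕ) := by push_cast; ring

namespace IsClustering

theorem reach_biUnion (hC : IsClustering G H f C r) {P : Set V} {u v : V}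
    (huv : ReachableIn G P u v) {x : W} (hx : x ∈ C v) :
    ReachableIn H (⋃ w ∈ P, C w) (f u) x := by
  have hsub {w : V} (hw : w ∈ P) : C w ⊆ ⋃ w ∈ P, C w := Set.subset_biUnion_of_mem hw
  refine huv.mem_of_closed {v | ∀ x ∈ C v, ReachableIn H (⋃ w ∈ P, C w) (f u) x}
    (fun x hx => (hC.reach hx).mono (hsub huv.left_mem)) (fun y z hy _ hz hyz x hx => ?_) x hx
  obtain ⟨t, hty, htz⟩ := hC.inter_nonempty hyz
  exact (hy t hty).trans (((hC.reach htz).symm.trans (hC.reach hx)).mono (hsub hz))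

theorem induce (hC : IsClustering G H f C r) :
    IsClustering G (H.induce (⋃ u, C u)) (fun u => ⟨f u, Set.mem_iUnion_of_mem u (hC.mem u)⟩)
      (fun u => Subtype.val ⁻¹' C u) r where
  mem := hC.mem
  reach _ _ hx := (hC.reach hx).induce (Set.subset_iUnion C _)
  inter_nonempty _ _ huv :=
    have ⟨x, hxu, hxv⟩ := hC.inter_nonempty huv
    ⟨⟨x, Set.mem_iUnion_of_mem _ hxu⟩, hxu, hxv⟩
  edist_le _ _ _ hu hv := hC.edist_le hu hv

theorem le_add (hC : IsClustering G H f C r) {φ : V → ℕ} (hφ : IsOneLipschitz G φ) {u v : V}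
    {x : W} (hu : x ∈ C u) (hv : x ∈ C v) : φ v ≤ φ u + r :=
  hφ.le_add_of_edist_le (hC.edist_le hu hv)

end IsClustering

end Clustering

/-! ### Halves of spines -/

section SpineHalves

variable {V : Type*} {T : SimpleGraph V} {S : V → V → Prop} {d δ κ : ℕ} {x y y' : V}
  {u : V ⊕ {p : V × V // S p.1 p.2} × Fin d}

/-- The vertex `y` and the inner vertices from the `δ`-th on of all spines ending in `y`. -/
def targetHalf (S : V → V → Prop) (d δ : ℕ) (y : V) : Set (V ⊕ {p : V × V // S p.1 p.2} × Fin d) :=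
  {u | Sum.elim (fun z => z = y) (fun pi => pi.1.1.2 = y ∧ δ ≤ pi.2.1) u}

/-- The vertex `x` and the first `δ` inner vertices of the spine from `x` to `y`. -/
def sourceHalf (S : V → V → Prop) (d δ : ℕ) (x y : V) :
    Set (V ⊕ {p : V × V // S p.1 p.2} × Fin d) :=
  {u | Sum.elim (fun z => z = x) (fun pi => pi.1.1 = (x, y) ∧ pi.2.1 < δ) u}

theorem reachableIn_targetHalf (hu : u ∈ targetHalf S d δ y) :
    ReachableIn (subdivide T S d) (targetHalf S d δ y) (.inl y) u := by
  have hy : .inl y ∈ targetHalf S d δ y := rfl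
  rcases u with z | ⟨p, i, hid⟩
  · obtain rfl : z = y := hu
    exact .refl hy
  · obtain ⟨rfl, hi⟩ := hu
    obtain ⟨c, hc⟩ := Nat.exists_eq_add_of_lt hid
    induction c generalizing i with
    | zero => exact .of_adj hy (.inr ⟨rfl, hc.symm⟩) ⟨rfl, hi⟩
    | succ c ih =>
      have hnext := ih (i + 1) (by omega) (Nat.le_succ_of_le hi) rfl (by omega)
      exact hnext.step ⟨rfl, .inr rfl⟩ ⟨rfl, hi⟩

theorem reachableIn_sourceHalf (hu : u ∈ sourceHalf S d δ x y) :
    ReachableIn (subdivide T S d) (sourceHalf S d δ x y) (.inl x) u := by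
  have hx : .inl x ∈ sourceHalf S d δ x y := rfl
  rcases u with z | ⟨⟨_, hp⟩, i, hid⟩
  · obtain rfl : z = x := hu
    exact .refl hx
  · obtain ⟨rfl, hi⟩ := hu
    induction i with
    | zero => exact .of_adj hx (.inl ⟨rfl, rfl⟩) ⟨rfl, hi⟩
    | succ i ih => exact (ih (by omega) (Nat.lt_of_succ_lt hi)).step ⟨rfl, .inl rfl⟩ ⟨rfl, hi⟩

open Classical in
/-- The distance to `y` along the spines ending in `y`, truncated at `d + 1`. -/
noncomputable def targetPotential (S : V → V → Prop) (d : ℕ) (y : V) :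
    V ⊕ {p : V × V // S p.1 p.2} × Fin d → ℕ
  | .inl x => if x = y then 0 else d + 1
  | .inr (p, i) => if p.1.2 = y then d - i.1 else d + 1

theorem isOneLipschitz_targetPotential (hT : ∀ x, ¬ T.Adj x y) (hS : ∀ x, ¬ S y x) :
    IsOneLipschitz (subdivide T S d) (targetPotential S d y) := by
  have hne (p : {p : V × V // S p.1 p.2}) : p.1.1 ≠ y := fun h => hS _ (h ▸ p.2)
  rintro (u | ⟨p, i⟩) (v | ⟨q, j⟩) huv
  · have hu : u ≠ y := fun h => hT v (h ▸ huv.symm)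
    have hv : v ≠ y := fun h => hT u (h ▸ huv)
    simp only [targetPotential, hu, hv, if_false]
    omega
  · rcases huv with ⟨rfl, _⟩ | ⟨rfl, _⟩ <;> simp only [targetPotential, hne, if_false] <;>
      split_ifs <;> omega
  · rcases huv with ⟨rfl, _⟩ | ⟨rfl, _⟩ <;> simp only [targetPotential, hne, if_false] <;>
      split_ifs <;> omega
  · obtain ⟨rfl, hij⟩ := huv
    simp only [targetPotential]
    split_ifs <;> omega

theorem targetPotential_le_of_mem_targetHalf (hu : u ∈ targetHalf S d δ y) :
    targetPotential S d y u ≤ d - δ := by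
  rcases u with z | ⟨p, i⟩
  · obtain rfl : z = y := hu
    simp [targetPotential]
  · obtain ⟨rfl, hi⟩ := hu
    simp only at hi
    simp only [targetPotential, if_true]
    omega

theorem targetPotential_of_mem_targetHalf (hu : u ∈ targetHalf S d δ y') (hy : y' ≠ y) :
    targetPotential S d y u = d + 1 := by
  rcases u with z | ⟨p, i⟩
  · obtain rfl : z = y' := hu
    exact if_neg hy
  · obtain ⟨rfl, -⟩ := hu
    exact if_neg hy

theorem targetPotential_of_mem_sourceHalf (hu : u ∈ sourceHalf S d δ x y') (hx : x ≠ y)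
    (hy : y' ≠ y) : targetPotential S d y u = d + 1 := by
  rcases u with z | ⟨⟨_, hp⟩, i⟩
  · obtain rfl : z = x := hu
    exact if_neg hx
  · obtain ⟨rfl, -⟩ := hu
    exact if_neg hy

/-- The extension of `ν` to the spines which is constant on the first `κ` inner vertices and then
increases to `κ`. -/
def spinePotential (S : V → V → Prop) (d κ : ℕ) (ν : V → ℕ) :
    V ⊕ {p : V × V // S p.1 p.2} × Fin d → ℕ
  | .inl x => ν x
  | .inr (p, i) => max (ν p.1.1) (min (i.1 + 1 - κ) κ)

theorem isOneLipschitz_spinePotential {ν : V → ℕ} (hν : IsOneLipschitz T ν) (hle : ∀ x, ν x ≤ κ)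
    (hS : ∀ x y, S x y → ν y = κ) (hd : 2 * κ ≤ d) :
    IsOneLipschitz (subdivide T S d) (spinePotential S d κ ν) := by
  rintro (u | ⟨p, i⟩) (v | ⟨q, j⟩) huv
  · exact hν huv
  · have := hle q.1.1
    have := hS _ _ q.2
    rcases huv with ⟨rfl, _⟩ | ⟨rfl, _⟩ <;> simp only [spinePotential] <;> omega
  · have := hle p.1.1
    have := hS _ _ p.2
    rcases huv with ⟨rfl, _⟩ | ⟨rfl, _⟩ <;> simp only [spinePotential] <;> omega
  · obtain ⟨rfl, hij⟩ := huv
    simp only [spinePotential]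
    omega

theorem spinePotential_of_mem_sourceHalf {ν : V → ℕ} (hu : u ∈ sourceHalf S d κ x y) :
    spinePotential S d κ ν u = ν x := by
  rcases u with z | ⟨⟨_, hp⟩, i⟩
  · obtain rfl : z = x := hu
    rfl
  · obtain ⟨rfl, hi⟩ := hu
    simp only at hi
    simp only [spinePotential]
    omega

end SpineHalves

/-! ### The shadow of the host graph in a quasi-isometric graph -/

section BlockHeight

variable {h κ e q b : ℕ} {x y : Anchor}

/-- The height of a vertex inside the `b`-th subtree of height `κ` of the gadget `q` of level `e`;
vertices outside this subtree are assigned `κ`. -/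
def blockHeight (κ e q b : ℕ) : Anchor → ℕ
  | .node e' q' s a => if e' = e ∧ q' = q ∧ s < κ ∧ a / 2 ^ (κ - s) = b then s else κ
  | _ => κ

theorem blockHeight_le (κ e q b : ℕ) (x : Anchor) : blockHeight κ e q b x ≤ κ := by
  cases x <;> simp only [blockHeight, le_refl]
  split_ifs <;> omega

theorem blockHeight_leaf (hκ : 1 ≤ κ) (e q k : ℕ) :
    blockHeight κ e q (k / 2 ^ κ) (.node e q 0 k) = 0 :=
  if_pos ⟨rfl, rfl, hκ, rfl⟩

theorem sameBlock_of_blockHeight_lt {k e' q' k' : ℕ}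
    (hlt : blockHeight κ e q (k / 2 ^ κ) (.node e' q' 0 k') < κ) :
    SameBlock κ (.node e q 0 k) (.node e' q' 0 k') := by
  simp only [blockHeight] at hlt
  split_ifs at hlt with hblock
  · obtain ⟨rfl, rfl, -, hk⟩ := hblock
    exact ⟨_, _, _, _, rfl, rfl, hk.symm⟩
  · exact absurd hlt (lt_irrefl κ)

theorem ParentAdj.blockHeight_le_add (hκ : κ ≤ h) (hxy : ParentAdj h x y) :
    blockHeight κ e q b y ≤ blockHeight κ e q b x + 1 ∧
      blockHeight κ e q b x ≤ blockHeight κ e q b y + 1 := by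
  cases hxy with
  | @node e' q' s a _ hs hb =>
    subst hb
    by_cases hsκ : s + 1 < κ
    · have hblock : a / 2 / 2 ^ (κ - (s + 1)) = a / 2 ^ (κ - s) := by
        rw [Nat.div_div_eq_div_mul, ← pow_succ', show κ - (s + 1) + 1 = κ - s by omega]
      simp only [blockHeight, hblock]
      split_ifs <;> omega
    · simp only [blockHeight]
      split_ifs <;> omega
  | root hs =>
    simp only [blockHeight]
    split_ifs <;> omega

theorem isOneLipschitz_blockHeight (hκ : κ ≤ h) (e q b : ℕ) :
    IsOneLipschitz (treeGraph h) (blockHeight κ e q b) := by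
  rintro x y (hxy | hyx)
  exacts [(hxy.blockHeight_le_add hκ).1, (hyx.blockHeight_le_add hκ).2]

theorem SpineAdj.blockHeight_eq (hxy : SpineAdj h x y) : blockHeight κ e q b y = κ := by
  cases hxy <;> rfl

end BlockHeight

section HostGraph

variable {h J g d κ r : ℕ} {l v v' x : Anchor}

theorem mul_NN_pow_sub_le (h J g e : ℕ) : g * NN h ^ (J - e) ≤ g * NN h ^ J :=
  Nat.mul_le_mul_left _ (Nat.pow_le_pow_right (NN_pos h) (Nat.sub_le J e))

instance finite_copyVertices : Finite (copyVertices h J g) := by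
  let rails := Set.Iic J ×ˢ Set.Iic ((g + 1) * NN h ^ J)
  let nodes := rails ×ˢ (Set.Iic h ×ˢ Set.Iic (2 ^ h))
  have hrails : rails.Finite := (Set.finite_Iic _).prod (Set.finite_Iic _)
  have hnodes : nodes.Finite := hrails.prod ((Set.finite_Iic _).prod (Set.finite_Iic _))
  refine (((hrails.image fun p => .rail p.1 p.2).union
    (hnodes.image fun p => .node p.1.1 p.1.2 p.2.1 p.2.2)).insert .root).subset ?_
  rintro (⟨e, p⟩ | ⟨e, q, s, a⟩ | -) (hx | hx)
  · cases hx
  · obtain ⟨he, -, hp⟩ := hx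
    exact .inr (.inl ⟨(e, p), ⟨he, hp.trans (mul_NN_pow_sub_le ..)⟩, rfl⟩)
  · cases hx
  · obtain ⟨he, -, hq, hnode⟩ := hx
    have hq' : q ≤ (g + 1) * NN h ^ J := (Nat.le_of_succ_le hq).trans (mul_NN_pow_sub_le ..)
    have hsa : s ≤ h ∧ a ≤ 2 ^ h := by
      rcases hnode with ⟨-, rfl, rfl⟩ | ⟨-, hs, ha⟩
      · exact ⟨Nat.zero_le h, Nat.zero_le _⟩
      · exact ⟨by omega, ha.le.trans (Nat.pow_le_pow_right two_pos (Nat.sub_le h s))⟩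
    exact .inr (.inr ⟨((e, q), (s, a)), ⟨⟨he, hq'⟩, hsa⟩, rfl⟩)
  · exact .inl rfl
  · exact .inl rfl

open Classical in
/-- `x` as a vertex of the `g`-th copy of level `J`, or the root if `x` is not in this copy. -/
noncomputable def toCopy (h J g : ℕ) (x : Anchor) : copyVertices h J g :=
  if hx : InCopy h J g x then ⟨x, .inr hx⟩ else ⟨.root, .inl rfl⟩

theorem coe_toCopy (hx : InCopy h J g x) : (toCopy h J g x : Anchor) = x := by
  simp [toCopy, hx]

theorem IsCopySpine.spineAdj_toCopy (hlv : IsCopySpine h J g l v) :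
    SpineAdj h (toCopy h J g l) (toCopy h J g v) := by
  rw [coe_toCopy hlv.2, coe_toCopy hlv.isCopyRail.2]
  exact hlv.1

theorem IsCopyRail.toCopy_ne (hv : IsCopyRail h J g v) (hx : InCopy h J g x) (hxv : x ≠ v) :
    toCopy h J g x ≠ toCopy h J g v := fun heq =>
  hxv (by rw [← coe_toCopy hx, heq, coe_toCopy hv.2])

theorem IsCopySpine.ne_of_isCopyRail (hlv : IsCopySpine h J g l v) (hv' : IsCopyRail h J g v') :
    l ≠ v' := by
  obtain ⟨e, q, s, a, rfl⟩ := hlv.1.isNode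
  obtain ⟨⟨e', p, rfl⟩, -⟩ := hv'
  nofun

/-- The final half of all spines ending in `v`. -/
abbrev railHalf (h J g d κ : ℕ) (v : Anchor) : Set (HostVertex h J g d) :=
  targetHalf (copySpineAdj h J g) d κ (toCopy h J g v)

/-- The initial half of the spine from `l` to `v`. -/
abbrev leafHalf (h J g d κ : ℕ) (l v : Anchor) : Set (HostVertex h J g d) :=
  sourceHalf (copySpineAdj h J g) d κ (toCopy h J g l) (toCopy h J g v)

theorem IsCopyRail.isOneLipschitz_targetPotential (hv : IsCopyRail h J g v) :
    IsOneLipschitz (hostGraph h J g d)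
      (targetPotential (copySpineAdj h J g) d (toCopy h J g v)) := by
  obtain ⟨⟨e, p, rfl⟩, hmem⟩ := hv
  refine FatGrid.isOneLipschitz_targetPotential (fun x hx => ?_) fun x hx => ?_
  · rw [induce_adj, coe_toCopy hmem] at hx
    generalize (x : Anchor) = x' at hx
    rcases hx with hx | hx <;> cases hx
  · rw [copySpineAdj, coe_toCopy hmem] at hx
    cases hx

theorem isOneLipschitz_spinePotential_blockHeight (hκ : κ ≤ h) (hd : 2 * κ ≤ d) (e q b : ℕ) :
    IsOneLipschitz (hostGraph h J g d)
      (spinePotential (copySpineAdj h J g) d κ fun x => blockHeight κ e q b x) :=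
  isOneLipschitz_spinePotential (fun _ _ hxy => isOneLipschitz_blockHeight hκ e q b hxy)
    (fun x => blockHeight_le κ e q b x) (fun _ _ hxy => SpineAdj.blockHeight_eq hxy) hd

variable {W : Type*} {H : SimpleGraph W}
  {f : HostVertex h J g d → W} {C : HostVertex h J g d → Set W}

/-- The layout given by a clustering of the host graph: a spine is represented by the clusters of
its initial half. -/
noncomputable def clusterLayout (κ : ℕ) (f : HostVertex h J g d → W)
    (C : HostVertex h J g d → Set W) : Layout W where
  rail v := f (.inl (toCopy h J g v))
  hub l := f (.inl (toCopy h J g l))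
  spine l v := ⋃ u ∈ leafHalf h J g d κ l v, C u

namespace IsClustering

variable (hC : IsClustering (hostGraph h J g d) H f C r)

include hC

theorem targetPotential_le (hv : IsCopyRail h J g v) (hr : r < κ) (hd : 2 * κ ≤ d) {y : W}
    (hy : y ∈ ⋃ u ∈ railHalf h J g d κ v, C u) {u} (hu : y ∈ C u) :
    targetPotential (copySpineAdj h J g) d (toCopy h J g v) u ≤ d := by
  obtain ⟨u', hu', hy⟩ := Set.mem_iUnion₂.1 hy
  have := hC.le_add hv.isOneLipschitz_targetPotential hy hu
  have := targetPotential_le_of_mem_targetHalf hu'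
  omega

theorem sameBlock {l l' v v' : Anchor} (hr : r < κ) (hκ : κ ≤ h) (hd : 2 * κ ≤ d)
    (hlv : IsCopySpine h J g l v) (hlv' : IsCopySpine h J g l' v') {y : W}
    (hy : y ∈ ⋃ u ∈ leafHalf h J g d κ l v, C u) (hy' : y ∈ ⋃ u ∈ leafHalf h J g d κ l' v', C u) :
    SameBlock κ l l' := by
  obtain ⟨u, hu, hyu⟩ := Set.mem_iUnion₂.1 hy
  obtain ⟨u', hu', hyu'⟩ := Set.mem_iUnion₂.1 hy'
  obtain ⟨e, q, k, rfl⟩ : ∃ e q k, l = .node e q 0 k := by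
    cases hlv.1 <;> exact ⟨_, _, _, rfl⟩
  obtain ⟨e', q', k', rfl⟩ : ∃ e q k, l' = .node e q 0 k := by
    cases hlv'.1 <;> exact ⟨_, _, _, rfl⟩
  have hle := hC.le_add (isOneLipschitz_spinePotential_blockHeight hκ hd e q (k / 2 ^ κ)) hyu hyu'
  rw [spinePotential_of_mem_sourceHalf hu, spinePotential_of_mem_sourceHalf hu',
    coe_toCopy hlv.2, coe_toCopy hlv'.2, blockHeight_leaf (by omega)] at hle
  exact sameBlock_of_blockHeight_lt (by omega)

theorem isThickShadow_clusterLayout (hr : r < κ) (hκ : κ ≤ h) (hd : 2 * κ ≤ d) :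
    (clusterLayout κ f C).IsThickShadow (fun v => ⋃ u ∈ railHalf h J g d κ v, C u) H h J g κ where
  rail_reach v _ x hx := by
    obtain ⟨u, hu, hx⟩ := Set.mem_iUnion₂.1 hx
    exact hC.reach_biUnion (reachableIn_targetHalf hu) hx
  rail_mem v _ := Set.mem_biUnion (x := .inl (toCopy h J g v)) rfl (hC.mem _)
  eq_of_mem_rails v v' x hv hv' hx hx' := by
    obtain ⟨u, hu, hxu⟩ := Set.mem_iUnion₂.1 hx'
    by_contra hne
    have := hC.targetPotential_le hv hr hd hx hxu
    rw [targetPotential_of_mem_targetHalf hu (hv.toCopy_ne hv'.2 (Ne.symm hne))] at this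
    omega
  hub_notMem_rail l v v' hlv hv' hl := by
    have := hC.targetPotential_le hv' hr hd hl (hC.mem _)
    rw [targetPotential, if_neg (hv'.toCopy_ne hlv.2 (hlv.ne_of_isCopyRail hv'))] at this
    omega
  reach l v _ x hx := by
    obtain ⟨u, hu, hx⟩ := Set.mem_iUnion₂.1 hx
    exact hC.reach_biUnion (reachableIn_sourceHalf hu) hx
  spine_meets_rail l v hlv := by
    let p : {p : copyVertices h J g × copyVertices h J g // copySpineAdj h J g p.1 p.2} :=
      ⟨(toCopy h J g l, toCopy h J g v), hlv.spineAdj_toCopy⟩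
    obtain ⟨x, hx, hx'⟩ := hC.inter_nonempty (u := .inr (p, ⟨κ - 1, by omega⟩))
      (v := .inr (p, ⟨κ, by omega⟩)) ⟨rfl, .inl (Nat.sub_add_cancel (by omega))⟩
    have hsource : .inr (p, ⟨κ - 1, by omega⟩) ∈ leafHalf h J g d κ l v :=
      ⟨rfl, Nat.sub_one_lt (by omega)⟩
    have htarget : .inr (p, ⟨κ, by omega⟩) ∈ railHalf h J g d κ v := ⟨rfl, le_rfl⟩
    exact ⟨x, Set.mem_biUnion hsource hx, Set.mem_biUnion htarget hx'⟩
  eq_of_mem_rail l v v' x hlv hv' hx hx' := by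
    obtain ⟨u, hu, hxu⟩ := Set.mem_iUnion₂.1 hx
    by_contra hne
    have := hC.targetPotential_le hv' hr hd hx' hxu
    rw [targetPotential_of_mem_sourceHalf hu (hv'.toCopy_ne hlv.2 (hlv.ne_of_isCopyRail hv'))
      (hv'.toCopy_ne hlv.isCopyRail.2 (Ne.symm hne))] at this
    omega
  sameBlock _ _ _ _ _ hlv hlv' hx hx' := hC.sameBlock hr hκ hd hlv hlv' hx hx'

end IsClustering

theorem hasMinor_top_of_isQI {M A n : ℕ} (hκ : 2 * M * (M + A) + M * A < κ) (hh : κ + n ≤ h)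
    (hd : 2 * κ ≤ d) {f} (hf : CGT.IsQI M A (hostGraph h (n + 1) g d) H f) :
    CGT.HasMinor H (⊤ : SimpleGraph (Fin n)) := by
  obtain ⟨C, hfinite, hC⟩ := exists_isClustering hf
  have : Finite (⋃ u, C u) := Set.finite_iUnion hfinite
  exact hasMinor_trans (hasMinor_induce H _)
    ((hC.induce.isThickShadow_clusterLayout hκ (by omega) hd).hasMinor_top (by omega) hh)

end HostGraph

end FatGrid

theorem statement0_general (M A n : ℕ) :
    ∃ (V : Type) (_ : Fintype V) (G : SimpleGraph V),
      (∀ k, 59 ≤ k → ¬ CGT.IsFatMinor G (CGT.gridGraph k k) 3) ∧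
      ∀ (V' : Type*) (H : SimpleGraph V'),
        ¬ CGT.HasMinor H (⊤ : SimpleGraph (Fin n)) → ¬ CGT.QIsometric M A G H := by
  let κ := 2 * M * (M + A) + M * A + 1
  refine ⟨_, Fintype.ofFinite _, FatGrid.hostGraph (κ + n) (n + 1) 0 (2 * κ),
    fun _ hk => FatGrid.not_isFatMinor_gridGraph_hostGraph hk, ?_⟩
  rintro V' H hminor ⟨f, hf⟩
  exact hminor (FatGrid.hasMinor_top_of_isQI (Nat.lt_succ_self _) le_rfl le_rfl hf)

/-- For every `M, A, n ∈ ℕ` with `M ≥ 1` there is a finite graph `G` such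
that the `(154 × 154)`-grid is not a 3-fat minor of `G`, and `G` is not
`(M,A)`-quasi-isometric to any graph with no `K_n` minor. -/
theorem statement0 (M A n : ℕ) (hM : 1 ≤ M) :
    ∃ (V : Type) (_ : Fintype V) (G : SimpleGraph V),
      ¬ CGT.IsFatMinor G (CGT.gridGraph 154 154) 3 ∧
      ∀ (V' : Type) (H : SimpleGraph V'),
        ¬ CGT.HasMinor H (⊤ : SimpleGraph (Fin n)) → ¬ CGT.QIsometric M A G H := by
  obtain ⟨V, hV, G, hgrid, hqi⟩ := statement0_general M A n
  exact ⟨V, hV, G, hgrid 154 (by norm_num), hqi⟩
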